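/- arXiv:2507.19293 — 6 statements merged into one kernel-verified Lean document; each statement's English description precedes it below -/
import Mathlib

section
/- For every odd n ≥ 3, there exists a balanced cyclic Gray code for S_n under all transpositions from the word 12⋯(n−1)n to the word 12⋯n(n−1), whose closing transposition is (n−1, n). -/
/-- A balanced cyclic Gray code for `S_n` under all transpositions: a cyclic listing
`π : Fin (N+1) → Perm (Fin n)` of all `n!` permutations of `[n]`, each appearing exactly
once, in which any two cyclically consecutive permutations differ by applying a
transposition, and each of the `n(n−1)/2` transpositions is applied exactly `2·(n−2)!`
times along the cycle. -/
def IsBalancedCyclicGrayCode (n N : ℕ) (π : Fin (N + 1) → Equiv.Perm (Fin n)) : Prop :=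
  N + 1 = Nat.factorial n ∧
  Function.Bijective π ∧
  (∀ s : Fin (N + 1), ∃ i j : Fin n, i ≠ j ∧ π (s + 1) = Equiv.swap i j * π s) ∧
  (∀ i j : Fin n, i ≠ j →
    (Finset.univ.filter (fun s : Fin (N + 1) =>
      π (s + 1) = Equiv.swap i j * π s)).card = 2 * Nat.factorial (n - 2))

section Aux

open Equiv

/-- number of steps of type `s` -/
def stepCount {n : ℕ} (φ : Perm (Perm (Fin n))) (s : Perm (Fin n)) : ℤ :=
  ∑ x : Perm (Fin n), if φ x = s * x then 1 else 0

/-- `φ` acts as one cycle on `A`, and fixes everything else -/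
def CycOn {X : Type*} (φ : Perm X) (A : Set X) : Prop :=
  (∀ x, x ∉ A → φ x = x) ∧ ∀ x ∈ A, ∀ y ∈ A, φ.SameCycle x y

/-- successor-permutation form of a balanced cyclic Gray code -/
def Bal (n : ℕ) : Prop :=
  ∃ φ : Perm (Perm (Fin n)), (∀ x y, φ.SameCycle x y) ∧
    (∀ x, ∃ i j : Fin n, i ≠ j ∧ φ x = swap i j * x) ∧
    (∀ i j : Fin n, i ≠ j → stepCount φ (swap i j) = 2 * (Nat.factorial (n - 2) : ℤ))

theorem CycOn.mem {X : Type*} {φ : Perm X} {A : Set X} (h : CycOn φ A) {x : X} (hx : x ∈ A) :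
    φ x ∈ A := by
  by_contra hc
  have := h.1 _ hc
  have h2 := φ.injective this
  rw [h2] at hc
  exact hc hx

theorem merge_orbit {X : Type*} [Finite X] {φ θ : Perm X} {A : Set X} (hφ : CycOn φ A)
    {u : X} (hu : u ∈ A) (hθ : ∀ x ∈ A, x ≠ u → θ x = φ x) :
    ∀ y ∈ A, θ.SameCycle (φ u) y := by
  have key : ∀ k : ℕ, (φ ^ k) (φ u) ∈ A ∧ θ.SameCycle (φ u) ((φ ^ k) (φ u)) := by
    intro k
    induction k with
    | zero => exact ⟨hφ.mem hu, Perm.SameCycle.refl _ _⟩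
    | succ k ih =>
      rw [pow_succ', Perm.mul_apply]
      refine ⟨hφ.mem ih.1, ?_⟩
      by_cases h : (φ ^ k) (φ u) = u
      · rw [h]
      · rw [← hθ _ ih.1 h]
        exact Perm.sameCycle_apply_right.2 ih.2
  intro y hy
  obtain ⟨k, hk⟩ := (hφ.2 _ (hφ.mem hu) y hy).exists_nat_pow_eq
  rw [← hk]
  exact (key k).2

theorem merge_cyc {X : Type*} [Finite X] [DecidableEq X] {φ ψ : Perm X} {A B : Set X}
    (hφ : CycOn φ A) (hψ : CycOn ψ B) (hAB : Disjoint A B) {u w : X} (hu : u ∈ A) (hw : w ∈ B) :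
    CycOn (φ * ψ * swap u w) (A ∪ B) ∧
    (φ * ψ * swap u w) u = ψ w ∧ (φ * ψ * swap u w) w = φ u ∧
    (∀ x ∈ A, x ≠ u → (φ * ψ * swap u w) x = φ x) ∧
    (∀ x ∈ B, x ≠ w → (φ * ψ * swap u w) x = ψ x) := by
  have dA : ∀ x ∈ A, x ∉ B := fun x hx hx' => Set.disjoint_left.1 hAB hx hx'
  have dB : ∀ x ∈ B, x ∉ A := fun x hx hx' => Set.disjoint_left.1 hAB hx' hx
  have e1 : (φ * ψ * swap u w) u = ψ w := by
    simp [Perm.mul_apply, hφ.1 _ (dB _ (hψ.mem hw))]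
  have e2 : (φ * ψ * swap u w) w = φ u := by
    simp [Perm.mul_apply, hψ.1 _ (dA _ hu)]
  have e3 : ∀ x ∈ A, x ≠ u → (φ * ψ * swap u w) x = φ x := by
    intro x hx hxu
    have : x ≠ w := fun h => dA x hx (h ▸ hw)
    simp [Perm.mul_apply, swap_apply_of_ne_of_ne hxu this, hψ.1 _ (dA _ hx)]
  have e4 : ∀ x ∈ B, x ≠ w → (φ * ψ * swap u w) x = ψ x := by
    intro x hx hxw
    have : x ≠ u := fun h => dB x hx (h ▸ hu)
    simp [Perm.mul_apply, swap_apply_of_ne_of_ne this hxw, hφ.1 _ (dB _ (hψ.mem hx))]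
  refine ⟨⟨?_, ?_⟩, e1, e2, e3, e4⟩
  · intro x hx
    have hxA : x ∉ A := fun h => hx (Or.inl h)
    have hxB : x ∉ B := fun h => hx (Or.inr h)
    have h1 : x ≠ u := fun h => hxA (h ▸ hu)
    have h2 : x ≠ w := fun h => hxB (h ▸ hw)
    simp [Perm.mul_apply, swap_apply_of_ne_of_ne h1 h2, hφ.1 _ hxA, hψ.1 _ hxB]
  · have oA := merge_orbit hφ hu e3
    have oB := merge_orbit hψ hw e4
    have c : (φ * ψ * swap u w).SameCycle (φ u) (ψ w) := by
      rw [← e1]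
      exact Perm.sameCycle_apply_right.2 (oA u hu)
    have all : ∀ y ∈ A ∪ B, (φ * ψ * swap u w).SameCycle (φ u) y := by
      rintro y (hy | hy)
      · exact oA y hy
      · exact c.trans (oB y hy)
    intro x hx y hy
    exact (all x hx).symm.trans (all y hy)

theorem merge_count {n : ℕ} {φ ψ : Perm (Perm (Fin n))} {A B : Set (Perm (Fin n))}
    (hφ : CycOn φ A) (hψ : CycOn ψ B) (hAB : Disjoint A B) {u w : Perm (Fin n)}
    (hu : u ∈ A) (hw : w ∈ B) {e f : Perm (Fin n)} (h1 : ψ w = e * u) (h2 : φ u = e * w)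
    (h3 : φ u = f * u) (h4 : ψ w = f * w)
    (s : Perm (Fin n)) (hs : s ≠ 1) :
    stepCount (φ * ψ * swap u w) s = stepCount φ s + stepCount ψ s +
      2 * ((if s = e then 1 else 0) - (if s = f then 1 else 0)) := by
  obtain ⟨⟨c1, -⟩, e1, e2, e3, e4⟩ := merge_cyc hφ hψ hAB hu hw
  have dA : ∀ x ∈ A, x ∉ B := fun x hx hx' => Set.disjoint_left.1 hAB hx hx'
  have dB : ∀ x ∈ B, x ∉ A := fun x hx hx' => Set.disjoint_left.1 hAB hx' hx
  have huw : u ≠ w := fun h => dA u hu (h ▸ hw)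
  have nx : ∀ x, ¬ (x = s * x) := by
    intro x h
    exact hs (by simpa using h.symm)
  have key : ∀ x, (if (φ * ψ * swap u w) x = s * x then (1:ℤ) else 0) =
      (if φ x = s * x then 1 else 0) + (if ψ x = s * x then 1 else 0) +
      ((if x = u then ((if s = e then 1 else 0) - (if s = f then 1 else 0)) else 0) +
       (if x = w then ((if s = e then 1 else 0) - (if s = f then 1 else 0)) else 0)) := by
    intro x
    by_cases hxu : x = u
    · subst hxu
      rw [e1, hψ.1 x (dA _ hu), h1, h3, if_neg (nx x), if_neg huw]
      simp [eq_comm]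
    by_cases hxw : x = w
    · subst hxw
      rw [e2, hφ.1 x (dB _ hw), h2, h4, if_neg (nx x), if_neg hxu]
      simp [eq_comm]
    rw [if_neg hxu, if_neg hxw]
    by_cases hA : x ∈ A
    · rw [e3 x hA hxu, hψ.1 x (dA _ hA), if_neg (nx x)]; simp
    by_cases hB : x ∈ B
    · rw [e4 x hB hxw, hφ.1 x (dB _ hB), if_neg (nx x)]; simp
    · rw [c1 x (by simp [hA, hB]), hφ.1 x hA, hψ.1 x hB, if_neg (nx x)]; simp
  unfold stepCount
  rw [Finset.sum_congr rfl (fun x _ => key x)]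
  simp only [Finset.sum_add_distrib, Finset.sum_ite_eq', Finset.mem_univ, if_true]
  ring

/-! ### blocks -/

theorem fiber_equiv {m : ℕ} (p : Fin (m + 1)) :
    ∃ F : Perm (Fin m) ≃ {x : Perm (Fin (m + 1)) // x 0 = p},
      ∀ e a b, (F (swap a b * e)).1 =
        swap (swap 0 p a.succ) (swap 0 p b.succ) * (F e).1 := by
  have h0 : ∀ e : Perm (Fin m), Perm.decomposeFin.symm (p, e) 0 = p := by
    intro e; simp
  refine ⟨Equiv.ofBijective (fun e => ⟨Perm.decomposeFin.symm (p, e), h0 e⟩) ⟨?_, ?_⟩, ?_⟩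
  · intro e e' h
    have := congrArg Subtype.val h
    simpa using this
  · rintro ⟨x, hx⟩
    refine ⟨(Perm.decomposeFin x).2, ?_⟩
    apply Subtype.ext
    have : (Perm.decomposeFin x).1 = p := by
      rw [← hx]
      have := h0
      obtain ⟨⟨q, e⟩, rfl⟩ := Perm.decomposeFin.symm.surjective x
      simp
    simp [← this]
  · intro e a b
    have hc : Function.Injective (fun i : Fin m => swap 0 p i.succ) := by
      intro i j h
      simpa using h
    change Perm.decomposeFin.symm (p, swap a b * e) =
      swap (swap 0 p a.succ) (swap 0 p b.succ) * Perm.decomposeFin.symm (p, e)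
    ext1 i
    refine Fin.cases ?_ (fun i => ?_) i
    · have ha : p ≠ swap 0 p a.succ := by
        intro h
        have := congrArg (swap 0 p) h
        simp at this
        exact (Fin.succ_ne_zero a this.symm)
      have hb : p ≠ swap 0 p b.succ := by
        intro h
        have := congrArg (swap 0 p) h
        simp at this
        exact (Fin.succ_ne_zero b this.symm)
      simp [swap_apply_of_ne_of_ne ha hb]
    · simp only [Perm.decomposeFin_symm_apply_succ, Perm.mul_apply]
      exact (hc.swap_apply a b (e i)).symm

theorem exists_of_stepCount {n : ℕ} {φ : Perm (Perm (Fin n))} {s : Perm (Fin n)}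
    (h : stepCount φ s ≠ 0) : ∃ x, φ x = s * x := by
  by_contra! hc
  exact h (Finset.sum_eq_zero (fun x _ => if_neg (hc x)))

theorem exists_block {m : ℕ} (hbal : Bal m) (p : Fin (m + 1))
    (w : Perm (Fin (m + 1))) (hw : w 0 = p) (a b : Fin (m + 1)) (hab : a ≠ b) (ha : a ≠ p)
    (hb : b ≠ p) :
    ∃ ψ : Perm (Perm (Fin (m + 1))), CycOn ψ {x | x 0 = p} ∧
      (∀ x, x 0 = p → ∃ i j, i ≠ j ∧ ψ x = swap i j * x) ∧
      ψ w = swap a b * w ∧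
      ∀ i j, i ≠ j → stepCount ψ (swap i j) =
        if i = p ∨ j = p then 0 else 2 * (Nat.factorial (m - 2) : ℤ) := by
  obtain ⟨φ, hcyc, hstep, hcount⟩ := hbal
  obtain ⟨F, hF⟩ := fiber_equiv p
  have hc : Function.Injective (fun i : Fin m => swap 0 p i.succ) := by
    intro i j h
    simpa using h
  have hc' : ∀ i, i ≠ p → ∃ i', swap 0 p (Fin.succ i') = i := by
    intro i hi
    have : swap 0 p i ≠ 0 := by
      intro h
      have := congrArg (swap 0 p) h
      simp at this
      exact hi this
    obtain ⟨i', h⟩ := Fin.exists_succ_eq.2 this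
    exact ⟨i', by rw [h]; simp⟩
  have hfact : (2 * (Nat.factorial (m - 2) : ℤ)) ≠ 0 := by positivity
  obtain ⟨a', rfl⟩ := hc' a ha
  obtain ⟨b', rfl⟩ := hc' b hb
  have hab' : a' ≠ b' := fun h => hab (by rw [h])
  obtain ⟨e0, he0⟩ := exists_of_stepCount (by rw [hcount a' b' hab']; exact hfact)
  let f : Perm (Fin m) ≃ {x : Perm (Fin (m + 1)) // x 0 = p} :=
    (Equiv.mulRight (e0⁻¹ * F.symm ⟨w, hw⟩)).trans F
  have hf : ∀ e a b, (f (swap a b * e)).1 =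
        swap (swap 0 p a.succ) (swap 0 p b.succ) * (f e).1 := by
    intro e a b
    simp only [f, Equiv.trans_apply, Equiv.coe_mulRight, mul_assoc]
    exact hF _ _ _
  have hf0 : (f e0).1 = w := by simp [f]
  have hin : ∀ e, φ.extendDomain f (f e).1 = (f (φ e)).1 := fun e =>
    Perm.extendDomain_apply_image _ _ _
  have hout : ∀ x, x 0 ≠ p → φ.extendDomain f x = x := fun x hx =>
    Perm.extendDomain_apply_not_subtype _ _ hx
  have hsurj : ∀ x : Perm (Fin (m + 1)), x 0 = p → ∃ e, (f e).1 = x := fun x hx =>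
    ⟨f.symm ⟨x, hx⟩, by simp⟩
  have hcy : CycOn (φ.extendDomain f) {x | x 0 = p} := by
    refine ⟨fun x hx => hout x hx, ?_⟩
    intro x hx y hy
    obtain ⟨e, rfl⟩ := hsurj x hx
    obtain ⟨e', rfl⟩ := hsurj y hy
    exact Perm.sameCycle_extendDomain.2 (hcyc e e')
  refine ⟨φ.extendDomain f, hcy, ?_, ?_, ?_⟩
  · intro x hx
    obtain ⟨e, rfl⟩ := hsurj x hx
    obtain ⟨i, j, hij, h⟩ := hstep e
    exact ⟨_, _, fun h => hij (hc h), by rw [hin, h, hf]⟩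
  · rw [← hf0, hin, he0, hf]
  · intro i j hij
    have hs1 : ∀ x : Perm (Fin (m + 1)), ¬ (x = swap i j * x) := by
      intro x h
      have : swap i j = 1 := by simpa using h.symm
      exact hij (swap_eq_one_iff.1 this)
    split_ifs with h
    · refine Finset.sum_eq_zero (fun x _ => if_neg ?_)
      intro hx
      by_cases hxp : x 0 = p
      · have h1 : (φ.extendDomain f x) 0 = p := hcy.mem hxp
        rw [hx, Perm.mul_apply, hxp] at h1
        rcases h with rfl | rfl
        · rw [swap_apply_left] at h1
          exact hij h1.symm
        · rw [swap_apply_right] at h1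
          exact hij h1
      · rw [hout x hxp] at hx
        exact hs1 x hx
    · push Not at h
      obtain ⟨i', rfl⟩ := hc' i h.1
      obtain ⟨j', rfl⟩ := hc' j h.2
      rw [← hcount i' j' (fun h => hij (by rw [h]))]
      unfold stepCount
      symm
      refine Finset.sum_of_injOn (fun e => (f e).1) ?_ ?_ ?_ ?_
      · intro e _ e' _ h
        exact f.injective (Subtype.ext h)
      · intro e _; simp
      · intro x _ hx
        refine if_neg ?_
        have hxp : x 0 ≠ p := by
          intro h
          obtain ⟨e, rfl⟩ := hsurj x h
          exact hx ⟨e, by simp, rfl⟩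
        rw [hout x hxp]
        exact hs1 x
      · intro e _
        have : (φ e = swap i' j' * e) ↔ (φ.extendDomain f (f e).1 =
            swap (swap 0 p i'.succ) (swap 0 p j'.succ) * (f e).1) := by
          rw [hin, ← hf]
          constructor
          · intro h; rw [h]
          · intro h; exact f.injective (Subtype.ext h)
        simp only [this]

/-- the `t`-th vertex of the path -/
def vtx (m t : ℕ) : Fin (m + 1) := Fin.ofNat (m + 1) t

/-- the transposition of the `t`-th edge of the path -/
def edg (m t : ℕ) : Perm (Fin (m + 1)) := swap (vtx m t) (vtx m (t + 1))

theorem vtx_inj {m s t : ℕ} (hs : s ≤ m) (ht : t ≤ m) (h : vtx m s = vtx m t) : s = t := by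
  have := congrArg Fin.val h
  simp only [vtx, Fin.ofNat] at this
  rwa [Nat.mod_eq_of_lt (by omega), Nat.mod_eq_of_lt (by omega)] at this

theorem vtx_val {m t : ℕ} (ht : t ≤ m) : (vtx m t).val = t := by
  simp only [vtx, Fin.ofNat]
  rw [Nat.mod_eq_of_lt (by omega)]

theorem edg_inj {m s t : ℕ} (hs : s < m) (ht : t < m) (h : edg m s = edg m t) : s = t := by
  have h1 := congrArg (fun x : Perm (Fin (m + 1)) => x (vtx m s)) h
  simp only [edg, swap_apply_left] at h1
  by_contra hne
  by_cases h2 : s = t + 1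
  · subst h2
    rw [swap_apply_right] at h1
    have := vtx_inj (by omega) (by omega) h1
    omega
  · rw [swap_apply_of_ne_of_ne] at h1
    · have := vtx_inj (by omega) (by omega) h1
      omega
    · intro h; exact hne (vtx_inj (by omega) (by omega) h)
    · intro h; exact h2 (vtx_inj (by omega) (by omega) h)

theorem shift_spec {m t : ℕ} (hm : 4 ≤ m) (ht : t < m) :
    (t + 2) % m < m ∧ ((t + 2) % m = t + 2 ∨ (t + 2) % m + m = t + 2) := by
  refine ⟨Nat.mod_lt _ (by omega), ?_⟩
  by_cases h : t + 2 < m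
  · left; exact Nat.mod_eq_of_lt h
  · right
    rw [Nat.mod_eq_sub_mod (by omega), Nat.mod_eq_of_lt (by omega)]
    omega

theorem partial_merge {m : ℕ} (hm : 4 ≤ m) (hbal : Bal m) (t : ℕ) (ht : t ≤ m) :
    ∃ φ : Perm (Perm (Fin (m + 1))), CycOn φ {x | (x 0).val ≤ t} ∧
      (∀ x : Perm (Fin (m + 1)), (x 0).val ≤ t → ∃ i j, i ≠ j ∧ φ x = swap i j * x) ∧
      (∀ a b, a ≠ b → a ≠ vtx m t → b ≠ vtx m t →
        (∀ r, r + 1 = t → swap a b ≠ edg m ((r + 2) % m)) →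
        ∃ x : Perm (Fin (m + 1)), x 0 = vtx m t ∧ φ x = swap a b * x) ∧
      ∀ i j, i ≠ j → stepCount φ (swap i j) =
        (∑ r ∈ Finset.range (t + 1), if i = vtx m r ∨ j = vtx m r then 0
          else 2 * (Nat.factorial (m - 2) : ℤ)) +
        ∑ r ∈ Finset.range t, 2 * ((if swap i j = edg m r then 1 else 0) -
          (if swap i j = edg m ((r + 2) % m) then 1 else 0)) := by
  have hfact : (2 * (Nat.factorial (m - 2) : ℤ)) ≠ 0 := by positivity
  -- in a block, every admissible transposition occurs
  have blk : ∀ (p : Fin (m + 1)) (ψ : Perm (Perm (Fin (m + 1)))), CycOn ψ {x | x 0 = p} →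
      (∀ i j, i ≠ j → stepCount ψ (swap i j) =
        if i = p ∨ j = p then 0 else 2 * (Nat.factorial (m - 2) : ℤ)) →
      ∀ a b, a ≠ b → a ≠ p → b ≠ p →
        ∃ x : Perm (Fin (m + 1)), x 0 = p ∧ ψ x = swap a b * x := by
    intro p ψ hψ hcount a b hab ha hb
    obtain ⟨x, hx⟩ := exists_of_stepCount (φ := ψ) (s := swap a b)
      (by rw [hcount a b hab, if_neg (by tauto)]; exact hfact)
    refine ⟨x, ?_, hx⟩
    by_contra h
    rw [hψ.1 x h] at hx
    have : swap a b = 1 := by simpa using hx.symm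
    exact hab (swap_eq_one_iff.1 this)
  induction t with
  | zero =>
    have hset : {x : Perm (Fin (m + 1)) | (x 0).val ≤ 0} = {x | x 0 = vtx m 0} := by
      ext x
      simp only [Set.mem_ofPred_eq, Fin.ext_iff, vtx_val (Nat.zero_le m)]
      omega
    obtain ⟨ψ, h1, h2, -, h4⟩ := exists_block hbal (vtx m 0) (swap 0 (vtx m 0)) (by simp)
      (vtx m 1) (vtx m 2) (fun h => by have := vtx_inj (by omega) (by omega) h; omega)
      (fun h => by have := vtx_inj (by omega) (by omega) h; omega)
      (fun h => by have := vtx_inj (by omega) (by omega) h; omega)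
    refine ⟨ψ, by rw [hset]; exact h1, ?_, ?_, ?_⟩
    · intro x hx
      exact h2 x (hset.subset hx)
    · intro a b hab ha hb _
      exact blk _ ψ h1 h4 a b hab ha hb
    · intro i j hij
      rw [h4 i j hij]
      simp
  | succ t ih =>
    obtain ⟨φ, hcyc, hstep, hex, hcount⟩ := ih (by omega)
    obtain ⟨hq, hq'⟩ := shift_spec hm (show t < m by omega)
    set q := (t + 2) % m with hqdef
    have hne : ∀ r s, r ≤ m → s ≤ m → r ≠ s → vtx m r ≠ vtx m s := fun r s hr hs h h' =>
      h (vtx_inj hr hs h')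
    have n1 := hne q (q + 1) (by omega) (by omega) (by omega)
    have n2 := hne q t (by omega) (by omega) (by omega)
    have n3 := hne (q + 1) t (by omega) (by omega) (by omega)
    have n4 := hne q (t + 1) (by omega) (by omega) (by omega)
    have n5 := hne (q + 1) (t + 1) (by omega) (by omega) (by omega)
    have n6 := hne t (t + 1) (by omega) (by omega) (by omega)
    obtain ⟨u, hu0, hu⟩ := hex (vtx m q) (vtx m (q + 1)) n1 n2 n3 (by
      intro r hr h
      obtain ⟨h1, h2⟩ := shift_spec hm (show r < m by omega)
      have := edg_inj hq h1 h
      omega)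
    set f := swap (vtx m q) (vtx m (q + 1)) with hf
    set e := swap (vtx m t) (vtx m (t + 1)) with he
    have hcomm : e * f = f * e := by
      have hd : Perm.Disjoint e f := by
        intro x
        by_cases h1 : x = vtx m t
        · right; subst h1; exact swap_apply_of_ne_of_ne n2.symm n3.symm
        by_cases h2 : x = vtx m (t + 1)
        · right; subst h2; exact swap_apply_of_ne_of_ne n4.symm n5.symm
        · left; exact swap_apply_of_ne_of_ne h1 h2
      exact hd.commute
    have hee : e * e = 1 := swap_mul_self _ _
    have hff : f * f = 1 := swap_mul_self _ _
    have hw0 : (e * f * u) 0 = vtx m (t + 1) := by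
      simp only [Perm.mul_apply, hu0]
      rw [hf, swap_apply_of_ne_of_ne n2.symm n3.symm, he, swap_apply_left]
    obtain ⟨ψ, h1, h2, h3, h4⟩ := exists_block hbal (vtx m (t + 1)) (e * f * u) hw0
      (vtx m q) (vtx m (q + 1)) n1 n4 n5
    rw [← hf] at h3
    have huA : u ∈ {x : Perm (Fin (m + 1)) | (x 0).val ≤ t} := by
      change (u 0).val ≤ t
      rw [hu0, vtx_val (by omega)]
    have hwB : e * f * u ∈ {x : Perm (Fin (m + 1)) | x 0 = vtx m (t + 1)} := hw0
    have hdisj : Disjoint {x : Perm (Fin (m + 1)) | (x 0).val ≤ t}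
        {x : Perm (Fin (m + 1)) | x 0 = vtx m (t + 1)} := by
      rw [Set.disjoint_left]
      intro x hx hx'
      simp only [Set.mem_ofPred_eq] at hx hx'
      rw [hx', vtx_val (by omega)] at hx
      omega
    have hunion : {x : Perm (Fin (m + 1)) | (x 0).val ≤ t + 1} =
        {x : Perm (Fin (m + 1)) | (x 0).val ≤ t} ∪ {x | x 0 = vtx m (t + 1)} := by
      ext x
      simp only [Set.mem_ofPred_eq, Set.mem_union, Fin.ext_iff, vtx_val ht]
      omega
    have k1 : ψ (e * f * u) = e * u := by
      rw [h3, hcomm, mul_assoc, ← mul_assoc, hff, one_mul]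
    have k2 : φ u = e * (e * f * u) := by
      rw [hu, mul_assoc, ← mul_assoc, hee, one_mul]
    obtain ⟨g1, g2, g3, g4, g5⟩ := merge_cyc hcyc h1 hdisj huA hwB
    refine ⟨φ * ψ * swap u (e * f * u), by rw [hunion]; exact g1, ?_, ?_, ?_⟩
    · intro x hx
      have hx' : x ∈ {x : Perm (Fin (m + 1)) | (x 0).val ≤ t} ∪
        {x | x 0 = vtx m (t + 1)} := hunion.subset hx
      by_cases hxu : x = u
      · exact ⟨_, _, n6, by rw [hxu, g2, k1]⟩
      by_cases hxw : x = e * f * u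
      · exact ⟨_, _, n6, by rw [hxw, g3, k2]⟩
      rcases hx' with hx' | hx'
      · rw [g4 x hx' hxu]; exact hstep x hx'
      · rw [g5 x hx' hxw]; exact h2 x hx'
    · intro a b hab ha hb hr
      obtain ⟨x, hx0, hx⟩ := blk _ ψ h1 h4 a b hab ha hb
      refine ⟨x, hx0, ?_⟩
      rw [g5 x hx0, hx]
      rintro rfl
      rw [h3] at hx
      exact hr t rfl (mul_right_cancel hx).symm
    · intro i j hij
      rw [merge_count hcyc h1 hdisj huA hwB k1 k2 hu h3 (swap i j)
        (fun h => hij (swap_eq_one_iff.1 h)), hcount i j hij, h4 i j hij,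
        Finset.sum_range_succ _ (t + 1), Finset.sum_range_succ _ t]
      rw [Finset.sum_range_succ _ t]
      simp only [edg, ← hqdef, ← hf, ← he]
      ring

theorem bal_succ {m : ℕ} (hm : 4 ≤ m) (hbal : Bal m) : Bal (m + 1) := by
  obtain ⟨φ, h1, h2, -, h4⟩ := partial_merge hm hbal m le_rfl
  have hall : ∀ x : Perm (Fin (m + 1)), (x 0).val ≤ m := fun x => by omega
  refine ⟨φ, fun x y => h1.2 x (hall x) y (hall y), fun x => h2 x (hall x), ?_⟩
  intro i j hij
  rw [h4 i j hij, ← Finset.mul_sum, Finset.sum_sub_distrib]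
  have e1 : (∑ r ∈ Finset.range m, if swap i j = edg m ((r + 2) % m) then (1 : ℤ) else 0) =
      ∑ r ∈ Finset.range m, if swap i j = edg m r then (1 : ℤ) else 0 := by
    refine Finset.sum_nbij (fun r => (r + 2) % m) ?_ ?_ ?_ ?_
    · intro r _
      simp only [Finset.mem_range]
      exact Nat.mod_lt _ (by omega)
    · intro r hr s hs h
      simp only [Finset.coe_range, Set.mem_Iio] at hr hs
      have := shift_spec hm hr
      have := shift_spec hm hs
      simp only at h
      omega
    · intro s hs
      simp only [Finset.coe_range, Set.mem_Iio] at hs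
      by_cases h : 2 ≤ s
      · refine ⟨s - 2, ?_, ?_⟩
        · simp only [Finset.coe_range, Set.mem_Iio]; omega
        · have := shift_spec hm (show s - 2 < m by omega)
          simp only
          omega
      · refine ⟨s + m - 2, ?_, ?_⟩
        · simp only [Finset.coe_range, Set.mem_Iio]; omega
        · have := shift_spec hm (show s + m - 2 < m by omega)
          simp only
          omega
    · intro r _; rfl
  rw [e1, sub_self, mul_zero, add_zero, Finset.sum_range]
  have e2 : ∀ r : Fin (m + 1), vtx m r.val = r := fun r => Fin.ext (vtx_val (by omega))
  simp only [e2]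
  have e3 : ∀ r : Fin (m + 1), (if i = r ∨ j = r then 0 else 2 * (Nat.factorial (m - 2) : ℤ)) =
      2 * (Nat.factorial (m - 2) : ℤ) - (if i = r then 2 * (Nat.factorial (m - 2) : ℤ) else 0)
        - (if j = r then 2 * (Nat.factorial (m - 2) : ℤ) else 0) := by
    intro r
    by_cases hi : i = r
    · have : j ≠ r := fun h => hij (hi.trans h.symm)
      simp [hi, this]
    · by_cases hj : j = r <;> simp [hi, hj]
  simp only [e3, Finset.sum_sub_distrib, Finset.sum_ite_eq, Finset.mem_univ, if_true,
    Finset.sum_const, Finset.card_univ, Fintype.card_fin]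
  obtain ⟨k, rfl⟩ : ∃ k, m = k + 2 := ⟨m - 2, by omega⟩
  simp only [Nat.add_sub_cancel, show k + 2 + 1 - 2 = k + 1 by omega, Nat.factorial_succ]
  push_cast
  simp only [nsmul_eq_mul]
  push_cast
  ring

/-! ### base cases and conversion -/

theorem bal_of_code {n N : ℕ} (π : Fin (N + 1) → Perm (Fin n)) (hπ : Function.Bijective π)
    (hstep : ∀ s : Fin (N + 1), ∃ i j : Fin n, i ≠ j ∧ π (s + 1) = swap i j * π s)
    (hcount : ∀ i j : Fin n, i ≠ j →
      (Finset.univ.filter (fun s : Fin (N + 1) =>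
      π (s + 1) = Equiv.swap i j * π s)).card = 2 * Nat.factorial (n - 2)) : Bal n := by
  let E := Equiv.ofBijective π hπ
  let φ : Perm (Perm (Fin n)) := (E.symm.trans (Equiv.addRight 1)).trans E
  have hφ : ∀ s, φ (π s) = π (s + 1) := by
    intro s
    have : E.symm (π s) = s := E.symm_apply_apply s
    simp only [φ, Equiv.trans_apply, this]
    rfl
  refine ⟨φ, ?_, ?_, ?_⟩
  · intro x y
    obtain ⟨s, rfl⟩ := hπ.2 x
    obtain ⟨t, rfl⟩ := hπ.2 y
    have key : ∀ k : ℕ, ∀ s, (φ ^ k) (π s) = π (s + Fin.ofNat (N + 1) k) := by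
      intro k
      induction k with
      | zero => intro s; simp
      | succ k ih =>
        intro s
        rw [pow_succ', Perm.mul_apply, ih, hφ]
        congr 1
        rw [add_assoc]
        congr 1
        apply Fin.ext
        simp [Fin.val_add]
    refine ⟨((t - s).val : ℕ), ?_⟩
    rw [zpow_natCast, key]
    congr 1
    simp
  · intro x
    obtain ⟨s, rfl⟩ := hπ.2 x
    rw [hφ]
    exact hstep s
  · intro i j hij
    unfold stepCount
    rw [← E.sum_comp]
    have : ∀ s, E s = π s := fun _ => rfl
    simp only [this, hφ]
    rw [Finset.sum_boole, hcount i j hij]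
    push_cast
    rfl

theorem code_of_bal {n : ℕ} (h : Bal n) (p q : Fin n) (hpq : p ≠ q) :
    ∃ (N : ℕ) (π : Fin (N + 1) → Equiv.Perm (Fin n)),
      IsBalancedCyclicGrayCode n N π ∧ π 0 = 1 ∧ π (Fin.last N) = swap p q := by
  obtain ⟨φ, hcyc, hstep, hcount⟩ := h
  have hfact : (2 * (Nat.factorial (n - 2) : ℤ)) ≠ 0 := by positivity
  obtain ⟨x0, hx0⟩ := exists_of_stepCount (by rw [hcount p q hpq]; exact hfact)
  set g := swap p q * x0 with hg
  obtain ⟨N, hN⟩ : ∃ N, N + 1 = Nat.factorial n :=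
    ⟨n.factorial - 1, by have := Nat.factorial_pos n; omega⟩
  have hon : φ.IsCycleOn ((Finset.univ : Finset (Perm (Fin n))) : Set (Perm (Fin n))) := by
    refine ⟨?_, fun x _ y _ => hcyc x y⟩
    simp [Set.bijOn_univ]
  have hcard : (Finset.univ : Finset (Perm (Fin n))).card = N + 1 := by
    rw [Finset.card_univ, Fintype.card_perm, Fintype.card_fin, hN]
  have hper : ∀ x, (φ ^ (N + 1)) x = x := by
    intro x
    rw [← hcard]
    exact hon.pow_card_apply (Finset.mem_univ x)
  let ρ : Fin (N + 1) → Perm (Fin n) := fun s => (φ ^ s.val) g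
  have hρ : ∀ s, ρ (s + 1) = φ (ρ s) := by
    intro s
    simp only [ρ]
    rw [← Perm.mul_apply, ← pow_succ']
    by_cases hs : s = Fin.last N
    · subst hs
      simp [hper]
    · rw [Fin.val_add_one_of_lt (Fin.lt_last_iff_ne_last.2 hs)]
  have hbij : Function.Bijective ρ := by
    rw [Fintype.bijective_iff_surjective_and_card]
    constructor
    · intro y
      obtain ⟨k, hk, h⟩ := hon.exists_pow_eq (Finset.mem_univ g) (Finset.mem_univ y)
      exact ⟨⟨k, by omega⟩, h⟩
    · rw [Fintype.card_perm, Fintype.card_fin, Fintype.card_fin, hN]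
  have hρ0 : ρ 0 = g := by simp [ρ]
  have hiff : ∀ (s : Fin (N + 1)) (i j : Fin n), (ρ (s + 1) * g⁻¹ = swap i j * (ρ s * g⁻¹)) ↔
      φ (ρ s) = swap i j * ρ s := by
    intro s i j
    rw [← mul_assoc, hρ]
    exact mul_left_inj _
  refine ⟨N, fun s => ρ s * g⁻¹, ⟨hN, ?_, ?_, ?_⟩, ?_, ?_⟩
  · exact (Equiv.mulRight g⁻¹).bijective.comp hbij
  · intro s
    obtain ⟨i, j, hij, h⟩ := hstep (ρ s)
    exact ⟨i, j, hij, (hiff s i j).2 h⟩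
  · intro i j hij
    have := hcount i j hij
    unfold stepCount at this
    rw [← (Equiv.ofBijective ρ hbij).sum_comp] at this
    simp only [Equiv.ofBijective_apply] at this
    rw [Finset.sum_boole] at this
    simp only [hiff]
    exact_mod_cast this
  · simp [hρ0]
  · have h1 : φ (ρ (Fin.last N)) = φ x0 := by
      rw [← hρ, Fin.last_add_one, hρ0, hx0]
    simp only
    rw [φ.injective h1, hg, mul_inv_rev, swap_inv]
    simp

/-- the words obtained by successively applying the transpositions of a periodic list -/
def word {n : ℕ} (l : ℕ → Fin n × Fin n) : ℕ → Perm (Fin n)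
  | 0 => 1
  | k + 1 => swap (l k).1 (l k).2 * word l k

def seq3 (k : ℕ) : Fin 3 × Fin 3 := [(0, 1), (0, 2), (1, 2)].getD (k % 3) (0, 1)

def seq4 (k : ℕ) : Fin 4 × Fin 4 :=
  [(0, 1), (0, 2), (0, 1), (0, 2), (1, 3), (0, 3), (1, 3), (0, 3), (1, 2), (2, 3), (1, 2),
    (2, 3)].getD (k % 12) (0, 1)

theorem bal_three : Bal 3 := by
  refine bal_of_code (N := 5) (fun s => word seq3 s.val) ?_ ?_ ?_
  · rw [Fintype.bijective_iff_injective_and_card]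
    exact ⟨by decide +kernel, by simp [Fintype.card_perm]; decide⟩
  · decide +kernel
  · decide +kernel

theorem bal_four : Bal 4 := by
  refine bal_of_code (N := 23) (fun s => word seq4 s.val) ?_ ?_ ?_
  · rw [Fintype.bijective_iff_injective_and_card]
    exact ⟨by decide +kernel, by simp [Fintype.card_perm]; decide⟩
  · decide +kernel
  · decide +kernel

theorem bal_all (n : ℕ) (hn : 3 ≤ n) : Bal n := by
  by_cases h : n = 3
  · subst h; exact bal_three
  · induction n, (show 4 ≤ n by omega) using Nat.le_induction with
    | base => exact bal_four
    | succ m hm ih => exact bal_succ hm (ih (by omega) (by omega))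

end Aux

/-- For every odd `n ≥ 3` there exists a balanced cyclic Gray code for `S_n`
under all transpositions from the identity word `12⋯(n−1)n` to the word `12⋯n(n−1)`,
whose closing transposition is `(n−1, n)`. -/
theorem balanced_gray_code_odd (n : ℕ) (hn : 3 ≤ n) (hodd : Odd n) :
    ∃ (N : ℕ) (π : Fin (N + 1) → Equiv.Perm (Fin n)),
      IsBalancedCyclicGrayCode n N π ∧
      π 0 = 1 ∧
      π (Fin.last N) = Equiv.swap ⟨n - 2, by omega⟩ ⟨n - 1, by omega⟩ ∧
      π 0 = Equiv.swap ⟨n - 2, by omega⟩ ⟨n - 1, by omega⟩ * π (Fin.last N) := by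
  obtain ⟨N, π, h1, h2, h3⟩ := code_of_bal (bal_all n hn) ⟨n - 2, by omega⟩ ⟨n - 1, by omega⟩
    (by simp only [ne_eq, Fin.mk.injEq]; omega)
  refine ⟨N, π, h1, h2, h3, ?_⟩
  rw [h2, h3, Equiv.swap_mul_self]
end

section
/- Let n ≥ 3 be odd. Suppose there exists a balanced cyclic Gray code for S_n under all transpositions from 12⋯(n−1)n to 12⋯n(n−1) whose closing transposition is (n−1, n). Then there exist two almost balanced Gray codes for S_{n+1}: a code L from the word 12⋯(n+1) to the word 23⋯(n+1)1, and a code R from the word 12⋯(n+1) to the word (n+1)12⋯n, such that every transposition on [n+1] is applied the same number of times in R as in L. -/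
/-- An almost balanced Gray code for `S_m` from `a` to `b`: a (non-cyclic) listing
`π : Fin (N+1) → Perm (Fin m)` of all `m!` permutations, each exactly once, starting at
`a`, ending at `b`, consecutive ones differing by applying a transposition, in which
every wide transposition (`|i−j| ≠ 1`) on `[m]` is applied exactly `2·(m−2)!` times. -/
def IsAlmostBalancedGrayCodeFromTo (m N : ℕ) (π : Fin (N + 1) → Equiv.Perm (Fin m))
    (a b : Equiv.Perm (Fin m)) : Prop :=
  N + 1 = Nat.factorial m ∧
  Function.Bijective π ∧
  π 0 = a ∧
  π (Fin.last N) = b ∧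
  (∀ s : Fin (N + 1), (s : ℕ) < N →
    ∃ i j : Fin m, i ≠ j ∧ π (s + 1) = Equiv.swap i j * π s) ∧
  (∀ i j : Fin m, i ≠ j →
    ¬((i : ℕ) + 1 = (j : ℕ) ∨ (j : ℕ) + 1 = (i : ℕ)) →
    (Finset.univ.filter (fun s : Fin (N + 1) =>
      (s : ℕ) < N ∧ π (s + 1) = Equiv.swap i j * π s)).card = 2 * Nat.factorial (m - 2))

namespace GC

lemma val_add_one {M : ℕ} (s : Fin (M+1)) (h : (s:ℕ) < M) : ((s+1 : Fin (M+1)) : ℕ) = s + 1 := by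
  rw [Fin.val_add_one_of_lt]
  exact Fin.lt_def.2 (by simpa using h)

lemma count_fin {G : Type*} [Group G] [DecidableEq G] (M : ℕ) (f : ℕ → G) (P : Fin (M+1) → G)
    (hP : ∀ s, P s = f s) (g : G) :
    (Finset.univ.filter (fun s : Fin (M+1) => (s:ℕ) < M ∧ P (s+1) = g * P s)).card =
    ((Finset.range M).filter (fun s => f (s+1) = g * f s)).card := by
  refine Finset.card_bij (fun s _ => (s:ℕ)) ?_ ?_ ?_
  · intro s hs
    simp only [Finset.mem_filter, Finset.mem_univ, true_and, hP, Finset.mem_range] at hs ⊢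
    obtain ⟨h1, h2⟩ := hs
    rw [val_add_one s h1] at h2
    exact ⟨h1, h2⟩
  · intro a _ b _ h
    exact Fin.ext h
  · intro b hb
    simp only [Finset.mem_filter, Finset.mem_range] at hb
    refine ⟨⟨b, by omega⟩, ?_, rfl⟩
    simp only [Finset.mem_filter, Finset.mem_univ, true_and, hP]
    rw [val_add_one _ hb.1]
    exact hb

lemma lt_two {n : ℕ} (hn : 3 ≤ n) : n - 2 < n := by omega

lemma lt_one {n : ℕ} (hn : 3 ≤ n) : n - 1 < n := by omega

section embed
variable {n : ℕ}

/-- Embedding of `Fin n` in `Fin (n+1)` missing `q`. -/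
def emb (q : Fin (n+1)) : Fin n ↪ Fin (n+1) where
  toFun x := if (q:ℕ) + 2 ≤ n then q.succAbove x else q.succAbove x.rev
  inj' := by
    intro x y h
    dsimp only at h
    split_ifs at h
    · exact Fin.succAbove_right_injective h
    · exact Fin.rev_injective (Fin.succAbove_right_injective h)

lemma emb_ne (q : Fin (n+1)) (x : Fin n) : emb q x ≠ q := by
  simp only [emb]
  split_ifs <;> exact Fin.succAbove_ne _ _

lemma emb_surj (q y : Fin (n+1)) (h : y ≠ q) : ∃ x, emb q x = y := by
  obtain ⟨z, rfl⟩ := Fin.exists_succAbove_eq h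
  simp only [emb]
  split_ifs
  · exact ⟨z, rfl⟩
  · exact ⟨z.rev, by simp⟩

/-- Extension of permutations avoiding `q`. -/
noncomputable def ext (q : Fin (n+1)) : Equiv.Perm (Fin n) →* Equiv.Perm (Fin (n+1)) :=
  Equiv.Perm.viaEmbeddingHom (emb q)

lemma ext_inj (q : Fin (n+1)) : Function.Injective (ext q) :=
  Equiv.Perm.viaEmbeddingHom_injective _

lemma ext_emb (q : Fin (n+1)) (e : Equiv.Perm (Fin n)) (x : Fin n) :
    ext q e (emb q x) = emb q (e x) :=
  Equiv.Perm.viaEmbedding_apply _ _ _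

lemma ext_self (q : Fin (n+1)) (e : Equiv.Perm (Fin n)) : ext q e q = q := by
  refine Equiv.Perm.viaEmbedding_apply_of_notMem _ _ _ ?_
  rintro ⟨x, hx⟩
  exact emb_ne q x hx

lemma ext_swap (q : Fin (n+1)) (i j : Fin n) :
    ext q (Equiv.swap i j) = Equiv.swap (emb q i) (emb q j) := by
  ext1 y
  by_cases h : y = q
  · subst h
    rw [ext_self, Equiv.swap_apply_of_ne_of_ne (emb_ne _ _).symm (emb_ne _ _).symm]
  · obtain ⟨x, rfl⟩ := emb_surj q y h
    rw [ext_emb, (emb q).injective.swap_apply]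

/-- the pair removed in block `q` -/
lemma emb_low (hn : 3 ≤ n) (q : Fin (n+1)) (h : (q:ℕ) + 2 ≤ n) :
    ((emb q ⟨n - 2, lt_two hn⟩ : Fin (n+1)) : ℕ) = n - 1 ∧ ((emb q ⟨n - 1, lt_one hn⟩ : Fin (n+1)) : ℕ) = n := by
  simp only [emb, Function.Embedding.coeFn_mk, if_pos h, Fin.succAbove, Fin.lt_def]
  constructor <;> split_ifs <;> simp at * <;> omega

lemma emb_high (hn : 3 ≤ n) (q : Fin (n+1)) (h : ¬ (q:ℕ) + 2 ≤ n) :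
    ((emb q ⟨n - 2, lt_two hn⟩ : Fin (n+1)) : ℕ) = 1 ∧ ((emb q ⟨n - 1, lt_one hn⟩ : Fin (n+1)) : ℕ) = 0 := by
  simp only [emb, Function.Embedding.coeFn_mk, if_neg h, Fin.succAbove, Fin.lt_def]
  constructor <;> split_ifs <;> simp at * <;> omega

/-- The value embedding made total. -/
def v (n q : ℕ) : Fin (n+1) := ⟨min q n, by omega⟩

lemma v_val {q : ℕ} (h : q ≤ n) : (v n q : ℕ) = q := by simp [v, h]

/-- transposition skipped in a block -/
def t (hn : 3 ≤ n) (q : ℕ) : Equiv.Perm (Fin (n+1)) :=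
  Equiv.swap (emb (v n q) ⟨n - 2, lt_two hn⟩) (emb (v n q) ⟨n - 1, lt_one hn⟩)

/-- connecting transposition -/
def c (n q : ℕ) : Equiv.Perm (Fin (n+1)) := Equiv.swap (v n q) (v n (q+1))

/-- start of blocks -/
def ρ (hn : 3 ≤ n) : ℕ → Equiv.Perm (Fin (n+1))
  | 0 => 1
  | q+1 => c n q * (t hn q * ρ hn q)

lemma t_fix (hn : 3 ≤ n) (q : ℕ) : t hn q (v n q) = v n q :=
  Equiv.swap_apply_of_ne_of_ne (emb_ne _ _).symm (emb_ne _ _).symm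

lemma ρ_zero (hn : 3 ≤ n) (q : ℕ) : ρ hn q 0 = v n q := by
  induction q with
  | zero => simp [ρ, v]
  | succ q ih =>
    rw [ρ, Equiv.Perm.mul_apply, Equiv.Perm.mul_apply, ih, t_fix, c, Equiv.swap_apply_left]

lemma t_comm (hn : 3 ≤ n) (hodd : Odd n) (q : ℕ) (hq : Even q) (hqn : q < n) :
    t hn (q+1) * (c n q * t hn q) = c n q := by
  obtain ⟨a, ha⟩ := hodd
  obtain ⟨b, hb⟩ := hq
  have e1 := v_val (n := n) (q := q) (by omega)
  have e2 := v_val (n := n) (q := q+1) (by omega)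
  by_cases h : q + 3 ≤ n
  · obtain ⟨x1, y1⟩ := emb_low hn (v n q) (by omega)
    obtain ⟨x2, y2⟩ := emb_low hn (v n (q+1)) (by omega)
    have ht : t hn (q+1) = t hn q := by
      unfold t; congr 1 <;> apply Fin.ext <;> omega
    have hc : Equiv.Perm.Disjoint (c n q) (t hn q) := by
      rw [Equiv.Perm.disjoint_iff_eq_or_eq]
      intro x
      unfold c t
      by_cases hx : (x : ℕ) = q ∨ (x:ℕ) = q + 1
      · right
        apply Equiv.swap_apply_of_ne_of_ne <;> rw [Ne, Fin.ext_iff] <;> omega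
      · left
        apply Equiv.swap_apply_of_ne_of_ne <;> rw [Ne, Fin.ext_iff] <;> omega
    rw [ht, hc.commute.eq, ← mul_assoc]
    simp [t]
  · obtain ⟨x1, y1⟩ := emb_high hn (v n q) (by omega)
    obtain ⟨x2, y2⟩ := emb_high hn (v n (q+1)) (by omega)
    have ht : t hn (q+1) = t hn q := by
      unfold t; congr 1 <;> apply Fin.ext <;> omega
    have hc : Equiv.Perm.Disjoint (c n q) (t hn q) := by
      rw [Equiv.Perm.disjoint_iff_eq_or_eq]
      intro x
      unfold c t
      by_cases hx : (x : ℕ) = q ∨ (x:ℕ) = q + 1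
      · right
        apply Equiv.swap_apply_of_ne_of_ne <;> rw [Ne, Fin.ext_iff] <;> omega
      · left
        apply Equiv.swap_apply_of_ne_of_ne <;> rw [Ne, Fin.ext_iff] <;> omega
    rw [ht, hc.commute.eq, ← mul_assoc]
    simp [t]

/-- product of the connecting transpositions -/
def C (n : ℕ) : ℕ → Equiv.Perm (Fin (n+1))
  | 0 => 1
  | q+1 => c n q * C n q

lemma ρ_even (hn : 3 ≤ n) (hodd : Odd n) (k : ℕ) (hk : 2 * k < n) : ρ hn (2*k) = C n (2*k) := by
  induction k with
  | zero => rfl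
  | succ k ih =>
    have h1 := t_comm hn hodd (2*k) (by simp) (by omega)
    have h2 : ρ hn (2*(k+1)) = c n (2*k+1) * (t hn (2*k+1) * (c n (2*k) * (t hn (2*k) * ρ hn (2*k)))) := rfl
    have h3 : C n (2*(k+1)) = c n (2*k+1) * (c n (2*k) * C n (2*k)) := rfl
    rw [h2, h3, ih (by omega)]
    conv_rhs => rw [← h1]
    simp only [mul_assoc]

lemma C_apply (q : ℕ) (hq : q ≤ n) (x : Fin (n+1)) :
    ((C n q x : Fin (n+1)) : ℕ) = if (x:ℕ) = 0 then q else if (x:ℕ) ≤ q then x - 1 else x := by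
  induction q with
  | zero => simp [C]; split_ifs <;> simp_all
  | succ q ih =>
    have ih := ih (by omega)
    have e1 := v_val (n := n) (q := q) (by omega)
    have e2 := v_val (n := n) (q := q+1) (by omega)
    rw [C, Equiv.Perm.mul_apply, c, Equiv.swap_apply_def]
    simp only [Fin.ext_iff, e1, e2]
    have := x.isLt
    split_ifs at * <;> omega

lemma C_rot : C n n = (finRotate (n+1))⁻¹ := by
  rw [eq_inv_iff_mul_eq_one]
  ext x
  rw [Equiv.Perm.mul_apply, C_apply n le_rfl, finRotate_apply]
  by_cases h : (x:ℕ) < n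
  · rw [val_add_one x h]; simp; omega
  · have : x = Fin.last n := by ext; simp; omega
    subst this
    simp

lemma final (hn : 3 ≤ n) (hodd : Odd n) : t hn n * ρ hn n = (finRotate (n+1))⁻¹ := by
  obtain ⟨k, hk⟩ := id hodd
  have h1 := t_comm hn hodd (2*k) (by simp) (by omega)
  rw [← C_rot]
  have h2 : t hn (2*k+1) * ρ hn (2*k+1) = C n (2*k+1) := by
    rw [ρ, C, ρ_even hn hodd k (by omega)]
    conv_rhs => rw [← h1]
    simp only [mul_assoc]
  rwa [← hk] at h2

lemma t_adj (hn : 3 ≤ n) (q : ℕ) :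
    ∃ i j : Fin (n+1), (i:ℕ) + 1 = j ∧ t hn q = Equiv.swap i j := by
  by_cases h : ((v n q : Fin (n+1)) :ℕ) + 2 ≤ n
  · obtain ⟨x, y⟩ := emb_low hn _ h
    exact ⟨_, _, by omega, rfl⟩
  · obtain ⟨x, y⟩ := emb_high hn _ h
    exact ⟨_, _, by omega, Equiv.swap_comm _ _⟩

lemma swap_ne_adj {i j a b : Fin (n+1)} (hab : (a:ℕ) + 1 = b)
    (hw : ¬((i : ℕ) + 1 = (j : ℕ) ∨ (j : ℕ) + 1 = (i : ℕ))) :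
    Equiv.swap i j ≠ Equiv.swap a b := by
  intro h
  have h1 : a ≠ b := by intro h; rw [h] at hab; omega
  have h2 := congrArg (fun e : Equiv.Perm (Fin (n+1)) => e a) h
  simp only [Equiv.swap_apply_left] at h2
  rw [Equiv.swap_apply_def] at h2
  split_ifs at h2 <;> subst_vars <;> omega

/-- the code -/
noncomputable def F (hn : 3 ≤ n) (K : ℕ) (p : ℕ → Equiv.Perm (Fin n)) (s : ℕ) :
    Equiv.Perm (Fin (n+1)) :=
  ext (v n (s / K)) (p (s % K)) * ρ hn (s / K)

lemma F_mk (hn : 3 ≤ n) (K : ℕ) (p : ℕ → Equiv.Perm (Fin n)) (q r : ℕ) (hr : r < K) :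
    F hn K p (q * K + r) = ext (v n q) (p r) * ρ hn q := by
  have h1 : (q * K + r) / K = q := by
    rw [mul_comm, Nat.mul_add_div (by omega), Nat.div_eq_of_lt hr]; rfl
  have h2 : (q * K + r) % K = r := by
    rw [mul_comm, Nat.mul_add_mod, Nat.mod_eq_of_lt hr]
  rw [F, h1, h2]


lemma F_cross (hn : 3 ≤ n) (K : ℕ) (hK : 0 < K) (p : ℕ → Equiv.Perm (Fin n)) (hp0 : p 0 = 1)
    (hpK : p (K-1) = Equiv.swap ⟨n - 2, lt_two hn⟩ ⟨n - 1, lt_one hn⟩) (q : ℕ) :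
    F hn K p (q * K + (K-1) + 1) = c n q * F hn K p (q * K + (K-1)) := by
  have h : q * K + (K-1) + 1 = (q+1) * K + 0 := by rw [add_mul]; omega
  rw [h, F_mk hn K p _ _ hK, F_mk hn K p _ _ (by omega), hp0, hpK, ext_swap, map_one, one_mul, ρ]
  rfl

lemma F_zero (hn : 3 ≤ n) (K : ℕ) (hK : 0 < K) (p : ℕ → Equiv.Perm (Fin n)) (hp0 : p 0 = 1) :
    F hn K p 0 = 1 := by
  have := F_mk hn K p 0 0 hK
  simpa [hp0, ρ] using this

lemma F_last (hn : 3 ≤ n) (hodd : Odd n) (K : ℕ) (hK : 0 < K) (p : ℕ → Equiv.Perm (Fin n))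
    (hpK : p (K-1) = Equiv.swap ⟨n - 2, lt_two hn⟩ ⟨n - 1, lt_one hn⟩) :
    F hn K p ((n+1) * K - 1) = (finRotate (n+1))⁻¹ := by
  have h : (n+1) * K - 1 = n * K + (K-1) := by rw [add_mul]; omega
  rw [h, F_mk hn K p _ _ (by omega), hpK, ext_swap, ← final hn hodd]
  rfl

lemma decomp (K s : ℕ) (hK : 0 < K) (hs : s < (n+1) * K) :
    ∃ q r, q ≤ n ∧ r < K ∧ s = q * K + r := by
  refine ⟨s / K, s % K, ?_, Nat.mod_lt _ hK, (Nat.div_add_mod' s K).symm⟩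
  have := (Nat.div_lt_iff_lt_mul hK).2 hs
  omega

lemma F_inj (hn : 3 ≤ n) (K : ℕ) (hK : 0 < K) (p : ℕ → Equiv.Perm (Fin n))
    (hinj : ∀ r r', r < K → r' < K → p r = p r' → r = r') (s s' : ℕ)
    (hs : s < (n+1) * K) (hs' : s' < (n+1) * K) (h : F hn K p s = F hn K p s') : s = s' := by
  obtain ⟨q, r, hq, hr, rfl⟩ := decomp K s hK hs
  obtain ⟨q', r', hq', hr', rfl⟩ := decomp K s' hK hs'
  rw [F_mk hn K p _ _ hr, F_mk hn K p _ _ hr'] at h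
  have h0 := congrArg (fun e : Equiv.Perm (Fin (n+1)) => e 0) h
  simp only [Equiv.Perm.mul_apply, ρ_zero, ext_self] at h0
  rw [Fin.ext_iff, v_val hq, v_val hq'] at h0
  subst h0
  rw [hinj r r' hr hr' (ext_inj _ (mul_right_cancel h))]

lemma F_step (hn : 3 ≤ n) (K : ℕ) (hK : 0 < K) (p : ℕ → Equiv.Perm (Fin n)) (hp0 : p 0 = 1)
    (hpK : p (K-1) = Equiv.swap ⟨n - 2, lt_two hn⟩ ⟨n - 1, lt_one hn⟩)
    (hst : ∀ r, r + 1 < K → ∃ i j, i ≠ j ∧ p (r+1) = Equiv.swap i j * p r) (s : ℕ)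
    (hs : s + 1 < (n+1) * K) :
    ∃ i j, i ≠ j ∧ F hn K p (s+1) = Equiv.swap i j * F hn K p s := by
  obtain ⟨q, r, hq, hr, rfl⟩ := decomp (n := n) K s hK (by omega)
  by_cases h : r + 1 < K
  · obtain ⟨i, j, hij, e⟩ := hst r h
    refine ⟨emb (v n q) i, emb (v n q) j, fun h => hij ((emb _).injective h), ?_⟩
    rw [add_assoc, F_mk hn K p _ _ h, F_mk hn K p _ _ hr, e, map_mul, ext_swap, mul_assoc]
  · have : r = K - 1 := by omega
    subst this
    have hqn : q < n := by
      rcases hq.lt_or_eq with h | h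
      · exact h
      · subst h; rw [add_mul] at hs; omega
    refine ⟨_, _, ?_, F_cross hn K hK p hp0 hpK q⟩
    rw [Ne, Fin.ext_iff, v_val hq, v_val (by omega)]
    omega

lemma F_count (hn : 3 ≤ n) (K : ℕ) (hK : 0 < K) (p : ℕ → Equiv.Perm (Fin n)) (hp0 : p 0 = 1)
    (hpK : p (K-1) = Equiv.swap ⟨n - 2, lt_two hn⟩ ⟨n - 1, lt_one hn⟩) (m : ℕ)
    (hc : ∀ i j : Fin n, i ≠ j →
      Equiv.swap i j ≠ Equiv.swap ⟨n - 2, lt_two hn⟩ ⟨n - 1, lt_one hn⟩ →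
      ((Finset.range (K-1)).filter (fun r => p (r+1) = Equiv.swap i j * p r)).card = m)
    (i j : Fin (n+1)) (hij : i ≠ j) (hw : ¬((i : ℕ) + 1 = (j : ℕ) ∨ (j : ℕ) + 1 = (i : ℕ))) :
    ((Finset.range ((n+1) * K - 1)).filter
      (fun s => F hn K p (s+1) = Equiv.swap i j * F hn K p s)).card = (n-1) * m := by
  classical
  set S := (Finset.range ((n+1) * K - 1)).filter
      (fun s => F hn K p (s+1) = Equiv.swap i j * F hn K p s) with hS
  have hmap : ∀ s ∈ S, v n (s / K) ∈ (Finset.univ : Finset (Fin (n+1))) := by simp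
  rw [Finset.card_eq_sum_card_fiberwise hmap]
  have key : ∀ q : Fin (n+1), S.filter (fun s => v n (s / K) = q) =
      ((Finset.range (K-1)).filter (fun r => ext q (p (r+1)) = Equiv.swap i j * ext q (p r))).image
        (fun r => (q:ℕ) * K + r) := by
    intro q
    have hvq : v n (q:ℕ) = q := Fin.ext (v_val (by omega))
    ext s
    simp only [hS, Finset.mem_filter, Finset.mem_image, Finset.mem_range]
    constructor
    · rintro ⟨⟨h1, h2⟩, h3⟩
      obtain ⟨q', r, hq', hr, rfl⟩ := decomp (n := n) K s hK (by omega)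
      have hd : (q' * K + r) / K = q' := by
        rw [mul_comm, Nat.mul_add_div (by omega), Nat.div_eq_of_lt hr]; rfl
      rw [hd] at h3
      have h4 : q' = q := by rw [← h3, v_val hq']
      refine ⟨r, ?_, by rw [h4]⟩
      by_cases h : r + 1 < K
      · rw [add_assoc, F_mk hn K p _ _ h, F_mk hn K p _ _ hr, ← mul_assoc, h3] at h2
        exact ⟨by omega, mul_right_cancel h2⟩
      · exfalso
        have : r = K - 1 := by omega
        subst this
        have hqn : q' < n := by
          rcases hq'.lt_or_eq with h | h
          · exact h
          · subst h; rw [add_mul] at h1; omega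
        rw [F_cross hn K hK p hp0 hpK] at h2
        refine swap_ne_adj (a := v n q') (b := v n (q'+1)) ?_ hw (mul_right_cancel h2).symm
        rw [v_val hq', v_val (by omega)]
    · rintro ⟨r, ⟨h1, h2⟩, rfl⟩
      have hd : ((q:ℕ) * K + r) / K = q := by
        rw [mul_comm, Nat.mul_add_div (by omega), Nat.div_eq_of_lt (by omega)]; rfl
      refine ⟨⟨?_, ?_⟩, by rw [hd, hvq]⟩
      · have : (q:ℕ) * K ≤ n * K := Nat.mul_le_mul_right _ (by omega)
        rw [add_mul]; omega
      · rw [add_assoc, F_mk hn K p _ (r+1) (by omega), F_mk hn K p _ r (by omega), hvq, h2, mul_assoc]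
  have val : ∀ q : Fin (n+1), (S.filter (fun s => v n (s / K) = q)).card =
      if q ∈ (Finset.univ : Finset (Fin (n+1))) \ {i, j} then m else 0 := by
    intro q
    rw [key, Finset.card_image_of_injective _ (fun a b h => by simpa using h)]
    split_ifs with hq
    · simp only [Finset.mem_sdiff, Finset.mem_univ, Finset.mem_insert, Finset.mem_singleton,
        true_and, not_or] at hq
      obtain ⟨i', hi'⟩ := emb_surj q i (Ne.symm hq.1)
      obtain ⟨j', hj'⟩ := emb_surj q j (Ne.symm hq.2)
      have hij' : i' ≠ j' := by rintro rfl; exact hij (hi'.symm.trans hj')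
      rw [← hc i' j' hij' ?_]
      · congr 1
        apply Finset.filter_congr
        intro r _
        rw [← hi', ← hj', ← ext_swap, ← map_mul]
        exact (ext_inj q).eq_iff
      · intro h
        obtain ⟨a, b, hab, e⟩ := t_adj hn (q:ℕ)
        have hvq : v n (q:ℕ) = q := Fin.ext (v_val (by omega))
        refine swap_ne_adj hab hw ?_
        rw [← e, t, ← ext_swap, ← h, ext_swap, hvq, hi', hj']
    · rw [Finset.card_eq_zero, Finset.filter_eq_empty_iff]
      intro r _ h
      have h0 := congrArg (fun e : Equiv.Perm (Fin (n+1)) => e q) h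
      simp only [Equiv.Perm.mul_apply, ext_self] at h0
      simp only [Finset.mem_sdiff, Finset.mem_univ, Finset.mem_insert, Finset.mem_singleton,
        true_and, not_not] at hq
      rcases hq with rfl | rfl
      · rw [Equiv.swap_apply_left] at h0; exact hij h0
      · rw [Equiv.swap_apply_right] at h0; exact hij h0.symm
  rw [Finset.sum_congr rfl (fun q _ => val q), Finset.sum_ite_mem, Finset.sum_const,
    Finset.univ_inter, Finset.card_sdiff_of_subset (Finset.subset_univ _), Finset.card_pair hij]
  simp

end embed

lemma rev_count {G : Type*} [Group G] [DecidableEq G] (M : ℕ) (f : ℕ → G) (g w : G) (hg : g * g = 1) :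
    ((Finset.range M).filter (fun s => f (M - (s+1)) * w = g * (f (M - s) * w))).card =
    ((Finset.range M).filter (fun s => f (s+1) = g * f s)).card := by
  refine Finset.card_bij (fun s _ => M - (s+1)) ?_ ?_ ?_
  · intro s hs
    simp only [Finset.mem_filter, Finset.mem_range] at hs ⊢
    obtain ⟨h1, h2⟩ := hs
    refine ⟨by omega, ?_⟩
    rw [← mul_assoc] at h2
    rw [mul_right_cancel h2, ← mul_assoc, hg, one_mul]
    congr 1; omega
  · intro a ha b hb h
    simp only [Finset.mem_filter, Finset.mem_range] at ha hb
    omega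
  · intro b hb
    simp only [Finset.mem_filter, Finset.mem_range] at hb
    refine ⟨M - (b+1), ?_, by omega⟩
    simp only [Finset.mem_filter, Finset.mem_range]
    refine ⟨by omega, ?_⟩
    have e1 : M - (M - (b+1) + 1) = b := by omega
    have e2 : M - (M - (b+1)) = b+1 := by omega
    rw [e1, e2, hb.2, ← mul_assoc, ← mul_assoc, hg, one_mul]

end GC

/-- Let `n ≥ 3` be odd. If `S_n` has a balanced cyclic Gray code under all
transpositions from `12⋯(n−1)n` to `12⋯n(n−1)` with closing transposition `(n−1, n)`, then
there exist two almost balanced Gray codes for `S_{n+1}`: a code `L` from the identity word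
`12⋯(n+1)` to `23⋯(n+1)1` (the rotation `finRotate (n+1)`), and a code `R` from `12⋯(n+1)`
to `(n+1)12⋯n` (the inverse rotation), such that every transposition on `[n+1]` is applied
the same number of times in `R` as in `L`. -/
theorem two_almost_balanced_gray_codes (n : ℕ) (hn : 3 ≤ n) (hodd : Odd n)
    (h : ∃ (N : ℕ) (π : Fin (N + 1) → Equiv.Perm (Fin n)),
      IsBalancedCyclicGrayCode n N π ∧
      π 0 = 1 ∧
      π (Fin.last N) = Equiv.swap ⟨n - 2, by omega⟩ ⟨n - 1, by omega⟩ ∧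
      π 0 = Equiv.swap ⟨n - 2, by omega⟩ ⟨n - 1, by omega⟩ * π (Fin.last N)) :
    ∃ (M : ℕ) (L R : Fin (M + 1) → Equiv.Perm (Fin (n + 1))),
      IsAlmostBalancedGrayCodeFromTo (n + 1) M L 1 (finRotate (n + 1)) ∧
      IsAlmostBalancedGrayCodeFromTo (n + 1) M R 1 (finRotate (n + 1))⁻¹ ∧
      (∀ i j : Fin (n + 1), i ≠ j →
        (Finset.univ.filter (fun s : Fin (M + 1) =>
          (s : ℕ) < M ∧ R (s + 1) = Equiv.swap i j * R s)).card
        = (Finset.univ.filter (fun s : Fin (M + 1) =>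
          (s : ℕ) < M ∧ L (s + 1) = Equiv.swap i j * L s)).card) := by
  obtain ⟨N, π, ⟨hN, hbij, hstep, hcount⟩, h0, hlast, hclose⟩ := h
  obtain ⟨M, hM⟩ : ∃ M, M + 1 = Nat.factorial (n+1) :=
    ⟨Nat.factorial (n+1) - 1, Nat.sub_add_cancel (Nat.factorial_pos _)⟩
  have hMK : (n+1) * (N+1) = M + 1 := by rw [hN, hM, Nat.factorial_succ]
  let p : ℕ → Equiv.Perm (Fin n) := fun r => π (Fin.ofNat (N+1) r)
  have hp : ∀ s : Fin (N+1), p s = π s := fun s => by simp [p]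
  have hp' : ∀ r (h : r < N+1), p r = π ⟨r, h⟩ := fun r h => hp ⟨r, h⟩
  have hp0 : p 0 = 1 := by rw [← h0]; exact hp 0
  have hpK : p (N+1-1) = Equiv.swap ⟨n - 2, by omega⟩ ⟨n - 1, by omega⟩ := by
    rw [← hlast]; exact hp (Fin.last N)
  have hsucc : ∀ r, r + 1 < N + 1 → ∀ h : r < N+1, p (r+1) = π (⟨r, h⟩ + 1) := by
    intro r hr h
    rw [← hp, GC.val_add_one _ (by simpa using hr)]
  have hst : ∀ r, r + 1 < N+1 → ∃ i j, i ≠ j ∧ p (r+1) = Equiv.swap i j * p r := by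
    intro r hr
    obtain ⟨i, j, hij, e⟩ := hstep ⟨r, by omega⟩
    exact ⟨i, j, hij, by rw [hsucc r hr (by omega), hp' r (by omega), e]⟩
  have hinj : ∀ r r', r < N+1 → r' < N+1 → p r = p r' → r = r' := by
    intro r r' hr hr' h
    rw [hp' r hr, hp' r' hr'] at h
    simpa using hbij.1 h
  have hlast1 : Fin.last N + 1 = 0 := Fin.last_add_one N
  have hc : ∀ i j : Fin n, i ≠ j →
      Equiv.swap i j ≠ Equiv.swap ⟨n - 2, by omega⟩ ⟨n - 1, by omega⟩ →
      ((Finset.range (N+1-1)).filter (fun r => p (r+1) = Equiv.swap i j * p r)).card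
        = 2 * Nat.factorial (n-2) := by
    intro i j hij hne
    rw [← hcount i j hij, Nat.add_sub_cancel, ← GC.count_fin N p π (fun s => (hp s).symm)]
    congr 1
    apply Finset.filter_congr
    intro s _
    refine ⟨fun h => h.2, fun h => ⟨?_, h⟩⟩
    by_contra hs
    have : s = Fin.last N := by ext; simp; omega
    subst this
    rw [hlast1, hclose] at h
    exact hne (mul_right_cancel h).symm
  let f := GC.F hn (N+1) p
  have f0 : f 0 = 1 := GC.F_zero hn (N+1) (by omega) p hp0
  have fM : f M = (finRotate (n+1))⁻¹ := by
    have := GC.F_last hn hodd (N+1) (by omega) p hpK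
    rwa [hMK, Nat.add_sub_cancel] at this
  have finj : ∀ s s', s < M+1 → s' < M+1 → f s = f s' → s = s' := by
    intro s s' hs hs'
    exact GC.F_inj hn (N+1) (by omega) p hinj s s' (by omega) (by omega)
  have fstep : ∀ s, s < M → ∃ i j, i ≠ j ∧ f (s+1) = Equiv.swap i j * f s := by
    intro s hs
    exact GC.F_step hn (N+1) (by omega) p hp0 hpK hst s (by omega)
  have fcount : ∀ i j : Fin (n+1), i ≠ j → ¬((i : ℕ) + 1 = (j : ℕ) ∨ (j : ℕ) + 1 = (i : ℕ)) →
      ((Finset.range M).filter (fun s => f (s+1) = Equiv.swap i j * f s)).card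
        = 2 * Nat.factorial (n + 1 - 2) := by
    intro i j hij hw
    have := GC.F_count hn (N+1) (by omega) p hp0 hpK _ hc i j hij hw
    rw [hMK, Nat.add_sub_cancel] at this
    rw [this]
    obtain ⟨k, rfl⟩ := Nat.exists_eq_add_of_le hn
    have e1 : 3 + k - 1 = k + 1 + 1 := by omega
    have e2 : 3 + k - 2 = k + 1 := by omega
    have e3 : 3 + k + 1 - 2 = k + 1 + 1 := by omega
    rw [e1, e2, e3, Nat.factorial_succ (k+1)]
    ring
  have card : Fintype.card (Fin (M+1)) = Fintype.card (Equiv.Perm (Fin (n+1))) := by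
    rw [Fintype.card_fin, Fintype.card_perm, Fintype.card_fin, hM]
  let w := finRotate (n+1)
  have hL : ∀ i j : Fin (n+1), ((Finset.univ.filter (fun s : Fin (M + 1) =>
          (s : ℕ) < M ∧ f (M - ((s+1 : Fin (M+1)) : ℕ)) * w = Equiv.swap i j * (f (M - s) * w))).card)
        = ((Finset.range M).filter (fun s => f (s+1) = Equiv.swap i j * f s)).card := by
    intro i j
    rw [← GC.rev_count M f _ w (Equiv.swap_mul_self i j)]
    exact GC.count_fin M (fun s => f (M - s) * w) (fun s => f (M - s) * w) (fun s => rfl) _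
  have hR : ∀ i j : Fin (n+1), ((Finset.univ.filter (fun s : Fin (M + 1) =>
          (s : ℕ) < M ∧ f ((s+1 : Fin (M+1)) : ℕ) = Equiv.swap i j * f s)).card)
        = ((Finset.range M).filter (fun s => f (s+1) = Equiv.swap i j * f s)).card := by
    intro i j
    exact GC.count_fin M f (fun s => f s) (fun s => rfl) _
  refine ⟨M, fun s => f (M - s) * w, fun s => f s, ⟨hM, ?_, ?_, ?_, ?_, ?_⟩,
    ⟨hM, ?_, ?_, ?_, ?_, ?_⟩, ?_⟩
  · refine (Fintype.bijective_iff_injective_and_card _).2 ⟨?_, card⟩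
    intro a b hab
    have := finj _ _ (by omega) (by omega) (mul_right_cancel hab)
    ext; omega
  · simp [fM, w]
  · simp [f0, w]
  · intro s hs
    obtain ⟨i, j, hij, e⟩ := fstep (M - (s+1)) (by omega)
    refine ⟨i, j, hij, ?_⟩
    have e1 : M - ((s:ℕ)+1) + 1 = M - s := by omega
    rw [e1] at e
    dsimp only
    rw [GC.val_add_one s hs, e, ← mul_assoc, ← mul_assoc, Equiv.swap_mul_self, one_mul]
  · intro i j hij hw
    rw [← fcount i j hij hw]
    exact hL i j
  · refine (Fintype.bijective_iff_injective_and_card _).2 ⟨?_, card⟩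
    intro a b hab
    exact Fin.ext (finj _ _ a.isLt b.isLt hab)
  · exact f0
  · exact fM
  · intro s hs
    obtain ⟨i, j, hij, e⟩ := fstep s hs
    refine ⟨i, j, hij, ?_⟩
    dsimp only
    rw [GC.val_add_one s hs, e]
  · intro i j hij hw
    rw [← fcount i j hij hw]
    exact hR i j
  · intro i j hij
    exact (hR i j).trans (hL i j).symm
end

section
/- Let n ≥ 3 be odd. Then there exist a balanced cyclic Gray code G for S_n under all transpositions from the word 12⋯(n−1)n to the word 12⋯n(n−1) with closing transposition (n−1, n), and a (non-cyclic) Gray code H for S_n from the word 23⋯(n−1)1n to the word n12⋯(n−1), such that every transposition on [n] is applied the same number of times in H as in G (not counting the closing transposition of G). -/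
section GrayAux

open Equiv

/-- Vertices visited by a walk, excluding the final one. -/
def gcU : Perm ℕ → List (Perm ℕ) → List (Perm ℕ)
  | _, [] => []
  | g, t :: L => g :: gcU (t * g) L

/-- Product of the steps of a walk. -/
def gcE : List (Perm ℕ) → Perm ℕ
  | [] => 1
  | t :: L => gcE L * t

/-- Transpositions of elements of `S`. -/
def gcTr (S : Finset ℕ) (t : Perm ℕ) : Prop :=
  ∃ x ∈ S, ∃ y ∈ S, x ≠ y ∧ t = swap x y

open scoped Classical in
/-- Number of times `t` is used. -/
noncomputable def gcC (L : List (Perm ℕ)) (t : Perm ℕ) : ℕ := L.count t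

open scoped Classical in
/-- Indicator of equality. -/
noncomputable def gcI (s t : Perm ℕ) : ℕ := if s = t then 1 else 0

lemma gcI_self (t : Perm ℕ) : gcI t t = 1 := by simp [gcI]
lemma gcI_ne {s t : Perm ℕ} (h : s ≠ t) : gcI s t = 0 := by simp [gcI, h]

lemma gcC_append (L M : List (Perm ℕ)) (t : Perm ℕ) : gcC (L ++ M) t = gcC L t + gcC M t := by
  simp [gcC]
lemma gcC_nil (t : Perm ℕ) : gcC [] t = 0 := by simp [gcC]
lemma gcC_reverse (L : List (Perm ℕ)) (t : Perm ℕ) : gcC L.reverse t = gcC L t := by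
  simp [gcC]
lemma gcC_zero {L : List (Perm ℕ)} {t : Perm ℕ} (h : t ∉ L) : gcC L t = 0 := by
  simpa [gcC, List.count_eq_zero] using h

lemma gcC_single (s t : Perm ℕ) : gcC [s] t = gcI s t := by
  classical
  by_cases h : s = t
  · subst h; simp [gcC, gcI]
  · rw [gcI_ne h, gcC_zero]
    simpa using fun e : t = s => h e.symm

/-- Balanced Hamiltonian path of the symmetric group on `S` from `1` to `π`, with
`swap a b` used once less than the balanced amount. -/
def gcR (S : Finset ℕ) (π : Perm ℕ) (a b : ℕ) : Prop :=
  a ∈ S ∧ b ∈ S ∧ a ≠ b ∧ ∃ L : List (Perm ℕ), (∀ t ∈ L, gcTr S t) ∧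
    (gcU 1 (L ++ [1])).Nodup ∧ L.length + 1 = Nat.factorial S.card ∧ gcE L = π ∧
    ∀ t, gcTr S t → gcC L t + gcI (swap a b) t = 2 * Nat.factorial (S.card - 2)

lemma gcU_append (g : Perm ℕ) (L M : List (Perm ℕ)) :
    gcU g (L ++ M) = gcU g L ++ gcU (gcE L * g) M := by
  induction L generalizing g with
  | nil => simp [gcU, gcE]
  | cons t L ih => simp [gcU, gcE, ih, mul_assoc]

lemma gcE_append (L M : List (Perm ℕ)) : gcE (L ++ M) = gcE M * gcE L := by
  induction L with
  | nil => simp [gcE]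
  | cons t L ih => simp [gcE, ih, mul_assoc]

lemma gcU_mul (g h : Perm ℕ) (L : List (Perm ℕ)) :
    gcU (g * h) L = (gcU g L).map (· * h) := by
  induction L generalizing g with
  | nil => simp [gcU]
  | cons t L ih => simp [gcU, ← ih, mul_assoc]

lemma gcU_start (g : Perm ℕ) (L : List (Perm ℕ)) :
    gcU g L = (gcU 1 L).map (· * g) := by
  simpa using gcU_mul 1 g L

lemma gcU_last (g s t : Perm ℕ) (L : List (Perm ℕ)) :
    gcU g (L ++ [s]) = gcU g (L ++ [t]) := by
  simp [gcU_append, gcU]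

lemma gcU_length (g : Perm ℕ) (L : List (Perm ℕ)) : (gcU g L).length = L.length := by
  induction L generalizing g with
  | nil => simp [gcU]
  | cons t L ih => simp [gcU, ih]

/-- Every vertex of a walk agrees with the start on points whose image is fixed by all steps. -/
lemma gcU_fix {L : List (Perm ℕ)} {i : ℕ} (h : ∀ t ∈ L, t i = i) (g : Perm ℕ) (p : ℕ)
    (hg : g p = i) : ∀ v ∈ gcU g L, v p = i := by
  induction L generalizing g with
  | nil => simp [gcU]
  | cons t L ih =>
    intro v hv
    simp only [gcU, List.mem_cons] at hv
    rcases hv with rfl | hv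
    · exact hg
    · refine ih (fun s hs => h s (by simp [hs])) (t * g) ?_ v hv
      simp [hg, h t]

lemma gcE_fix {L : List (Perm ℕ)} {i : ℕ} (h : ∀ t ∈ L, t i = i) : gcE L i = i := by
  induction L with
  | nil => simp [gcE]
  | cons t L ih =>
    have := ih (fun s hs => h s (by simp [hs]))
    simp [gcE, h t, this]

lemma gcTr_fix {S : Finset ℕ} {t : Perm ℕ} (h : gcTr S t) {i : ℕ} (hi : i ∉ S) : t i = i := by
  obtain ⟨x, hx, y, hy, -, rfl⟩ := h
  apply swap_apply_of_ne_of_ne <;> rintro rfl <;> contradiction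

lemma gcTr_mono {S T : Finset ℕ} (h : S ⊆ T) {t : Perm ℕ} (ht : gcTr S t) : gcTr T t := by
  obtain ⟨x, hx, y, hy, hn, rfl⟩ := ht
  exact ⟨x, h hx, y, h hy, hn, rfl⟩

/-! ### Reversal -/

lemma gcE_reverse {L : List (Perm ℕ)} (h : ∀ t ∈ L, t * t = 1) :
    gcE L.reverse = (gcE L)⁻¹ := by
  induction L with
  | nil => simp [gcE]
  | cons t L ih =>
    have h1 := ih (fun s hs => h s (by simp [hs]))
    have h2 : t⁻¹ = t := inv_eq_of_mul_eq_one_left (h t (by simp))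
    simp [gcE, gcE_append, h1, h2]

lemma gcU_reverse {L : List (Perm ℕ)} (h : ∀ t ∈ L, t * t = 1) (g : Perm ℕ) :
    gcU (gcE L * g) (L.reverse ++ [1]) = (gcU g (L ++ [1])).reverse := by
  induction L generalizing g with
  | nil => simp [gcE, gcU]
  | cons t L ih =>
    have h1 := ih (fun s hs => h s (by simp [hs])) (t * g)
    have ht := h t (by simp)
    have hr := gcE_reverse (L := L) (fun s hs => h s (by simp [hs]))
    have e1 : gcE (t :: L) * g = gcE L * (t * g) := by simp [gcE, mul_assoc]
    rw [e1, List.reverse_cons, gcU_append, gcU_last _ _ 1, h1]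
    simp only [List.cons_append, gcU, List.reverse_cons, gcE_append, gcE, hr]
    congr 2
    have : t * (t * g) = g := by rw [← mul_assoc, ht, one_mul]
    simp [mul_assoc, this]

lemma gcTr_sq {S : Finset ℕ} {t : Perm ℕ} (h : gcTr S t) : t * t = 1 := by
  obtain ⟨x, hx, y, hy, -, rfl⟩ := h
  exact swap_mul_self x y

lemma gcR_inv {S : Finset ℕ} {π : Perm ℕ} {a b : ℕ} (h : gcR S π a b) : gcR S π⁻¹ a b := by
  obtain ⟨ha, hb, hab, L, h1, h2, h3, h4, h5⟩ := h
  refine ⟨ha, hb, hab, L.reverse, by simpa using h1, ?_, by simpa using h3, ?_, ?_⟩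
  · have hs : ∀ t ∈ L, t * t = 1 := fun t ht => gcTr_sq (h1 t ht)
    have := gcU_reverse hs 1
    rw [mul_one, gcU_start] at this
    have hn : (List.map (· * gcE L) (gcU 1 (L.reverse ++ [1]))).Nodup := by
      rw [this]; simpa using h2
    exact hn.of_map
  · rw [gcE_reverse (fun t ht => gcTr_sq (h1 t ht)), h4]
  · intro t ht
    rw [gcC_reverse]; exact h5 t ht

/-! ### Conjugation -/

lemma gcE_conj (g : Perm ℕ) (L : List (Perm ℕ)) :
    gcE (L.map (fun t => g * t * g⁻¹)) = g * gcE L * g⁻¹ := by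
  induction L with
  | nil => simp [gcE]
  | cons t L ih =>
    simp only [List.map_cons, gcE]
    rw [ih]; simp [mul_assoc]

lemma gcU_conj (g h : Perm ℕ) (L : List (Perm ℕ)) :
    gcU (g * h * g⁻¹) (L.map (fun t => g * t * g⁻¹)) =
      (gcU h L).map (fun t => g * t * g⁻¹) := by
  induction L generalizing h with
  | nil => simp [gcU]
  | cons t L ih =>
    simp only [List.map_cons, gcU]
    rw [← ih]; simp [mul_assoc]

lemma gc_conj_inj (g : Perm ℕ) : Function.Injective (fun t : Perm ℕ => g * t * g⁻¹) := by
  intro s t h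
  simpa using h

lemma gc_conj_swap (g : Perm ℕ) (a b : ℕ) : g * swap a b * g⁻¹ = swap (g a) (g b) := by
  rw [Equiv.swap_apply_apply]

lemma gcR_conj {S : Finset ℕ} {π : Perm ℕ} {a b : ℕ} (g : Perm ℕ) (h : gcR S π a b) :
    gcR (S.image g) (g * π * g⁻¹) (g a) (g b) := by
  obtain ⟨ha, hb, hab, L, h1, h2, h3, h4, h5⟩ := h
  have hc : (S.image g).card = S.card := Finset.card_image_of_injective _ g.injective
  refine ⟨Finset.mem_image_of_mem _ ha, Finset.mem_image_of_mem _ hb, g.injective.ne hab,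
    L.map (fun t => g * t * g⁻¹), ?_, ?_, by simpa [hc] using h3, by rw [gcE_conj, h4], ?_⟩
  · intro t ht
    obtain ⟨s, hs, rfl⟩ := List.mem_map.1 ht
    obtain ⟨x, hx, y, hy, hn, rfl⟩ := h1 s hs
    exact ⟨g x, Finset.mem_image_of_mem _ hx, g y, Finset.mem_image_of_mem _ hy,
      g.injective.ne hn, gc_conj_swap g x y⟩
  · have := gcU_conj g 1 (L ++ [1])
    simp only [mul_one, mul_inv_cancel, List.map_append, List.map_cons, List.map_nil] at this
    rw [this]
    exact h2.map (gc_conj_inj g)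
  · rintro t ⟨x, hx, y, hy, hn, rfl⟩
    obtain ⟨x, hx', rfl⟩ := Finset.mem_image.1 hx
    obtain ⟨y, hy', rfl⟩ := Finset.mem_image.1 hy
    have h6 := h5 (swap x y) ⟨x, hx', y, hy', fun e => hn (by rw [e]), rfl⟩
    rw [hc, ← h6, ← gc_conj_swap, ← gc_conj_swap]
    congr 1
    · classical
      unfold gcC
      convert List.count_map_of_injective L _ (gc_conj_inj g) (swap x y)
    · by_cases e : swap a b = swap x y
      · rw [e, gcI_self, gcI_self]
      · rw [gcI_ne e, gcI_ne (fun e' => e (gc_conj_inj g e'))]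

/-- An injection on a finite set extends to a permutation. -/
lemma gc_extend (S : Finset ℕ) (f : ℕ → ℕ) (hf : Set.InjOn f S) :
    ∃ g : Perm ℕ, ∀ x ∈ S, g x = f x := by
  have ht := Equiv.Perm.isMultiplyPretransitive ℕ S.card
  let e := S.equivFin.symm
  let u : Fin S.card ↪ ℕ := ⟨fun i => (e i : ℕ), fun i j h => e.injective (Subtype.ext h)⟩
  let v : Fin S.card ↪ ℕ := ⟨fun i => f (e i), fun i j h =>
    e.injective (Subtype.ext (hf (e i).2 (e j).2 h))⟩
  obtain ⟨g, hg⟩ := ht.exists_smul_eq u v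
  refine ⟨g, fun x hx => ?_⟩
  have h1 : g (e (e.symm ⟨x, hx⟩)) = f (e (e.symm ⟨x, hx⟩)) :=
    DFunLike.congr_fun hg (e.symm ⟨x, hx⟩)
  simpa using h1

lemma gcR_fix {S : Finset ℕ} {π : Perm ℕ} {a b : ℕ} (h : gcR S π a b) {i : ℕ} (hi : i ∉ S) :
    π i = i := by
  obtain ⟨ha, hb, hab, L, h1, h2, h3, h4, h5⟩ := h
  rw [← h4]
  exact gcE_fix (fun t ht => gcTr_fix (h1 t ht) hi)

lemma gcR_image {S : Finset ℕ} {π : Perm ℕ} {a b : ℕ} (h : gcR S π a b)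
    {f : ℕ → ℕ} {T : Finset ℕ} {ρ : Perm ℕ} {c d : ℕ}
    (hm : ∀ x ∈ S, f x ∈ T) (hinj : ∀ x ∈ S, ∀ y ∈ S, f x = f y → x = y)
    (hc : T.card = S.card) (hπ : ∀ x ∈ S, ρ (f x) = f (π x)) (hπS : ∀ x ∈ S, π x ∈ S)
    (hT : ∀ x ∉ T, ρ x = x)
    (hcf : f a = c) (hdf : f b = d) : gcR T ρ c d := by
  obtain ⟨g, hg⟩ := gc_extend S f (fun x hx y hy => hinj x hx y hy)
  have hS : S.image g = T := by
    apply Finset.eq_of_subset_of_card_le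
    · intro y hy
      obtain ⟨x, hx, rfl⟩ := Finset.mem_image.1 hy
      rw [hg x hx]; exact hm x hx
    · rw [hc, Finset.card_image_of_injective _ g.injective]
  have h1 := gcR_conj g h
  have e : g * π * g⁻¹ = ρ := by
    rw [mul_inv_eq_iff_eq_mul]
    ext x
    by_cases hx : x ∈ S
    · simp [hg x hx, hπ x hx, hg _ (hπS x hx)]
    · have : g x ∉ T := by
        rw [← hS]; intro hh
        obtain ⟨y, hy, e⟩ := Finset.mem_image.1 hh
        exact hx (g.injective e ▸ hy)
      simp [gcR_fix h hx, hT _ this]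
  rw [hS, e, hg a h.1, hg b h.2.1, hcf, hdf] at h1
  exact h1

/-! ### Gluing blocks -/

lemma gc_glue_aux (n : ℕ) (π : ℕ → Perm ℕ) (Lb : ℕ → List (Perm ℕ)) (Q : ℕ → Perm ℕ)
    (h1 : ∀ i < n + 1, ∀ t ∈ Lb i, gcTr ((Finset.range (n + 1)).erase i) t)
    (h2 : ∀ i < n + 1, (gcU 1 (Lb i ++ [1])).Nodup)
    (h3 : ∀ i < n + 1, (Lb i).length + 1 = Nat.factorial n)
    (h4 : ∀ i < n + 1, gcE (Lb i) = π i)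
    (hQ0 : Q 0 = 1) (hQ : ∀ j < n, Q (j + 1) = swap j (j + 1) * π j * Q j) (j : ℕ)
    (hj : j ≤ n) :
    ∃ W : List (Perm ℕ), (∀ t ∈ W, gcTr (Finset.range (n + 1)) t) ∧ (gcU 1 W).Nodup ∧
      (∀ v ∈ gcU 1 W, v 0 < j) ∧ W.length = j * Nat.factorial n ∧ gcE W = Q j ∧ Q j 0 = j ∧
      ∀ t, gcC W t = ∑ i ∈ Finset.range j, (gcC (Lb i) t + gcI (swap i (i + 1)) t) := by
  induction j with
  | zero =>
    exact ⟨[], by simp, by simp [gcU], by simp [gcU], by simp, by simp [gcE, hQ0],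
      by simp [hQ0], by simp [gcC_nil]⟩
  | succ j ih =>
    obtain ⟨W, w1, w2, w3, w4, w5, w6, w7⟩ := ih (by omega)
    have hfix : ∀ t ∈ Lb j, t j = j := fun t ht =>
      gcTr_fix (h1 j (by omega) t ht) (by simp)
    have hU : gcU (Q j) (Lb j ++ [swap j (j + 1)]) =
        (gcU 1 (Lb j ++ [1])).map (· * Q j) := by
      rw [gcU_last _ _ 1, gcU_start]
    have hval : ∀ v ∈ gcU (Q j) (Lb j ++ [swap j (j + 1)]), v 0 = j := by
      rw [gcU_last _ _ 1]
      apply gcU_fix _ _ _ w6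
      intro t ht
      simp only [List.mem_append, List.mem_singleton] at ht
      rcases ht with ht | rfl
      · exact hfix t ht
      · simp
    refine ⟨W ++ (Lb j ++ [swap j (j + 1)]), ?_, ?_, ?_, ?_, ?_, ?_, ?_⟩
    · intro t ht
      simp only [List.mem_append, List.mem_singleton] at ht
      rcases ht with ht | ht | rfl
      · exact w1 t ht
      · exact gcTr_mono (Finset.erase_subset _ _) (h1 j (by omega) t ht)
      · exact ⟨j, by simp; omega, j + 1, by simp; omega, by omega, rfl⟩
    · rw [gcU_append, mul_one, w5, List.nodup_append']
      refine ⟨w2, ?_, ?_⟩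
      · rw [hU]; exact (h2 j (by omega)).map (mul_left_injective _)
      · intro v hv hv'
        have := w3 v hv
        have := hval v hv'
        omega
    · rw [gcU_append, mul_one, w5]
      intro v hv
      rcases List.mem_append.1 hv with hv | hv
      · have := w3 v hv
        omega
      · have := hval v hv
        omega
    · have := h3 j (by omega)
      simp only [List.length_append, List.length_singleton, w4, this]
      ring
    · rw [gcE_append, gcE_append, w5, h4 j (by omega), hQ j (by omega)]
      simp [gcE]
    · have : π j j = j := by
        rw [← h4 j (by omega)]; exact gcE_fix hfix
      rw [hQ j (by omega)]
      simp [w6, this]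
    · intro t
      rw [gcC_append, gcC_append, gcC_single, w7, Finset.sum_range_succ]

lemma gc_glue (n : ℕ) (hn : 2 ≤ n) (π : ℕ → Perm ℕ) (a b : ℕ → ℕ) (Q : ℕ → Perm ℕ)
    (x y : ℕ)
    (hR : ∀ i < n + 1, gcR ((Finset.range (n + 1)).erase i) (π i) (a i) (b i))
    (hQ0 : Q 0 = 1) (hQ : ∀ j < n, Q (j + 1) = swap j (j + 1) * π j * Q j)
    (hx : x < n + 1) (hy : y < n + 1) (hxy : x ≠ y)
    (hcount : ∀ t, ∑ i ∈ Finset.range (n + 1), gcI (swap (a i) (b i)) t =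
      ∑ i ∈ Finset.range n, gcI (swap i (i + 1)) t + gcI (swap x y) t) :
    gcR (Finset.range (n + 1)) (π n * Q n) x y := by
  have hcard : ∀ i < n + 1, ((Finset.range (n + 1)).erase i).card = n := by
    intro i hi
    rw [Finset.card_erase_of_mem (by simpa using hi)]; simp
  have hL : ∀ i, ∃ L : List (Perm ℕ), i < n + 1 →
      (∀ t ∈ L, gcTr ((Finset.range (n + 1)).erase i) t) ∧
      (gcU 1 (L ++ [1])).Nodup ∧ L.length + 1 = Nat.factorial n ∧ gcE L = π i ∧
      ∀ t, gcTr ((Finset.range (n + 1)).erase i) t →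
        gcC L t + gcI (swap (a i) (b i)) t = 2 * Nat.factorial (n - 2) := by
    intro i
    by_cases hi : i < n + 1
    · obtain ⟨-, -, -, L, h⟩ := hR i hi
      rw [hcard i hi] at h
      exact ⟨L, fun _ => h⟩
    · exact ⟨[], fun h => absurd h hi⟩
  choose Lb hLb using hL
  obtain ⟨W, w1, w2, w3, w4, w5, w6, w7⟩ := gc_glue_aux n π Lb Q (fun i hi => (hLb i hi).1)
    (fun i hi => (hLb i hi).2.1) (fun i hi => (hLb i hi).2.2.1)
    (fun i hi => (hLb i hi).2.2.2.1) hQ0 hQ n le_rfl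
  obtain ⟨l1, l2, l3, l4, l5⟩ := hLb n (by omega)
  have hfix : ∀ t ∈ Lb n, t n = n := fun t ht => gcTr_fix (l1 t ht) (by simp)
  refine ⟨by simpa using hx, by simpa using hy, hxy, W ++ Lb n, ?_, ?_, ?_, ?_, ?_⟩
  · intro t ht
    rcases List.mem_append.1 ht with ht | ht
    · exact w1 t ht
    · exact gcTr_mono (Finset.erase_subset _ _) (l1 t ht)
  · rw [List.append_assoc, gcU_append, mul_one, w5, List.nodup_append']
    refine ⟨w2, ?_, ?_⟩
    · rw [gcU_start]; exact l2.map (mul_left_injective _)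
    · intro v hv hv'
      have h := w3 v hv
      have := gcU_fix (L := Lb n ++ [1]) (i := n) (by
        intro t ht
        simp only [List.mem_append, List.mem_singleton] at ht
        rcases ht with ht | rfl
        · exact hfix t ht
        · simp) (Q n) 0 w6 v hv'
      omega
  · rw [List.length_append, w4, add_assoc, l3, Finset.card_range, Nat.factorial_succ]
    ring
  · rw [gcE_append, l4, w5]
  · rintro t ⟨p, hp, q, hq, hpq, rfl⟩
    rw [Finset.mem_range] at hp hq
    rw [gcC_append, w7, Finset.sum_add_distrib]
    have e1 := hcount (swap p q)
    have e2 : ∑ i ∈ Finset.range (n + 1),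
        (gcC (Lb i) (swap p q) + gcI (swap (a i) (b i)) (swap p q)) =
        ∑ i ∈ Finset.range (n + 1), if i ∈ ({p, q} : Finset ℕ) then 0 else
          2 * Nat.factorial (n - 2) := by
      apply Finset.sum_congr rfl
      intro i hi
      have hi' : i < n + 1 := by simpa using hi
      obtain ⟨k1, k2, k3, k4, k5⟩ := hLb i hi'
      split_ifs with h
      · have hm : swap p q i ≠ i := by
          simp only [Finset.mem_insert, Finset.mem_singleton] at h
          rcases h with rfl | rfl
          · simpa using hpq.symm
          · simpa using hpq
        have hni : i ∉ (Finset.range (n + 1)).erase i := by simp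
        rw [gcC_zero, gcI_ne]
        · intro e
          apply hm
          rw [← e]
          obtain ⟨ra, rb, rab, -⟩ := hR i hi'
          exact gcTr_fix ⟨a i, ra, b i, rb, rab, rfl⟩ hni
        · intro hh
          exact hm (gcTr_fix (k1 _ hh) hni)
      · simp only [Finset.mem_insert, Finset.mem_singleton, not_or] at h
        apply k5
        refine ⟨p, ?_, q, ?_, hpq, rfl⟩
        · simp; omega
        · simp; omega
    have e3 : ∑ i ∈ Finset.range (n + 1), (if i ∈ ({p, q} : Finset ℕ) then 0 else
          2 * Nat.factorial (n - 2)) = 2 * Nat.factorial (n - 1) := by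
      rw [Finset.sum_ite, Finset.sum_const_zero, zero_add]
      have : (Finset.range (n + 1)).filter (fun i => i ∉ ({p, q} : Finset ℕ)) =
          (Finset.range (n + 1)) \ {p, q} := by
        ext; simp
      rw [this, Finset.sum_const, Finset.card_sdiff_of_subset, Finset.card_pair hpq,
        Finset.card_range]
      · obtain ⟨k, rfl⟩ : ∃ k, n = k + 2 := ⟨n - 2, by omega⟩
        have e1 : k + 2 + 1 - 2 = k + 1 := by omega
        have e2 : k + 2 - 2 = k := by omega
        have e3 : k + 2 - 1 = k + 1 := by omega
        rw [e1, e2, e3, Nat.factorial_succ, smul_eq_mul]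
        ring
      · intro i hi
        simp only [Finset.mem_insert, Finset.mem_singleton] at hi
        simp only [Finset.mem_range]
        omega
    rw [e3, Finset.sum_add_distrib, e1, Finset.sum_range_succ] at e2
    rw [Finset.card_range]
    have : n + 1 - 2 = n - 1 := by omega
    rw [this]
    omega

/-! ### Canonical permutations -/

/-- The cycle `0 → 1 → ⋯ → m-1 → 0`. -/
def gcRho (m : ℕ) : Perm ℕ where
  toFun x := if x + 1 < m then x + 1 else if x + 1 = m then 0 else x
  invFun x := if m ≤ x then x else if x = 0 then m - 1 else x - 1
  left_inv x := by grind
  right_inv x := by grind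

lemma gcRho_apply (m x : ℕ) :
    gcRho m x = if x + 1 < m then x + 1 else if x + 1 = m then 0 else x := rfl

lemma gcRho_inv_apply (m x : ℕ) :
    (gcRho m)⁻¹ x = if m ≤ x then x else if x = 0 then m - 1 else x - 1 := rfl

lemma gcRho_pow (m j x : ℕ) (hj : j ≤ m) :
    (gcRho m ^ j) x = if m ≤ x then x else if x + j < m then x + j else x + j - m := by
  induction j with
  | zero => simp; grind
  | succ j ih =>
    rw [pow_succ', Perm.mul_apply, ih (by omega), gcRho_apply]
    grind

lemma gcRho_pow_self (m : ℕ) : gcRho m ^ m = 1 := by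
  ext x
  rw [gcRho_pow m m x le_rfl]
  simp

def gcK (n : ℕ) : Prop := gcR (Finset.range n) (gcRho n) 0 1
def gcG (n : ℕ) : Prop := gcR (Finset.range n) (swap (n - 1) 0) (n - 1) 0
def gcH (n : ℕ) : Prop :=
  gcR (Finset.range n) ((gcRho n)⁻¹ * (gcRho n)⁻¹ * swap 0 1) (n - 1) 0

/-- Cyclic shift `i + k` modulo `m`. -/
def gcA (m i k : ℕ) : ℕ := if i + k < m then i + k else i + k - m

lemma gcR_symm {S : Finset ℕ} {π : Perm ℕ} {a b : ℕ} (h : gcR S π a b) : gcR S π b a := by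
  obtain ⟨ha, hb, hab, h⟩ := h
  rw [swap_comm] at h
  exact ⟨hb, ha, hab.symm, h⟩

lemma gcR_preimage {T : Finset ℕ} {P : Perm ℕ} {c d : ℕ} (h : gcR T P c d)
    {g : ℕ → ℕ} {S : Finset ℕ} {ρ : Perm ℕ} {a b : ℕ}
    (hm : ∀ x ∈ S, g x ∈ T) (hinj : ∀ x ∈ S, ∀ y ∈ S, g x = g y → x = y)
    (hc : T.card = S.card) (hρ : ∀ x ∈ S, P (g x) = g (ρ x)) (hρS : ∀ x ∈ S, ρ x ∈ S)
    (hS : ∀ x ∉ S, ρ x = x) (ha : a ∈ S) (hb : b ∈ S)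
    (hac : g a = c) (hbd : g b = d) : gcR S ρ a b := by
  obtain ⟨f, hf⟩ := gc_extend S g (fun x hx y hy => hinj x hx y hy)
  have hT : S.image f = T := by
    apply Finset.eq_of_subset_of_card_le
    · intro y hy
      obtain ⟨x, hx, rfl⟩ := Finset.mem_image.1 hy
      rw [hf x hx]; exact hm x hx
    · rw [hc, Finset.card_image_of_injective _ f.injective]
  refine gcR_image (f := ⇑f.symm) h ?_ ?_ hc.symm ?_ ?_ hS ?_ ?_
  · intro x hx
    rw [← hT] at hx
    obtain ⟨y, hy, rfl⟩ := Finset.mem_image.1 hx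
    simpa using hy
  · intro x _ y _ e
    exact f.symm.injective e
  · intro x hx
    rw [← hT] at hx
    obtain ⟨y, hy, rfl⟩ := Finset.mem_image.1 hx
    rw [Equiv.symm_apply_apply, hf y hy, hρ y hy, ← hf _ (hρS y hy), Equiv.symm_apply_apply]
  · intro x hx
    rw [← hT] at hx
    obtain ⟨y, hy, rfl⟩ := Finset.mem_image.1 hx
    rw [hf y hy, hρ y hy]
    exact hm _ (hρS y hy)
  · rw [← hac, ← hf a ha, Equiv.symm_apply_apply]
  · rw [← hbd, ← hf b hb, Equiv.symm_apply_apply]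

lemma gc_card_erase (n i : ℕ) (hi : i < n + 1) :
    ((Finset.range (n + 1)).erase i).card = (Finset.range n).card := by
  rw [Finset.card_erase_of_mem (by simpa using hi)]; simp

lemma gc_count (n : ℕ) (hn : 1 ≤ n) (t : Perm ℕ) :
    ∑ i ∈ Finset.range (n + 1), gcI (swap (gcA (n + 1) i 1) (gcA (n + 1) i 2)) t =
      ∑ i ∈ Finset.range n, gcI (swap i (i + 1)) t + gcI (swap n 0) t := by
  obtain ⟨p, rfl⟩ : ∃ p, n = p + 1 := ⟨n - 1, by omega⟩
  rw [Finset.sum_range_succ, Finset.sum_range_succ, Finset.sum_range_succ' _ p]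
  have h1 : gcA (p + 1 + 1) (p + 1) 1 = 0 := by simp [gcA]
  have h2 : gcA (p + 1 + 1) (p + 1) 2 = 1 := by grind [gcA]
  have h3 : gcA (p + 1 + 1) p 1 = p + 1 := by simp [gcA]
  have h4 : gcA (p + 1 + 1) p 2 = 0 := by simp [gcA]
  have h5 : ∑ i ∈ Finset.range p, gcI (swap (gcA (p + 1 + 1) i 1) (gcA (p + 1 + 1) i 2)) t =
      ∑ i ∈ Finset.range p, gcI (swap (i + 1) (i + 1 + 1)) t := by
    apply Finset.sum_congr rfl
    intro i hi
    rw [Finset.mem_range] at hi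
    have e1 : gcA (p + 1 + 1) i 1 = i + 1 := by grind [gcA]
    have e2 : gcA (p + 1 + 1) i 2 = i + 1 + 1 := by grind [gcA]
    rw [e1, e2]
  rw [h1, h2, h3, h4, h5]
  simp only [zero_add]
  omega

lemma gc_blockK (n : ℕ) (hn : 2 ≤ n) (hK : gcK n) (i : ℕ) (hi : i < n + 1) :
    gcR ((Finset.range (n + 1)).erase i) (swap i (gcA (n + 1) i 1) * gcRho (n + 1))
      (gcA (n + 1) i 1) (gcA (n + 1) i 2) := by
  refine gcR_image (f := fun x => gcA (n + 1) i (x + 1)) hK ?_ ?_ (gc_card_erase n i hi)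
    ?_ ?_ ?_ rfl rfl
  · intro x hx
    simp only [Finset.mem_range, Finset.mem_erase, gcA] at hx ⊢
    grind
  · intro x hx y hy
    simp only [Finset.mem_range, gcA] at hx hy ⊢
    grind
  · intro x hx
    simp only [Finset.mem_range] at hx
    simp only [Perm.mul_apply, gcRho_apply, gcA, swap_apply_def]
    grind
  · intro x hx
    simp only [Finset.mem_range, gcRho_apply] at hx ⊢
    grind
  · intro x hx
    simp only [Finset.mem_range, Finset.mem_erase] at hx
    simp only [Perm.mul_apply, gcRho_apply, gcA, swap_apply_def]
    grind

lemma gcA_one (n i : ℕ) (hi : i < n) : gcA (n + 1) i 1 = i + 1 := by grind [gcA]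
lemma gcA_last (n : ℕ) : gcA (n + 1) n 1 = 0 := by grind [gcA]

theorem gc_G_of_K (n : ℕ) (hn : 2 ≤ n) (hK : gcK n) : gcG (n + 1) := by
  have h := gc_glue n hn (fun i => swap i (gcA (n + 1) i 1) * gcRho (n + 1))
    (fun i => gcA (n + 1) i 1) (fun i => gcA (n + 1) i 2) (fun j => gcRho (n + 1) ^ j) n 0
    (gc_blockK n hn hK) (by simp) (by
      intro j hj
      simp only [gcA_one n j hj]
      rw [← mul_assoc, swap_mul_self, one_mul, pow_succ'])
    (by omega) (by omega) (by omega) (gc_count n (by omega))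
  simp only [gcA_last] at h
  rw [mul_assoc, ← pow_succ', gcRho_pow_self, mul_one] at h
  exact h

theorem gc_H_of_K (n : ℕ) (hn : 2 ≤ n) (hK : gcK n) : gcH (n + 1) := by
  have hi : (swap 0 1 * gcRho (n + 1))⁻¹ = (gcRho (n + 1))⁻¹ * swap 0 1 := by simp
  have h := gc_glue n hn (fun i => if i = 0 then (gcRho (n + 1))⁻¹ * swap 0 1 else
      swap i (gcA (n + 1) i 1) * gcRho (n + 1))
    (fun i => gcA (n + 1) i 1) (fun i => gcA (n + 1) i 2)
    (fun j => if j = 0 then 1 else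
      gcRho (n + 1) ^ j * (gcRho (n + 1))⁻¹ * swap 0 1 * (gcRho (n + 1))⁻¹ * swap 0 1) n 0
    (by
      intro i hi'
      have hb := gc_blockK n hn hK i hi'
      by_cases h0 : i = 0
      · subst h0
        have := gcR_inv hb
        rw [gcA_one n 0 (by omega), zero_add, hi] at this
        simpa [gcA_one n 0 (show 0 < n by omega)] using this
      · simpa [h0] using hb) (by simp) (by
      intro j hj
      simp only [gcA_one n j hj]
      by_cases h0 : j = 0
      · subst h0
        simp [mul_assoc]
      · simp only [h0, if_false, Nat.add_eq_zero_iff, one_ne_zero, and_false]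
        rw [← mul_assoc (swap j (j + 1)), swap_mul_self, one_mul, pow_succ']
        simp only [mul_assoc])
    (by omega) (by omega) (by omega) (gc_count n (by omega))
  have hn0 : n ≠ 0 := by omega
  simp only [gcA_last, hn0, if_false] at h
  have e : swap n 0 * gcRho (n + 1) *
      (gcRho (n + 1) ^ n * (gcRho (n + 1))⁻¹ * swap 0 1 * (gcRho (n + 1))⁻¹ * swap 0 1) =
      (gcRho (n + 1))⁻¹ * (gcRho (n + 1))⁻¹ * swap 0 1 := by
    have e1 : gcRho (n + 1) * gcRho (n + 1) ^ n = 1 := by rw [← pow_succ', gcRho_pow_self]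
    have e2 : (gcRho (n + 1))⁻¹ * swap 0 1 * gcRho (n + 1) = swap n 0 := by
      have := gc_conj_swap (gcRho (n + 1))⁻¹ 0 1
      rw [inv_inv] at this
      rw [this]
      simp [gcRho_inv_apply]
      grind
    calc _ = swap n 0 * (gcRho (n + 1) * gcRho (n + 1) ^ n) * (gcRho (n + 1))⁻¹ * swap 0 1 *
            (gcRho (n + 1))⁻¹ * swap 0 1 := by simp only [mul_assoc]
      _ = _ := by
        rw [e1, ← e2]
        simp [mul_assoc]
  rw [e] at h
  exact h

/-! ### From odd to even -/

lemma gc_blockG (n : ℕ) (hn : 2 ≤ n) (hG : gcG n) (i : ℕ) (hi : i < n + 1) :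
    gcR ((Finset.range (n + 1)).erase i) (swap (gcA (n + 1) i 1) (gcA (n + 1) i 2))
      (gcA (n + 1) i 1) (gcA (n + 1) i 2) := by
  refine gcR_image (f := fun x => gcA (n + 1) i (if x = n - 1 then 1 else x + 2)) hG ?_ ?_
    (gc_card_erase n i hi) ?_ ?_ ?_ ?_ ?_
  · intro x hx
    simp only [Finset.mem_range, Finset.mem_erase, gcA] at hx ⊢
    grind
  · intro x hx y hy
    simp only [Finset.mem_range, gcA] at hx hy ⊢
    grind
  · intro x hx
    simp only [Finset.mem_range] at hx
    simp only [gcA, swap_apply_def]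
    grind
  · intro x hx
    simp only [Finset.mem_range, swap_apply_def] at hx ⊢
    grind
  · intro x hx
    simp only [Finset.mem_range, Finset.mem_erase] at hx
    simp only [gcA, swap_apply_def]
    grind
  · simp
  · have : 0 ≠ n - 1 := by omega
    simp [this]

/-- The permutation used in the first block, as a function. -/
def gcPf (k x : ℕ) : ℕ := if x = 0 then 0 else if x = 1 then 3 else if x = 2 then 1 else
    if x ≤ k then x + 1 else if x = k + 1 then 2 else if x ≤ 2 * k then x + 1 else
    if x = 2 * k + 1 then k + 2 else x

/-- Its inverse. -/
def gcPg (k x : ℕ) : ℕ := if x = 0 then 0 else if x = 3 then 1 else if x = 1 then 2 else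
    if x = 2 then k + 1 else if x ≤ k + 1 then x - 1 else if x = k + 2 then 2 * k + 1 else
    if x ≤ 2 * k + 1 then x - 1 else x

set_option maxHeartbeats 4000000 in
/-- The permutation used in the first block. -/
def gcPi (k : ℕ) (hk : 2 ≤ k) : Perm ℕ where
  toFun := gcPf k
  invFun := gcPg k
  left_inv x := by
    generalize hy : gcPf k x = y
    generalize hz : gcPg k y = z
    unfold gcPf at hy
    unfold gcPg at hz
    split_ifs at hy <;> (split_ifs at hz <;> omega)
  right_inv x := by
    generalize hy : gcPg k x = y
    generalize hz : gcPf k y = z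
    unfold gcPg at hy
    unfold gcPf at hz
    split_ifs at hy <;> (split_ifs at hz <;> omega)

lemma gcPi_apply (k : ℕ) (hk : 2 ≤ k) (x : ℕ) : gcPi k hk x =
    if x = 0 then 0 else if x = 1 then 3 else if x = 2 then 1 else
    if x ≤ k then x + 1 else if x = k + 1 then 2 else if x ≤ 2 * k then x + 1 else
    if x = 2 * k + 1 then k + 2 else x := rfl

lemma gcHp_apply (n x : ℕ) (hn : 3 ≤ n) :
    ((gcRho n)⁻¹ * (gcRho n)⁻¹ * swap 0 1 : Perm ℕ) x =
      if x = 0 then n - 1 else if x = 1 then n - 2 else if x < n then x - 2 else x := by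
  simp only [Perm.mul_apply, gcRho_inv_apply, swap_apply_def]
  grind

set_option maxHeartbeats 4000000 in
lemma gc_blockH (k : ℕ) (hk : 2 ≤ k) (hH : gcH (2 * k + 1)) :
    gcR ((Finset.range (2 * k + 1 + 1)).erase 0) (gcPi k hk) 1 2 := by
  have hp := fun x => gcHp_apply (2 * k + 1) x (by omega)
  unfold gcH at hH
  generalize (gcRho (2 * k + 1))⁻¹ * (gcRho (2 * k + 1))⁻¹ * swap 0 1 = h at hH hp
  refine gcR_image (f := fun x => if x = 0 then 2 else if x = 2 * k then 1 else
      if x = 1 then k + 2 else if x % 2 = 0 then k + 2 - x / 2 else 2 * k + 2 - x / 2) hH ?_ ?_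
    (gc_card_erase (2 * k + 1) 0 (by omega)) ?_ ?_ ?_ ?_ ?_
  · intro x hx
    simp only [Finset.mem_range, Finset.mem_erase] at hx ⊢
    split_ifs <;> omega
  · intro x hx y hy
    simp only [Finset.mem_range] at hx hy ⊢
    split_ifs <;> omega
  · intro x hx
    simp only [Finset.mem_range] at hx
    rw [hp x]
    generalize hy : (if x = 0 then 2 else if x = 2 * k then 1 else
      if x = 1 then k + 2 else if x % 2 = 0 then k + 2 - x / 2 else 2 * k + 2 - x / 2) = y
    rw [gcPi_apply]
    generalize hz : (if x = 0 then 2 * k + 1 - 1 else if x = 1 then 2 * k + 1 - 2 else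
      if x < 2 * k + 1 then x - 2 else x) = z
    split_ifs at hy <;> split_ifs at hz <;> split_ifs <;> omega
  · intro x hx
    rw [hp x]
    simp only [Finset.mem_range] at hx ⊢
    grind
  · intro x hx
    simp only [Finset.mem_range, Finset.mem_erase] at hx
    rw [gcPi_apply]
    grind
  · grind
  · grind

/-- The rotation fixing `0` and `1`. -/
noncomputable def gcCyc (m : ℕ) : Perm ℕ := (gcRho m)⁻¹ * (swap 0 1 * swap 1 2)

lemma gcCyc_apply (m x : ℕ) (hm : 4 ≤ m) : gcCyc m x =
    if x ≤ 1 then x else if x = 2 then m - 1 else if x < m then x - 1 else x := by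
  simp only [gcCyc, Perm.mul_apply, gcRho_inv_apply, swap_apply_def]
  grind

lemma gcCyc_pow (m j x : ℕ) (hm : 4 ≤ m) (hj : j ≤ m - 2) : (gcCyc m ^ j) x =
    if x ≤ 1 then x else if m ≤ x then x else if j + 2 ≤ x then x - j else x + (m - 2) - j := by
  induction j with
  | zero => simp; grind
  | succ j ih =>
    rw [pow_succ', Perm.mul_apply, ih (by omega), gcCyc_apply m _ hm]
    grind

lemma gcCyc_pow_self (m : ℕ) (hm : 4 ≤ m) : gcCyc m ^ m = gcCyc m * gcCyc m := by
  have h1 : gcCyc m ^ (m - 2) = 1 := by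
    ext x
    rw [gcCyc_pow m _ x hm le_rfl]
    simp; grind
  have h2 : m = (m - 2) + 2 := by omega
  conv_lhs => rw [h2]
  rw [pow_add, ← h2, h1, one_mul, pow_two]

lemma gc_u (n j : ℕ) (hn : 3 ≤ n) (hj : j < n + 1) :
    swap j (gcA (n + 1) j 1) * swap (gcA (n + 1) j 1) (gcA (n + 1) j 2) * gcRho (n + 1) ^ j =
      gcRho (n + 1) ^ (j + 1) * gcCyc (n + 1) := by
  have e : ∀ x, x < n + 1 → (gcRho (n + 1) ^ j) x = gcA (n + 1) j x := by
    intro x hx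
    rw [gcRho_pow _ _ _ hj.le]
    grind [gcA]
  have h0 : gcA (n + 1) j 0 = j := by grind [gcA]
  have e1 := gc_conj_swap (gcRho (n + 1) ^ j) 0 1
  have e2 := gc_conj_swap (gcRho (n + 1) ^ j) 1 2
  rw [e 0 (by omega), e 1 (by omega), h0] at e1
  rw [e 1 (by omega), e 2 (by omega)] at e2
  rw [← e1, ← e2, gcCyc, pow_succ]
  simp [mul_assoc]

set_option maxHeartbeats 4000000 in
theorem gc_K_of_GH (k : ℕ) (hk : 2 ≤ k) (hG : gcG (2 * k + 1)) (hH : gcH (2 * k + 1)) :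
    gcK (2 * k + 2) := by
  obtain ⟨n, hn⟩ : ∃ n, n = 2 * k + 1 := ⟨_, rfl⟩
  have hB := gc_blockH k hk hH
  rw [← hn] at hG hB
  have hA1 : gcA (n + 1) 0 1 = 1 := by grind [gcA]
  have hA2 : gcA (n + 1) 0 2 = 2 := by grind [gcA]
  have h := gc_glue n (by omega) (fun i => if i = 0 then gcPi k hk else
      swap (gcA (n + 1) i 1) (gcA (n + 1) i 2))
    (fun i => gcA (n + 1) i 1) (fun i => gcA (n + 1) i 2)
    (fun j => if j = 0 then 1 else
      gcRho (n + 1) ^ j * gcCyc (n + 1) ^ j * swap 1 2 * gcPi k hk) n 0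
    (by
      intro i hi'
      by_cases h0 : i = 0
      · subst h0
        simpa [hA1, hA2] using hB
      · simpa [h0] using gc_blockG n (by omega) hG i hi') (by simp) (by
      intro j hj
      have hu := gc_u n j (by omega) (by omega)
      rw [gcA_one n j hj] at hu
      by_cases h0 : j = 0
      · subst h0
        rw [hA2] at hu
        simp only [pow_zero, mul_one, zero_add, pow_one] at hu ⊢
        simp [← hu, mul_assoc]
      · simp only [h0, if_false, Nat.add_eq_zero_iff, one_ne_zero, and_false]
        rw [gcA_one n j hj, ← mul_assoc, ← mul_assoc, ← mul_assoc, hu, pow_succ' (gcCyc (n + 1))]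
        simp only [mul_assoc])
    (by omega) (by omega) (by omega) (gc_count n (by omega))
  have hn0 : n ≠ 0 := by omega
  simp only [hn0, if_false] at h
  have e : swap (gcA (n + 1) n 1) (gcA (n + 1) n 2) *
      (gcRho (n + 1) ^ n * gcCyc (n + 1) ^ n * swap 1 2 * gcPi k hk) =
      swap n 0 * (gcCyc (n + 1) * gcCyc (n + 1)) * swap 1 2 * gcPi k hk := by
    have hu := gc_u n n (by omega) (by omega)
    rw [gcRho_pow_self, one_mul, gcA_last] at hu
    rw [← gcCyc_pow_self _ (by omega), pow_succ', ← hu, gcA_last]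
    simp [mul_assoc]
  rw [e] at h
  refine gcR_preimage (gcR_symm h) (g := fun x => if x = 0 then 0 else if x = 1 then 2 * k + 1
      else if x ≤ k then k + 2 - x else if x ≤ 2 * k then 3 * k + 1 - x else 1)
    ?_ ?_ ?_ ?_ ?_ ?_ ?_ ?_ ?_ ?_
  · intro x hx
    simp only [Finset.mem_range] at hx ⊢
    grind
  · intro x hx y hy
    simp only [Finset.mem_range] at hx hy ⊢
    grind
  · simp [hn]
  · intro x hx
    simp only [Finset.mem_range] at hx
    simp only [Perm.mul_apply]
    generalize hy : (if x = 0 then 0 else if x = 1 then 2 * k + 1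
      else if x ≤ k then k + 2 - x else if x ≤ 2 * k then 3 * k + 1 - x else 1) = y
    generalize hz : gcPi k hk y = z
    generalize hw : swap 1 2 z = w
    generalize hv : gcCyc (n + 1) w = v
    generalize hu : gcCyc (n + 1) v = u
    generalize hr : gcRho (2 * k + 2) x = r
    rw [gcPi_apply] at hz
    rw [gcRho_apply] at hr
    rw [gcCyc_apply _ _ (by omega)] at hv hu
    rw [swap_apply_def] at hw ⊢
    clear h e hH hG hB
    subst hn
    split_ifs at hy <;> (try (exfalso; omega)) <;>
    (split_ifs at hr <;> (try (exfalso; omega)) <;>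
    (split_ifs at hz <;> (try (exfalso; omega)) <;>
    (split_ifs at hw <;> (try (exfalso; omega)) <;>
    (split_ifs at hv <;> (try (exfalso; omega)) <;>
    (split_ifs at hu <;> (try (exfalso; omega)) <;>
    (split_ifs <;> omega))))))
  · intro x hx
    simp only [Finset.mem_range, gcRho_apply] at hx ⊢
    grind
  · intro x hx
    simp only [Finset.mem_range, gcRho_apply] at hx ⊢
    grind
  · simp
  · simp
  · simp
  · simp [hn]

/-! ### Base cases -/

/-- Apply the transposition of the two entries of a pair. -/
def gcS (p : ℕ × ℕ) (x : ℕ) : ℕ := if x = p.1 then p.2 else if x = p.2 then p.1 else x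

lemma gcS_eq (p : ℕ × ℕ) (x : ℕ) : gcS p x = swap p.1 p.2 x := by
  rw [swap_apply_def]; rfl

/-- Words visited by a walk. -/
def gcV : List ℕ → List (ℕ × ℕ) → List (List ℕ)
  | w, [] => [w]
  | w, p :: M => w :: gcV (w.map (gcS p)) M

/-- Final word of a walk. -/
def gcF : List ℕ → List (ℕ × ℕ) → List ℕ
  | w, [] => w
  | w, p :: M => gcF (w.map (gcS p)) M

/-- Transpositions given by a list of pairs. -/
def gcT (M : List (ℕ × ℕ)) : List (Perm ℕ) := M.map fun p => swap p.1 p.2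

lemma gcV_eq (n : ℕ) (M : List (ℕ × ℕ)) (g : Perm ℕ) :
    (gcU g (gcT M ++ [1])).map (fun σ : Perm ℕ => (List.range n).map σ) =
      gcV ((List.range n).map g) M := by
  induction M generalizing g with
  | nil => simp [gcT, gcU, gcV]
  | cons p M ih =>
    have := ih (swap p.1 p.2 * g)
    simp only [gcT, List.map_cons, List.cons_append, gcU, gcV] at this ⊢
    have e : gcS p = swap p.1 p.2 := funext (gcS_eq p)
    rw [this]
    simp [e]

lemma gcF_eq (n : ℕ) (M : List (ℕ × ℕ)) (g : Perm ℕ) :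
    (List.range n).map (gcE (gcT M) * g : Perm ℕ) = gcF ((List.range n).map g) M := by
  induction M generalizing g with
  | nil => simp [gcT, gcE, gcF]
  | cons p M ih =>
    have := ih (swap p.1 p.2 * g)
    simp only [gcT, List.map_cons, gcE, gcF] at this ⊢
    have e : gcS p = swap p.1 p.2 := funext (gcS_eq p)
    rw [mul_assoc, this]
    simp [e]

lemma gcI_swap (a b x y : ℕ) (h : a < b) (h' : x < y) :
    gcI (swap a b) (swap x y) = if (a, b) = (x, y) then 1 else 0 := by
  by_cases e : (a, b) = (x, y)
  · obtain ⟨rfl, rfl⟩ := Prod.mk.inj e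
    simp [gcI_self]
  · rw [if_neg e, gcI_ne]
    intro e'
    have e1 := congrArg (fun σ : Perm ℕ => σ x) e'
    simp only [swap_apply_left, swap_apply_def] at e1
    apply e
    grind

lemma gcC_pairs (M : List (ℕ × ℕ)) (hM : ∀ p ∈ M, p.1 < p.2) (x y : ℕ) (h : x < y) :
    gcC (gcT M) (swap x y) = M.count (x, y) := by
  induction M with
  | nil => simp [gcT, gcC_nil]
  | cons p M ih =>
    have e : gcT (p :: M) = [swap p.1 p.2] ++ gcT M := rfl
    rw [e, gcC_append, gcC_single, gcI_swap _ _ _ _ (hM p (by simp)) h,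
      ih (fun q hq => hM q (by simp [hq])), List.count_cons]
    simp [add_comm]

lemma gc_base (n : ℕ) (hn : 2 ≤ n) (M : List (ℕ × ℕ)) (π : Perm ℕ)
    (h1 : ∀ p ∈ M, p.1 < p.2 ∧ p.2 < n) (h2 : (gcV (List.range n) M).Nodup)
    (h3 : M.length + 1 = Nat.factorial n) (h4 : (List.range n).map π = gcF (List.range n) M)
    (h5 : ∀ x, n ≤ x → π x = x)
    (h6 : ∀ y < n, ∀ x < y, M.count (x, y) + (if (0, n - 1) = (x, y) then 1 else 0) =
      2 * Nat.factorial (n - 2)) :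
    gcR (Finset.range n) π (n - 1) 0 := by
  have hT : ∀ t ∈ gcT M, gcTr (Finset.range n) t := by
    intro t ht
    obtain ⟨p, hp, rfl⟩ := List.mem_map.1 ht
    have := h1 p hp
    exact ⟨p.1, by simp; omega, p.2, by simp; omega, by omega, rfl⟩
  refine ⟨by simp; omega, by simp; omega, by omega, gcT M, hT, ?_, ?_, ?_, ?_⟩
  · have := gcV_eq n M 1
    apply List.Nodup.of_map (fun σ : Perm ℕ => (List.range n).map σ)
    rw [this]
    simpa using h2
  · simpa [gcT] using h3
  · ext x
    by_cases hx : x < n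
    · have := gcF_eq n M 1
      simp only [mul_one, Perm.coe_one, List.map_id_fun, id_eq] at this
      rw [← h4] at this
      exact List.map_inj_left.1 this x (by simpa using hx)
    · rw [h5 x (by omega)]
      exact gcE_fix fun t ht => gcTr_fix (hT t ht) (by simpa using hx)
  · have key : ∀ x y, x < y → y < n → gcC (gcT M) (swap x y) + gcI (swap (n - 1) 0) (swap x y) =
        2 * Nat.factorial ((Finset.range n).card - 2) := by
      intro x y hxy hy
      rw [gcC_pairs M (fun p hp => (h1 p hp).1) x y hxy, swap_comm (n - 1),
        gcI_swap _ _ _ _ (by omega) hxy, h6 y hy x hxy, Finset.card_range]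
    rintro t ⟨x, hx, y, hy, hne, rfl⟩
    simp only [Finset.mem_range] at hx hy
    rcases lt_or_gt_of_ne hne with h | h
    · exact key x y h hy
    · rw [swap_comm x y]
      exact key y x h hx

/-- Steps for `n = 3`. -/
def gcM3 : List (ℕ × ℕ) := [(0, 1), (1, 2), (0, 2), (0, 1), (1, 2)]

lemma gc_G3 : gcG 3 := by
  refine gc_base 3 (by norm_num) gcM3 _ (by decide) (by decide) (by decide) (by decide) ?_
    (by decide)
  intro x hx
  exact swap_apply_of_ne_of_ne (by omega) (by omega)

lemma gc_H3 : gcH 3 := by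
  refine gc_base 3 (by norm_num) gcM3 _ (by decide) (by decide) (by decide) (by decide) ?_
    (by decide)
  intro x hx
  rw [gcHp_apply 3 x le_rfl]
  grind

/-- Steps of the first kind for `n = 5`. -/
def gcM5G : List (ℕ × ℕ) := [
  (1, 3), (1, 2), (1, 3), (1, 2), (1, 4), (1, 2), (1, 4), (2, 3), (2, 4), (2, 3),
  (1, 4), (3, 4), (1, 4), (2, 3), (2, 4), (1, 3), (3, 4), (2, 4), (2, 3), (3, 4),
  (1, 3), (2, 4), (3, 4), (0, 1), (0, 3), (0, 2), (0, 3), (0, 2), (0, 4), (0, 2),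
  (0, 3), (0, 2), (3, 4), (2, 4), (2, 3), (3, 4), (0, 3), (2, 4), (0, 4), (2, 3),
  (3, 4), (2, 3), (0, 4), (2, 4), (2, 3), (0, 4), (2, 4), (1, 2), (0, 3), (0, 1),
  (0, 3), (0, 1), (0, 4), (0, 1), (0, 4), (1, 3), (1, 4), (1, 3), (0, 4), (3, 4),
  (0, 4), (1, 3), (1, 4), (0, 3), (3, 4), (1, 4), (1, 3), (3, 4), (0, 3), (1, 4),
  (3, 4), (2, 3), (0, 1), (0, 4), (0, 1), (0, 4), (0, 1), (0, 2), (0, 1), (0, 2),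
  (2, 4), (1, 4), (1, 2), (0, 2), (1, 2), (1, 4), (0, 2), (2, 4), (1, 4), (1, 2),
  (0, 4), (2, 4), (1, 4), (1, 2), (2, 4), (3, 4), (0, 2), (2, 3), (0, 2), (2, 3),
  (0, 2), (1, 2), (0, 2), (1, 2), (1, 3), (0, 3), (0, 1), (1, 2), (0, 1), (0, 3),
  (1, 2), (1, 3), (0, 3), (0, 1), (2, 3), (1, 3), (0, 3), (0, 1), (1, 3)]

/-- Steps of the second kind for `n = 5`. -/
def gcM5H : List (ℕ × ℕ) := [
  (1, 3), (1, 2), (1, 3), (1, 2), (1, 4), (1, 2), (1, 4), (2, 3), (2, 4), (2, 3),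
  (1, 4), (3, 4), (1, 4), (2, 3), (2, 4), (1, 3), (3, 4), (2, 4), (2, 3), (3, 4),
  (1, 3), (2, 4), (3, 4), (0, 1), (0, 3), (0, 2), (0, 3), (0, 2), (0, 4), (0, 2),
  (0, 3), (0, 2), (3, 4), (2, 4), (2, 3), (3, 4), (0, 3), (2, 4), (0, 4), (2, 3),
  (3, 4), (2, 3), (0, 4), (2, 4), (2, 3), (0, 4), (2, 4), (1, 2), (0, 3), (0, 1),
  (0, 3), (0, 1), (0, 4), (0, 1), (0, 4), (1, 3), (1, 4), (1, 3), (0, 4), (3, 4),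
  (0, 4), (1, 3), (1, 4), (0, 3), (3, 4), (1, 4), (1, 3), (3, 4), (0, 3), (1, 4),
  (3, 4), (2, 3), (0, 1), (0, 4), (0, 1), (0, 4), (0, 1), (0, 2), (0, 1), (0, 2),
  (2, 4), (1, 4), (1, 2), (0, 2), (1, 2), (1, 4), (0, 2), (2, 4), (1, 4), (1, 2),
  (0, 4), (2, 4), (1, 4), (1, 2), (2, 4), (3, 4), (0, 2), (0, 1), (0, 2), (0, 1),
  (0, 3), (0, 1), (0, 2), (0, 1), (2, 3), (1, 3), (1, 2), (2, 3), (0, 2), (1, 3),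
  (0, 3), (1, 2), (2, 3), (1, 2), (0, 3), (1, 3), (1, 2), (0, 3), (1, 3)]

set_option maxRecDepth 100000 in
lemma gc_G5 : gcG 5 := by
  refine gc_base 5 (by norm_num) gcM5G _ (by decide +kernel) (by decide +kernel)
    (by decide +kernel) (by decide +kernel) ?_ (by decide +kernel)
  intro x hx
  exact swap_apply_of_ne_of_ne (by omega) (by omega)

set_option maxRecDepth 100000 in
lemma gc_H5 : gcH 5 := by
  refine gc_base 5 (by norm_num) gcM5H _ (by decide +kernel) (by decide +kernel)
    (by decide +kernel) (by decide +kernel) ?_ (by decide +kernel)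
  intro x hx
  rw [gcHp_apply 5 x (by norm_num)]
  grind

theorem gc_main (k : ℕ) (hk : 1 ≤ k) : gcG (2 * k + 1) ∧ gcH (2 * k + 1) := by
  rcases Nat.lt_or_ge k 2 with h | h
  · obtain rfl : k = 1 := by omega
    exact ⟨gc_G3, gc_H3⟩
  · induction k, h using Nat.le_induction with
    | base => exact ⟨gc_G5, gc_H5⟩
    | succ k h ih =>
      have hK := gc_K_of_GH k h (ih (by omega)).1 (ih (by omega)).2
      exact ⟨gc_G_of_K _ (by omega) hK, gc_H_of_K _ (by omega) hK⟩

/-! ### Transfer to permutations of `Fin n` -/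

open scoped Classical in
lemma gc_cnt (L : List (Perm ℕ)) (t : Perm ℕ) :
    ((Finset.range L.length).filter (fun s => L[s]? = some t)).card = gcC L t := by
  induction L using List.reverseRecOn with
  | nil => simp [gcC_nil]
  | append_singleton L a ih =>
    rw [gcC_append, gcC_single, ← ih, List.length_append, List.length_singleton,
      Finset.range_add_one, Finset.filter_insert]
    have e : (Finset.range L.length).filter (fun s => (L ++ [a])[s]? = some t) =
        (Finset.range L.length).filter (fun s => L[s]? = some t) := by
      apply Finset.filter_congr
      intro s hs
      rw [List.getElem?_append_left (by simpa using hs)]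
    rw [e]
    by_cases h : a = t
    · subst h
      rw [gcI_self]
      simp
    · rw [gcI_ne h]
      simp [h]

lemma gcU_get (g : Perm ℕ) (L : List (Perm ℕ)) (s : ℕ) (hs : s < L.length) :
    (gcU g L)[s]? = some (gcE (L.take s) * g) := by
  induction L generalizing g s with
  | nil => simp at hs
  | cons t L ih =>
    cases s with
    | zero => simp [gcU, gcE]
    | succ s =>
      simp only [gcU, List.getElem?_cons_succ, List.take_succ_cons, gcE]
      rw [ih _ s (by simpa using hs), mul_assoc]

/-- Permutations of `Fin n` as permutations of `ℕ`. -/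
noncomputable def gcPhi (n : ℕ) : Perm (Fin n) →* Perm ℕ :=
  Equiv.Perm.viaEmbeddingHom Fin.valEmbedding

lemma gcPhi_apply (n : ℕ) (σ : Perm (Fin n)) (x : Fin n) : gcPhi n σ (x : ℕ) = σ x :=
  Equiv.Perm.viaEmbedding_apply σ Fin.valEmbedding x

lemma gcPhi_ge (n : ℕ) (σ : Perm (Fin n)) (x : ℕ) (hx : n ≤ x) : gcPhi n σ x = x := by
  apply Equiv.Perm.viaEmbedding_apply_of_notMem σ Fin.valEmbedding x
  rintro ⟨y, rfl⟩
  have := y.2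
  simp at hx
  omega

lemma gcPhi_inj (n : ℕ) : Function.Injective (gcPhi n) :=
  Equiv.Perm.viaEmbeddingHom_injective Fin.valEmbedding

lemma gcPhi_swap (n : ℕ) (i j : Fin n) : gcPhi n (swap i j) = swap (i : ℕ) (j : ℕ) := by
  ext x
  by_cases hx : x < n
  · have := gcPhi_apply n (swap i j) ⟨x, hx⟩
    simp only at this
    rw [this, swap_apply_def, swap_apply_def]
    simp only [Fin.ext_iff]
    split_ifs <;> rfl
  · rw [gcPhi_ge n _ x (by omega), swap_apply_of_ne_of_ne] <;> omega

lemma gc_transfer (n N : ℕ) (hN : N + 1 = Nat.factorial n) (π : Perm ℕ) (a b : Fin n)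
    (h : gcR (Finset.range n) π a b) (g : Perm (Fin n)) :
    ∃ X : Fin (N + 1) → Perm (Fin n), Function.Bijective X ∧ X 0 = g ∧
      (∀ x, ((X (Fin.last N)) x : ℕ) = π (g x)) ∧
      (∀ s : Fin (N + 1), (s : ℕ) < N → ∃ i j : Fin n, i ≠ j ∧ X (s + 1) = swap i j * X s) ∧
      ∀ i j : Fin n, i ≠ j →
        (Finset.univ.filter (fun s : Fin (N + 1) =>
          (s : ℕ) < N ∧ X (s + 1) = swap i j * X s)).card +
          (if swap a b = swap i j then 1 else 0) = 2 * Nat.factorial (n - 2) := by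
  obtain ⟨-, -, -, L, h1, h2, h3, h4, h5⟩ := h
  rw [Finset.card_range] at h3 h5
  have hl : L.length = N := by omega
  have hr : ∀ M : List (Perm ℕ), (∀ t ∈ M, gcTr (Finset.range n) t) →
      ∃ σ, gcPhi n σ = gcE M := by
    intro M hM
    induction M with
    | nil => exact ⟨1, by simp [gcE]⟩
    | cons t M ih =>
      obtain ⟨σ, hσ⟩ := ih fun t ht => hM t (by simp [ht])
      obtain ⟨x, hx, y, hy, hne, rfl⟩ := hM t (by simp)
      simp only [Finset.mem_range] at hx hy
      exact ⟨σ * swap ⟨x, hx⟩ ⟨y, hy⟩, by rw [map_mul, hσ, gcPhi_swap]; rfl⟩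
  choose V hV using fun s : ℕ => hr (L.take s) fun t ht => h1 t (List.mem_of_mem_take ht)
  have hV0 : V 0 = 1 := by
    apply gcPhi_inj n
    rw [hV 0]
    simp [gcE]
  have hstep : ∀ (s : ℕ) (t : Perm ℕ), L[s]? = some t → gcPhi n (V (s + 1)) = t * gcPhi n (V s) := by
    intro s t hs
    rw [hV, hV, List.take_add_one, hs, gcE_append]
    simp [gcE]
  have hsuc : ∀ s : Fin (N + 1), (s : ℕ) < N → ((s + 1 : Fin (N + 1)) : ℕ) = s + 1 := by
    intro s hs
    exact Fin.val_add_one_of_lt' (by omega)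
  have hlen : (gcU 1 (L ++ [1])).length = N + 1 := by
    rw [gcU_length]; simp [hl]
  have hiff : ∀ (s : Fin (N + 1)) (i j : Fin n), (s : ℕ) < N →
      (V ((s + 1 : Fin (N + 1)) : ℕ) * g = swap i j * (V s * g) ↔
        L[(s : ℕ)]? = some (swap (i : ℕ) (j : ℕ))) := by
    intro s i j hs
    rw [hsuc s hs, ← mul_assoc, mul_left_inj, ← (gcPhi_inj n).eq_iff, map_mul, gcPhi_swap]
    have e : L[(s : ℕ)]? = some (L[(s : ℕ)]'(by omega)) := List.getElem?_eq_getElem _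
    rw [hstep s _ e, mul_left_inj, e]
    simp
  refine ⟨fun s => V s * g, ?_, ?_, ?_, ?_, ?_⟩
  · rw [Fintype.bijective_iff_injective_and_card]
    refine ⟨?_, by simp [Fintype.card_perm, hN]⟩
    intro s t e
    have e' : V s = V t := mul_right_cancel e
    have get : ∀ s : Fin (N + 1), (gcU 1 (L ++ [1]))[(s : ℕ)]? = some (gcPhi n (V s)) := by
      intro s
      rw [gcU_get 1 _ s (by have := s.2; simp [hl]; omega), hV, mul_one, List.take_append_of_le_length (by omega)]
    have := (List.getElem?_inj (by rw [hlen]; exact s.2) h2).1 ((get s).trans (by rw [e', get t]))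
    exact Fin.ext this
  · simp [hV0]
  · intro x
    simp only [Perm.mul_apply, Fin.val_last]
    rw [← gcPhi_apply, hV, ← hl, List.take_length, h4]
  · intro s hs
    have e : L[(s : ℕ)]? = some (L[(s : ℕ)]'(by omega)) := List.getElem?_eq_getElem _
    obtain ⟨x, hx, y, hy, hne, e2⟩ := h1 (L[(s : ℕ)]'(by omega)) (List.getElem_mem _)
    simp only [Finset.mem_range] at hx hy
    refine ⟨⟨x, hx⟩, ⟨y, hy⟩, by simpa using hne, ?_⟩
    rw [hiff s _ _ hs, e, e2]
  · intro i j hij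
    have hij' : (i : ℕ) ≠ j := fun e => hij (Fin.ext e)
    rw [← h5 (swap (i : ℕ) (j : ℕ)) ⟨i, by simp, j, by simp, hij', rfl⟩, ← gc_cnt]
    congr 1
    · apply Finset.card_bij (fun (s : Fin (N + 1)) _ => (s : ℕ))
      · intro s hs
        simp only [Finset.mem_filter, Finset.mem_univ, true_and, Finset.mem_range] at hs ⊢
        exact ⟨by omega, (hiff s i j hs.1).1 hs.2⟩
      · intro s _ t _ e
        exact Fin.ext e
      · intro s hs
        simp only [Finset.mem_filter, Finset.mem_range] at hs
        refine ⟨⟨s, by omega⟩, ?_, rfl⟩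
        simp only [Finset.mem_filter, Finset.mem_univ, true_and]
        exact ⟨by omega, (hiff ⟨s, by omega⟩ i j (by simp; omega)).2 hs.2⟩
    · by_cases e : swap a b = swap i j
      · rw [if_pos e, ← gcPhi_swap, ← gcPhi_swap, e, gcI_self]
      · rw [if_neg e, ← gcPhi_swap, ← gcPhi_swap, gcI_ne fun e' => e (gcPhi_inj n e')]

lemma gc_finalG (n : ℕ) (hn : 3 ≤ n) (h : gcG n) :
    gcR (Finset.range n) (swap (n - 2) (n - 1)) (n - 2) (n - 1) := by
  refine gcR_image (f := fun x => if x = 0 then n - 1 else x - 1) h ?_ ?_ rfl ?_ ?_ ?_ ?_ ?_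
  · intro x hx
    simp only [Finset.mem_range] at hx ⊢
    grind
  · intro x hx y hy
    simp only [Finset.mem_range] at hx hy ⊢
    grind
  · intro x hx
    simp only [Finset.mem_range] at hx
    simp only [swap_apply_def]
    grind
  · intro x hx
    simp only [Finset.mem_range, swap_apply_def] at hx ⊢
    grind
  · intro x hx
    simp only [Finset.mem_range] at hx
    simp only [swap_apply_def]
    grind
  · grind
  · grind

lemma gc_finalH (n : ℕ) (hn : 3 ≤ n) (h : gcH n) :
    ∃ π : Perm ℕ, gcR (Finset.range n) π (n - 2) (n - 1) ∧ ∀ x < n, π x =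
      if x = 0 then n - 3 else if x = 1 then n - 1 else if x = n - 1 then n - 2 else x - 2 := by
  have h1 := gcR_conj (gcRho n)⁻¹ h
  have e1 : (Finset.range n).image ((gcRho n)⁻¹ : Perm ℕ) = Finset.range n := by
    apply Finset.eq_of_subset_of_card_le
    · intro y hy
      obtain ⟨x, hx, rfl⟩ := Finset.mem_image.1 hy
      rw [gcRho_inv_apply]
      simp only [Finset.mem_range] at hx ⊢
      grind
    · rw [Finset.card_image_of_injective _ (Equiv.injective _)]
  have e2 : (gcRho n)⁻¹ (n - 1) = n - 2 := by rw [gcRho_inv_apply]; grind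
  have e3 : (gcRho n)⁻¹ 0 = n - 1 := by rw [gcRho_inv_apply]; grind
  rw [e1, e2, e3] at h1
  refine ⟨_, h1, ?_⟩
  intro x hx
  rw [inv_inv, Perm.mul_apply, Perm.mul_apply]
  generalize hy : gcRho n x = y
  generalize hz : ((gcRho n)⁻¹ * (gcRho n)⁻¹ * swap 0 1 : Perm ℕ) y = z
  rw [gcRho_apply] at hy
  rw [gcHp_apply n _ hn] at hz
  rw [gcRho_inv_apply]
  split_ifs at hy <;> (try (exfalso; omega)) <;>
    (split_ifs at hz <;> (try (exfalso; omega)) <;> (split_ifs <;> omega))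

end GrayAux

/-- Let `n ≥ 3` be odd. Then there are a balanced cyclic Gray code `G` for
`S_n` under all transpositions from the identity word `12⋯(n−1)n` to `12⋯n(n−1)` with
closing transposition `(n−1, n)`, and a (non-cyclic) Gray code `H` for `S_n` from the word
`23⋯(n−1)1n` (the cycle `Fin.cycleRange ⟨n−2⟩`) to the word `n12⋯(n−1)` (the inverse
rotation `(finRotate n)⁻¹`), such that every transposition on `[n]` is applied the same
number of times in `H` as in `G` (not counting the closing step of `G`). -/
theorem same_transpositions_gray_codes (n : ℕ) (hn : 3 ≤ n) (hodd : Odd n) :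
    ∃ (N : ℕ) (G H : Fin (N + 1) → Equiv.Perm (Fin n)),
      IsBalancedCyclicGrayCode n N G ∧
      G 0 = 1 ∧
      G (Fin.last N) = Equiv.swap ⟨n - 2, by omega⟩ ⟨n - 1, by omega⟩ ∧
      G 0 = Equiv.swap ⟨n - 2, by omega⟩ ⟨n - 1, by omega⟩ * G (Fin.last N) ∧
      Function.Bijective H ∧
      H 0 = Fin.cycleRange ⟨n - 2, by omega⟩ ∧
      H (Fin.last N) = (finRotate n)⁻¹ ∧
      (∀ s : Fin (N + 1), (s : ℕ) < N →
        ∃ i j : Fin n, i ≠ j ∧ H (s + 1) = Equiv.swap i j * H s) ∧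
      (∀ i j : Fin n, i ≠ j →
        (Finset.univ.filter (fun s : Fin (N + 1) =>
          (s : ℕ) < N ∧ H (s + 1) = Equiv.swap i j * H s)).card
        = (Finset.univ.filter (fun s : Fin (N + 1) =>
          (s : ℕ) < N ∧ G (s + 1) = Equiv.swap i j * G s)).card) := by
  obtain ⟨k, hk⟩ := hodd
  have hm := gc_main k (by omega)
  rw [← hk] at hm
  obtain ⟨π, hπ, hπ'⟩ := gc_finalH n hn hm.2
  obtain ⟨N, hN⟩ : ∃ N, N + 1 = Nat.factorial n :=
    ⟨Nat.factorial n - 1, Nat.sub_add_cancel (Nat.factorial_pos n)⟩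
  obtain ⟨G, g1, g2, g3, g4, g5⟩ := gc_transfer n N hN _ ⟨n - 2, by omega⟩ ⟨n - 1, by omega⟩
    (gc_finalG n hn hm.1) 1
  obtain ⟨H, h1, h2, h3, h4, h5⟩ := gc_transfer n N hN π ⟨n - 2, by omega⟩ ⟨n - 1, by omega⟩
    hπ (Fin.cycleRange ⟨n - 2, by omega⟩)
  have hlast : G (Fin.last N) = Equiv.swap ⟨n - 2, by omega⟩ ⟨n - 1, by omega⟩ := by
    ext x
    rw [g3 x, ← gcPhi_apply n (Equiv.swap _ _) x, gcPhi_swap]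
    rfl
  have hclose : G 0 = Equiv.swap ⟨n - 2, by omega⟩ ⟨n - 1, by omega⟩ * G (Fin.last N) := by
    rw [hlast, g2, Equiv.swap_mul_self]
  have hfin : ∀ s : Fin (N + 1), ¬ (s : ℕ) < N → s = Fin.last N := by
    intro s hs
    apply Fin.ext
    have := s.2
    rw [Fin.val_last]
    omega
  have hwrap : Fin.last N + 1 = 0 := by simp
  refine ⟨N, G, H, ⟨hN, g1, ?_, ?_⟩, g2, hlast, hclose, h1, h2, ?_, h4, ?_⟩
  · intro s
    by_cases hs : (s : ℕ) < N
    · exact g4 s hs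
    · refine ⟨⟨n - 2, by omega⟩, ⟨n - 1, by omega⟩, ?_, ?_⟩
      · simp only [ne_eq, Fin.mk.injEq]
        omega
      · rw [hfin s hs, hwrap, hclose]
  · intro i j hij
    rw [← g5 i j hij, ← Finset.card_filter_add_card_filter_not (fun s : Fin (N + 1) => (s : ℕ) < N),
      Finset.filter_filter, Finset.filter_filter]
    congr 1
    · congr 1
      apply Finset.filter_congr
      intro s _
      exact and_comm
    · split_ifs with e
      · rw [Finset.card_eq_one]
        refine ⟨Fin.last N, ?_⟩
        ext s
        simp only [Finset.mem_filter, Finset.mem_univ, true_and, Finset.mem_singleton]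
        refine ⟨fun h => hfin s h.2, ?_⟩
        rintro rfl
        refine ⟨?_, by simp⟩
        rw [hwrap, ← e, hclose]
      · rw [Finset.card_eq_zero, Finset.filter_eq_empty_iff]
        rintro s - ⟨h, h'⟩
        rw [hfin s h', hwrap, hclose] at h
        exact e (mul_right_cancel h)
  · rw [eq_inv_iff_mul_eq_one]
    have hcr : ∀ x : Fin n, ((Fin.cycleRange ⟨n - 2, by omega⟩ x : Fin n) : ℕ) =
        if (x : ℕ) < n - 2 then (x : ℕ) + 1 else if (x : ℕ) = n - 2 then 0 else (x : ℕ) := by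
      intro x
      have hx := x.2
      split_ifs with c1 c2
      · rw [Fin.coe_cycleRange_of_lt (by rw [Fin.lt_def]; exact c1)]
      · have : x = ⟨n - 2, by omega⟩ := Fin.ext c2
        rw [this]
        obtain ⟨m, rfl⟩ : ∃ m, n = m + 1 := ⟨n - 1, by omega⟩
        rw [Fin.cycleRange_self]
        rfl
      · rw [Fin.cycleRange_of_gt (by rw [Fin.lt_def]; simp only; omega)]
    have hv : ∀ x : Fin n, ((H (Fin.last N)) x : ℕ) = if (x : ℕ) = 0 then n - 1 else (x : ℕ) - 1 := by
      intro x
      have hx := x.2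
      rw [h3 x, hπ' _ (Fin.is_lt _)]
      have := hcr x
      generalize ((Fin.cycleRange ⟨n - 2, by omega⟩ x : Fin n) : ℕ) = y at this ⊢
      split_ifs at this <;> (split_ifs <;> omega)
    rw [mul_eq_one_iff_eq_inv, eq_comm, inv_eq_iff_mul_eq_one]
    obtain ⟨m, rfl⟩ : ∃ m, n = m + 1 := ⟨n - 1, by omega⟩
    ext x
    have hx := x.2
    rw [Equiv.Perm.mul_apply, finRotate_apply, Equiv.Perm.one_apply, Fin.val_add_one]
    have := hv x
    split_ifs with c
    · rw [c, Fin.val_last] at this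
      split_ifs at this <;> omega
    · have c' : ((H (Fin.last N)) x : ℕ) ≠ m := fun e => c (Fin.ext e)
      split_ifs at this <;> omega
  · intro i j hij
    have a1 := g5 i j hij
    have a2 := h5 i j hij
    omega
end

section
/- For every even n ≥ 2, there exists a balanced cyclic Gray code for S_n under all transpositions from the word 12⋯n to the word n23⋯(n−1)1, whose closing transposition is (1, n). -/
namespace GrayAux
open Equiv

/-- Vertices visited by the word `w` (the starting points of its steps) from `g`. -/
def verts {G : Type*} [Group G] : G → List G → List G
  | _, [] => []
  | g, t :: w => g :: verts (t * g) w

/-- End point of the walk. -/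
def fin {G : Type*} [Group G] : G → List G → G
  | g, [] => g
  | g, t :: w => fin (t * g) w

section
variable {G : Type*} [Group G]

theorem verts_append (u w : List G) : ∀ g : G,
    verts g (u ++ w) = verts g u ++ verts (fin g u) w := by
  induction u with
  | nil => intro g; rfl
  | cons t u ih => intro g; simp [verts, fin, ih]

theorem fin_append (u w : List G) : ∀ g : G, fin g (u ++ w) = fin (fin g u) w := by
  induction u with
  | nil => intro g; rfl
  | cons t u ih => intro g; simp [fin, ih]

theorem verts_length (w : List G) : ∀ g : G, (verts g w).length = w.length := by
  induction w with
  | nil => intro g; rfl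
  | cons t u ih => intro g; simp [verts, ih]

theorem verts_last (w : List G) (g s t : G) : verts g (w ++ [s]) = verts g (w ++ [t]) := by
  simp [verts_append, verts]

theorem verts_mul (w : List G) (h : G) : ∀ g : G, verts (g * h) w = (verts g w).map (· * h) := by
  induction w with
  | nil => intro g; rfl
  | cons t u ih => intro g; simp [verts, ← ih, mul_assoc]

theorem fin_mul (w : List G) (h : G) : ∀ g : G, fin (g * h) w = fin g w * h := by
  induction w with
  | nil => intro g; rfl
  | cons t u ih => intro g; simp [fin, ← ih, mul_assoc]

theorem verts_map {H : Type*} [Group H] (f : G →* H) (w : List G) :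
    ∀ g : G, verts (f g) (w.map f) = (verts g w).map f := by
  induction w with
  | nil => intro g; rfl
  | cons t u ih => intro g; simp [verts, ← ih]

theorem fin_map {H : Type*} [Group H] (f : G →* H) (w : List G) :
    ∀ g : G, fin (f g) (w.map f) = f (fin g w) := by
  induction w with
  | nil => intro g; rfl
  | cons t u ih => intro g; simp [fin, ← ih]

/-- A closed walk can be rotated so that a given label is the closing one. -/
theorem rotate {g : G} {w : List G} (hc : fin g w = g) {t : G} (ht : t ∈ w) :
    ∃ g' w0, (w0 ++ [t]).Perm w ∧ (verts g' (w0 ++ [t])).Perm (verts g w) ∧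
      fin g' (w0 ++ [t]) = g' := by
  obtain ⟨u, w', rfl⟩ := List.append_of_mem ht
  have e : u ++ t :: w' = (u ++ [t]) ++ w' := by simp
  rw [e] at hc ⊢
  refine ⟨fin g (u ++ [t]), w' ++ u, ?_, ?_, ?_⟩
  · rw [List.append_assoc]; exact List.perm_append_comm
  · rw [fin_append] at hc
    rw [List.append_assoc, verts_append w', hc, verts_append (u ++ [t])]
    exact List.perm_append_comm
  · rw [fin_append] at hc
    rw [List.append_assoc, fin_append w', hc]
end

/-- A closed walk through all permutations with `σ p ∈ B`, with label counts
    as prescribed. -/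
def Cyc {α : Type} [DecidableEq α] [Fintype α] (k : ℕ) (S : Perm α → Prop) (c : α → α → ℕ)
    (g : Perm α) (w : List (Perm α)) : Prop :=
  fin g w = g ∧ (verts g w).Nodup ∧ (∀ σ, σ ∈ verts g w ↔ S σ) ∧
  (∀ t ∈ w, ∃ i j, i ≠ j ∧ t = swap i j) ∧
  ∀ i j, i ≠ j → w.count (swap i j) = k * c i j

theorem Cyc.rotate {α : Type} [DecidableEq α] [Fintype α] {k : ℕ} {S : Perm α → Prop} {c : α → α → ℕ}
    {g : Perm α} {w : List (Perm α)} (h : Cyc k S c g w) {x y : α} (hxy : x ≠ y)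
    (hk : 0 < k * c x y) : ∃ g' w0, Cyc k S c g' (w0 ++ [swap x y]) := by
  obtain ⟨h1, h2, h3, h4, h5⟩ := h
  have : swap x y ∈ w := by
    rw [← List.count_pos_iff, h5 _ _ hxy]; exact hk
  obtain ⟨g', w0, p1, p2, p3⟩ := GrayAux.rotate h1 this
  exact ⟨g', w0, p3, p2.nodup_iff.2 h2, fun σ => by rw [p2.mem_iff, h3],
    fun t ht => h4 t (p1.mem_iff.1 ht), fun i j hij => by rw [p1.count_eq, h5 i j hij]⟩

/-- Balanced code on `α`. -/
def HasCode (α : Type) [DecidableEq α] [Fintype α] (k : ℕ) : Prop :=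
  ∃ g w, Cyc (α := α) k (fun _ => True) (fun _ _ => 1) g w

theorem block {α : Type} [DecidableEq α] [Fintype α] {k : ℕ} (hk : 0 < k) {v p : α}
    (H : HasCode {x // x ≠ v} k) {x y : α} (hx : x ≠ v) (hy : y ≠ v) (hxy : x ≠ y)
    {g : Perm α} (hg : g p = v) :
    ∃ w0, Cyc k (fun σ => σ p = v) (fun i j => if v ≠ i ∧ v ≠ j then 1 else 0) g
      (w0 ++ [swap x y]) := by
  obtain ⟨g0, w, h⟩ := H
  obtain ⟨g1, w0, h1, h2, h3, h4, h5⟩ := h.rotate (x := ⟨x, hx⟩) (y := ⟨y, hy⟩)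
    (by simpa using hxy) (by simpa using hk)
  set f : Perm {x // x ≠ v} →* Perm α := Perm.ofSubtype with hf
  have hinj : Function.Injective f := Perm.ofSubtype_injective
  have hfv : ∀ τ, f τ v = v := fun τ => Perm.ofSubtype_apply_of_not_mem _ (by simp)
  have hsw : ∀ i j : {x // x ≠ v}, f (swap i j) = swap (i : α) j := fun i j => by
    rw [hf, Perm.ofSubtype_swap_eq]
  have e : (w0 ++ [swap (⟨x, hx⟩ : {x // x ≠ v}) ⟨y, hy⟩]).map f = w0.map f ++ [swap x y] := by
    simp [hsw]
  have eg : g = f g1 * ((f g1)⁻¹ * g) := by group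
  refine ⟨w0.map f, ?_, ?_, ?_, ?_, ?_⟩
  · rw [← e, eg, fin_mul, fin_map, h1]
  · rw [← e, eg, verts_mul, verts_map]
    exact (h2.map hinj).map (mul_left_injective _)
  · intro σ
    rw [← e, eg, verts_mul, verts_map]
    simp only [List.mem_map, h3]
    constructor
    · rintro ⟨_, ⟨τ, -, rfl⟩, rfl⟩
      have : (f g1)⁻¹ v = v := by rw [Perm.inv_eq_iff_eq, hfv]
      simp [Perm.mul_apply, hg, this, hfv]
    · intro hσ
      have hfix : (σ * g⁻¹) v = v := by
        rw [Perm.mul_apply, show g⁻¹ v = p by rw [Perm.inv_eq_iff_eq, hg], hσ]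
      have hfix' : ∀ z, (σ * g⁻¹) z ≠ v ↔ z ≠ v := by
        intro z
        rw [not_iff_not]
        conv_lhs => rw [← hfix]
        exact (σ * g⁻¹).injective.eq_iff
      refine ⟨f (Perm.subtypePerm (σ * g⁻¹) hfix' * g1), ⟨_, trivial, rfl⟩, ?_⟩
      have : f (Perm.subtypePerm (σ * g⁻¹) hfix') = σ * g⁻¹ := by
        apply Perm.ofSubtype_subtypePerm
        rintro z hz rfl
        exact hz hfix
      rw [map_mul, this]; group
  · intro t ht
    rw [← e, List.mem_map] at ht
    obtain ⟨t', ht', rfl⟩ := ht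
    obtain ⟨i, j, hij, rfl⟩ := h4 t' ht'
    exact ⟨i, j, by simpa [Subtype.ext_iff] using hij, hsw i j⟩
  · intro i j hij
    rw [← e]
    beta_reduce
    split_ifs with hv
    · have := h5 ⟨i, hv.1.symm⟩ ⟨j, hv.2.symm⟩ (by simpa using hij)
      rw [← this, ← List.count_map_of_injective _ f hinj, hsw]
    · rw [mul_zero, List.count_eq_zero, List.mem_map]
      rintro ⟨τ, -, hτ⟩
      have h := hfv τ
      rw [hτ] at h
      apply hv
      constructor
      · rintro rfl; simp at h; exact hij h.symm
      · rintro rfl; simp at h; exact hij h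

theorem closing {α : Type} [DecidableEq α] {g : Perm α} {w : List (Perm α)} {x y : α}
    (h : fin g (w ++ [swap x y]) = g) : fin g w = swap x y * g := by
  rw [fin_append] at h
  simp only [fin] at h
  rw [← swap_mul_self_mul x y (fin g w), h]

/-- Invariant: the blocks in `B` have been merged. -/
def Inv {α : Type} [DecidableEq α] [Fintype α] (k : ℕ) (p : α) (B : Finset α) : Prop :=
  ∃ g w, Cyc k (fun σ => σ p ∈ B) (fun i j => (B.filter (fun v => v ≠ i ∧ v ≠ j)).card) g w

theorem card_insert_aux {α : Type} [DecidableEq α] [Fintype α] {B : Finset α} {x : α} (hx : x ∉ B) (i j : α) :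
    ((insert x B).filter (fun v => v ≠ i ∧ v ≠ j)).card =
      (B.filter (fun v => v ≠ i ∧ v ≠ j)).card + if x ≠ i ∧ x ≠ j then 1 else 0 := by
  rw [Finset.filter_insert]
  split_ifs with h
  · rw [Finset.card_insert_of_notMem (by simp [hx])]
  · rfl

theorem merge2 {α : Type} [DecidableEq α] [Fintype α] {k : ℕ} (hk : 0 < k) {p : α} {B : Finset α}
    (H : ∀ v : α, HasCode {x // x ≠ v} k) (hB : B.Nonempty) (hI : Inv k p B) {x y : α}
    (hxy : x ≠ y) (hx : x ∉ B) (hy : y ∉ B) : Inv k p (insert y (insert x B)) := by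
  obtain ⟨g0, w, h⟩ := hI
  obtain ⟨g, w0, h1, h2, h3, h4, h5⟩ := h.rotate hxy (by
    apply Nat.mul_pos hk
    rw [Finset.card_pos]
    obtain ⟨b, hb⟩ := hB
    refine ⟨b, ?_⟩
    simp only [Finset.mem_filter]
    exact ⟨hb, fun e => hx (e ▸ hb), fun e => hy (e ▸ hb)⟩)
  set v := g p with hv
  have hvB : v ∈ B := by
    have : g ∈ verts g (w0 ++ [swap x y]) := by
      cases w0 <;> simp [verts]
    exact (h3 g).1 this
  have hvx : v ≠ x := fun e => hx (e ▸ hvB)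
  have hvy : v ≠ y := fun e => hy (e ▸ hvB)
  have hf0 : fin g w0 = swap x y * g := closing h1
  obtain ⟨wx, x1, x2, x3, x4, x5⟩ := block hk (p := p) (H x) hvx hxy.symm hvy
    (g := swap v x * (swap x y * g)) (by
      simp [Perm.mul_apply, ← hv, swap_apply_of_ne_of_ne hvx hvy])
  have hfx : fin (swap v x * (swap x y * g)) wx = swap v y * (swap v x * (swap x y * g)) := closing x1
  obtain ⟨wy, y1, y2, y3, y4, y5⟩ := block hk (p := p) (H y) hvy hxy hvx
    (g := swap x y * (swap v y * (swap v x * (swap x y * g)))) (by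
      simp [Perm.mul_apply, ← hv, swap_apply_of_ne_of_ne hvx hvy,
        swap_apply_of_ne_of_ne hvx.symm hxy])
  have hfy : fin (swap x y * (swap v y * (swap v x * (swap x y * g)))) wy =
      swap v x * (swap x y * (swap v y * (swap v x * (swap x y * g)))) := closing y1
  have hid : swap v y * (swap v x * (swap x y * (swap v y * (swap v x * (swap x y * g))))) = g := by
    ext z
    simp only [Perm.mul_apply]
    generalize g z = z
    simp only [swap_apply_def]
    grind
  beta_reduce at h3 h5 x3 x5 y3 y5
  have hV : verts g ((w0 ++ [swap v x]) ++ ((wx ++ [swap x y]) ++ (wy ++ [swap v y]))) =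
      verts g (w0 ++ [swap x y]) ++ (verts (swap v x * (swap x y * g)) (wx ++ [swap v y]) ++
        verts (swap x y * (swap v y * (swap v x * (swap x y * g)))) (wy ++ [swap v x])) := by
    rw [verts_append (w0 ++ _), verts_append (wx ++ _), fin_append w0, hf0]
    simp only [fin]
    rw [fin_append wx, hfx]
    simp only [fin]
    rw [verts_last w0 _ _ (swap x y), verts_last wx _ _ (swap v y), verts_last wy _ _ (swap v x)]
  have hP : ((w0 ++ [swap v x]) ++ ((wx ++ [swap x y]) ++ (wy ++ [swap v y]))).Perm
      ((w0 ++ [swap x y]) ++ ((wx ++ [swap v y]) ++ (wy ++ [swap v x]))) := by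
    rw [List.perm_iff_count]
    intro t
    simp only [List.count_append]
    ring
  refine ⟨g, (w0 ++ [swap v x]) ++ ((wx ++ [swap x y]) ++ (wy ++ [swap v y])),
    ?_, ?_, ?_, ?_, ?_⟩
  · simp only [fin_append, fin, hf0, hfx, hfy, hid]
  · rw [hV, List.nodup_append', List.nodup_append']
    refine ⟨h2, ⟨x2, y2, ?_⟩, ?_⟩
    · intro σ hσ hσ'
      rw [x3] at hσ
      rw [y3] at hσ'
      exact hxy (hσ.symm.trans hσ')
    · intro σ hσ hσ'
      rw [List.mem_append, x3, y3] at hσ'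
      rw [h3] at hσ
      rcases hσ' with e | e <;> rw [e] at hσ <;> contradiction
  · intro σ
    rw [hV, List.mem_append, List.mem_append, h3, x3, y3]
    simp only [Finset.mem_insert]
    tauto
  · intro t ht
    rw [hP.mem_iff, List.mem_append, List.mem_append (s := wx ++ _)] at ht
    rcases ht with ht | ht | ht
    exacts [h4 t ht, x4 t ht, y4 t ht]
  · intro i j hij
    beta_reduce
    rw [hP.count_eq, List.count_append, List.count_append (l₁ := wx ++ _), h5 i j hij, x5 i j hij, y5 i j hij,
      card_insert_aux (by simp [hy, hxy.symm]), card_insert_aux hx]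
    ring

theorem octagon {α : Type} [DecidableEq α] {v x y z : α} (hvx : v ≠ x) (hvy : v ≠ y)
    (hvz : v ≠ z) (hxy : x ≠ y) (hxz : x ≠ z) (hyz : y ≠ z) (u : α) :
    swap v z (swap v x (swap y z (swap v z (swap x y (swap y z (swap v x (swap x y u))))))) =
      u := by
  by_cases h1 : u = v
  · subst h1
    simp [swap_apply_def, *, Ne.symm, hvx.symm, hvy.symm, hvz.symm, hxy.symm, hxz.symm, hyz.symm]
  by_cases h2 : u = x
  · subst h2
    simp [swap_apply_def, *, hvx.symm, hvy.symm, hvz.symm, hxy.symm, hxz.symm, hyz.symm]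
  by_cases h3 : u = y
  · subst h3
    simp [swap_apply_def, *, hvx.symm, hvy.symm, hvz.symm, hxy.symm, hxz.symm, hyz.symm]
  by_cases h4 : u = z
  · subst h4
    simp [swap_apply_def, *, hvx.symm, hvy.symm, hvz.symm, hxy.symm, hxz.symm, hyz.symm]
  simp [swap_apply_def, *]

theorem merge3 {α : Type} [DecidableEq α] [Fintype α] {k : ℕ} (hk : 0 < k) {p : α} {B : Finset α}
    (H : ∀ v : α, HasCode {x // x ≠ v} k) (hB : B.Nonempty) (hI : Inv k p B) {x y z : α}
    (hxy : x ≠ y) (hxz : x ≠ z) (hyz : y ≠ z) (hx : x ∉ B) (hy : y ∉ B) (hz : z ∉ B) :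
    Inv k p (insert z (insert y (insert x B))) := by
  obtain ⟨g0, w, h⟩ := hI
  obtain ⟨g, w0, h1, h2, h3, h4, h5⟩ := h.rotate hxy (by
    apply Nat.mul_pos hk
    rw [Finset.card_pos]
    obtain ⟨b, hb⟩ := hB
    refine ⟨b, ?_⟩
    simp only [Finset.mem_filter]
    exact ⟨hb, fun e => hx (e ▸ hb), fun e => hy (e ▸ hb)⟩)
  set v := g p with hv
  have hvB : v ∈ B := by
    have : g ∈ verts g (w0 ++ [swap x y]) := by
      cases w0 <;> simp [verts]
    exact (h3 g).1 this
  have hvx : v ≠ x := fun e => hx (e ▸ hvB)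
  have hvy : v ≠ y := fun e => hy (e ▸ hvB)
  have hvz : v ≠ z := fun e => hz (e ▸ hvB)
  have hf0 : fin g w0 = swap x y * g := closing h1
  obtain ⟨gx, hgx⟩ : ∃ gx, gx = swap v x * (swap x y * g) := ⟨_, rfl⟩
  have hgxp : gx p = x := by
    simp [hgx, Perm.mul_apply, ← hv, swap_apply_of_ne_of_ne hvx hvy]
  obtain ⟨wx, x1, x2, x3, x4, x5⟩ := block hk (p := p) (H x) hxy.symm hxz.symm hyz hgxp
  have hfx : fin gx wx = swap y z * gx := closing x1
  obtain ⟨gy, hgy⟩ : ∃ gy, gy = swap x y * (swap y z * gx) := ⟨_, rfl⟩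
  have hgyp : gy p = y := by
    simp [hgy, Perm.mul_apply, hgxp, swap_apply_of_ne_of_ne hxy hxz]
  obtain ⟨wy, y1, y2, y3, y4, y5⟩ := block hk (p := p) (H y) hvy hyz.symm hvz hgyp
  have hfy : fin gy wy = swap v z * gy := closing y1
  obtain ⟨gz, hgz⟩ : ∃ gz, gz = swap y z * (swap v z * gy) := ⟨_, rfl⟩
  have hgzp : gz p = z := by
    simp [hgz, Perm.mul_apply, hgyp, swap_apply_of_ne_of_ne hvy.symm hyz]
  obtain ⟨wz, z1, z2, z3, z4, z5⟩ := block hk (p := p) (H z) hvz hxz hvx hgzp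
  have hfz : fin gz wz = swap v x * gz := closing z1
  have hid : swap v z * (swap v x * gz) = g := by
    ext u
    simp only [hgz, hgy, hgx, Perm.mul_apply]
    exact octagon hvx hvy hvz hxy hxz hyz (g u)
  beta_reduce at h3 h5 x3 x5 y3 y5 z3 z5
  have hV : verts g ((w0 ++ [swap v x]) ++ ((wx ++ [swap x y]) ++ ((wy ++ [swap y z]) ++
        (wz ++ [swap v z])))) =
      verts g (w0 ++ [swap x y]) ++ (verts gx (wx ++ [swap y z]) ++
        (verts gy (wy ++ [swap v z]) ++ verts gz (wz ++ [swap v x]))) := by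
    rw [verts_append (w0 ++ _), verts_append (wx ++ _), verts_append (wy ++ _), fin_append w0, hf0]
    simp only [fin]
    rw [← hgx, fin_append wx, hfx]
    simp only [fin]
    rw [← hgy, fin_append wy, hfy]
    simp only [fin]
    rw [← hgz, verts_last w0 _ _ (swap x y), verts_last wx _ _ (swap y z),
      verts_last wy _ _ (swap v z), verts_last wz _ _ (swap v x)]
  have hP : ((w0 ++ [swap v x]) ++ ((wx ++ [swap x y]) ++ ((wy ++ [swap y z]) ++
        (wz ++ [swap v z])))).Perm
      ((w0 ++ [swap x y]) ++ ((wx ++ [swap y z]) ++ ((wy ++ [swap v z]) ++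
        (wz ++ [swap v x])))) := by
    rw [List.perm_iff_count]
    intro t
    simp only [List.count_append]
    ring
  refine ⟨g, (w0 ++ [swap v x]) ++ ((wx ++ [swap x y]) ++ ((wy ++ [swap y z]) ++
        (wz ++ [swap v z]))),
    ?_, ?_, ?_, ?_, ?_⟩
  · simp only [fin_append, fin, hf0, ← hgx, hfx, ← hgy, hfy, ← hgz, hfz, hid]
  · rw [hV, List.nodup_append', List.nodup_append', List.nodup_append']
    refine ⟨h2, ⟨x2, ⟨y2, z2, ?_⟩, ?_⟩, ?_⟩
    · intro σ hσ hσ'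
      rw [y3] at hσ
      rw [z3] at hσ'
      exact hyz (hσ.symm.trans hσ')
    · intro σ hσ hσ'
      rw [x3] at hσ
      rw [List.mem_append, y3, z3] at hσ'
      rcases hσ' with e | e
      · exact hxy (hσ.symm.trans e)
      · exact hxz (hσ.symm.trans e)
    · intro σ hσ hσ'
      rw [List.mem_append, List.mem_append, x3, y3, z3] at hσ'
      rw [h3] at hσ
      rcases hσ' with e | e | e <;> rw [e] at hσ <;> contradiction
  · intro σ
    rw [hV, List.mem_append, List.mem_append, List.mem_append, h3, x3, y3, z3]
    simp only [Finset.mem_insert]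
    tauto
  · intro t ht
    rw [hP.mem_iff, List.mem_append, List.mem_append (s := wx ++ _), List.mem_append (s := wy ++ _)] at ht
    rcases ht with ht | ht | ht | ht
    exacts [h4 t ht, x4 t ht, y4 t ht, z4 t ht]
  · intro i j hij
    beta_reduce
    rw [hP.count_eq, List.count_append, List.count_append (l₁ := wx ++ _),
      List.count_append (l₁ := wy ++ _), h5 i j hij,
      x5 i j hij, y5 i j hij, z5 i j hij,
      card_insert_aux (by simp [hz, hyz.symm, hxz.symm]),
      card_insert_aux (by simp [hy, hxy.symm]), card_insert_aux hx]
    ring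

theorem inv_grow {α : Type} [DecidableEq α] [Fintype α] {k : ℕ} (hk : 0 < k) {p : α}
    (H : ∀ v : α, HasCode {x // x ≠ v} k) (r : ℕ) : ∀ (B : Finset α), B.Nonempty → Inv k p B →
    Bᶜ.card = 2 * r → Inv k p Finset.univ := by
  induction r with
  | zero =>
    intro B _ hI hc
    have : B = Finset.univ := by
      rw [mul_zero, Finset.card_eq_zero, Finset.compl_eq_empty_iff] at hc
      exact hc
    rwa [← this]
  | succ r ih =>
    intro B hB hI hc
    obtain ⟨x, hx, y, hy, hxy⟩ := Finset.one_lt_card.1 (show 1 < Bᶜ.card by omega)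
    rw [Finset.mem_compl] at hx hy
    refine ih _ (by simp) (merge2 hk H hB hI hxy hx hy) ?_
    rw [Finset.card_compl] at hc ⊢
    rw [Finset.card_insert_of_notMem (by simp [hy, hxy.symm]), Finset.card_insert_of_notMem hx]
    omega

theorem inv_single {α : Type} [DecidableEq α] [Fintype α] {k : ℕ} (hk : 0 < k) {p : α}
    (H : ∀ v : α, HasCode {x // x ≠ v} k) (hc : 3 ≤ Fintype.card α) : Inv k p {p} := by
  have h2 : 1 < (({p} : Finset α)ᶜ).card := by
    rw [Finset.card_compl, Finset.card_singleton]; omega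
  obtain ⟨x, hx, y, hy, hxy⟩ := Finset.one_lt_card.1 h2
  simp only [Finset.mem_compl, Finset.mem_singleton] at hx hy
  obtain ⟨w0, h1, h2, h3, h4, h5⟩ := block hk (p := p) (H p) hx hy hxy (g := 1) rfl
  beta_reduce at h3 h5
  refine ⟨1, _, h1, h2, ?_, h4, ?_⟩
  · intro σ
    beta_reduce
    rw [h3, Finset.mem_singleton]
  · intro i j hij
    beta_reduce
    rw [h5 i j hij, Finset.filter_singleton]
    split_ifs <;> simp

theorem step {α : Type} [DecidableEq α] [Fintype α] {k : ℕ} (hk : 0 < k)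
    (H : ∀ v : α, HasCode {x // x ≠ v} k) (hc : 3 ≤ Fintype.card α) :
    HasCode α (k * (Fintype.card α - 2)) := by
  have hne : Nonempty α := Fintype.card_pos_iff.1 (by omega)
  obtain ⟨p⟩ := hne
  have hs := inv_single hk (p := p) H hc
  have hcp : (({p} : Finset α)ᶜ).card = Fintype.card α - 1 := by
    rw [Finset.card_compl, Finset.card_singleton]
  have hu : Inv k p Finset.univ := by
    rcases Nat.even_or_odd' (Fintype.card α) with ⟨r, hr | hr⟩
    · obtain ⟨x, y, z, hx, hy, hz, hxy, hxz, hyz⟩ :=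
        Finset.two_lt_card_iff.1 (show 2 < (({p} : Finset α)ᶜ).card by omega)
      rw [Finset.mem_compl] at hx hy hz
      refine inv_grow hk H (r - 2) _ (by simp) (merge3 hk H (by simp) hs hxy hxz hyz hx hy hz) ?_
      rw [Finset.card_compl, Finset.card_insert_of_notMem (by
          simp only [Finset.mem_insert, not_or]; exact ⟨hyz.symm, hxz.symm, hz⟩),
        Finset.card_insert_of_notMem (by
          simp only [Finset.mem_insert, not_or]; exact ⟨hxy.symm, hy⟩),
        Finset.card_insert_of_notMem hx, Finset.card_singleton]
      omega
    · exact inv_grow hk H r _ (by simp) hs (by omega)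
  obtain ⟨g, w, h1, h2, h3, h4, h5⟩ := hu
  beta_reduce at h3 h5
  refine ⟨g, w, h1, h2, fun σ => by simp [h3], h4, fun i j hij => ?_⟩
  rw [h5 i j hij, mul_one]
  congr 1
  have : Finset.univ.filter (fun v : α => v ≠ i ∧ v ≠ j) = ({i, j} : Finset α)ᶜ := by
    ext v; simp
  rw [this, Finset.card_compl, Finset.card_pair hij]

theorem base {α : Type} [DecidableEq α] [Fintype α] (hc : Fintype.card α = 2) : HasCode α 2 := by
  obtain ⟨a, b, hab, hu'⟩ := Finset.card_eq_two.1 (Finset.card_univ.trans hc)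
  have hu : ∀ z : α, z = a ∨ z = b := fun z => by
    have : z ∈ (Finset.univ : Finset α) := Finset.mem_univ z
    simpa [hu'] using this
  have key : ∀ i j : α, i ≠ j → swap i j = swap a b := by
    intro i j hij
    rcases hu i with rfl | rfl <;> rcases hu j with rfl | rfl
    · exact absurd rfl hij
    · rfl
    · exact swap_comm _ _
    · exact absurd rfl hij
  refine ⟨1, [swap a b, swap a b], ?_, ?_, ?_, ?_, ?_⟩
  · simp [fin]
  · have : (1 : Perm α) ≠ swap a b := fun e => hab (swap_eq_one_iff.1 e.symm)
    simpa [verts] using this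
  · intro σ
    simp only [verts, mul_one, List.mem_cons, List.not_mem_nil, or_false, iff_true]
    by_cases hσ : σ a = a
    · left
      have hb : σ b = b := by
        rcases hu (σ b) with h | h
        · exact absurd (σ.injective (h.trans hσ.symm)) hab.symm
        · exact h
      ext z
      rcases hu z with rfl | rfl
      · simpa using hσ
      · simpa using hb
    · right
      have ha : σ a = b := (hu (σ a)).resolve_left hσ
      have hb : σ b = a := by
        rcases hu (σ b) with h | h
        · exact h
        · exact absurd (σ.injective (h.trans ha.symm)) hab.symm
      ext z
      rcases hu z with rfl | rfl
      · simpa using ha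
      · simpa using hb
  · intro t ht
    simp at ht
    exact ⟨a, b, hab, ht⟩
  · intro i j hij
    rw [key i j hij]
    simp

theorem main (n : ℕ) : ∀ (α : Type) [DecidableEq α] [Fintype α], Fintype.card α = n + 2 →
    HasCode α (2 * n.factorial) := by
  induction n with
  | zero => intro α _ _ h; exact base h
  | succ n ih =>
    intro α _ _ h
    have := step (α := α) (k := 2 * n.factorial) (by positivity)
      (fun v => ih _ (by simp [h])) (by omega)
    rw [h] at this
    convert this using 1
    rw [Nat.factorial_succ, show n + 1 + 2 - 2 = n + 1 by omega]
    ring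

theorem getElem_step {G : Type*} [Group G] (w : List G) : ∀ (g : G) (i : ℕ)
    (h : i + 1 < w.length),
    (verts g w)[i + 1]'(by rw [verts_length]; exact h) =
      w[i] * (verts g w)[i]'(by rw [verts_length]; omega) := by
  induction w with
  | nil => intro g i h; simp at h
  | cons t w ih =>
    intro g i h
    cases i with
    | zero =>
      cases w with
      | nil => simp at h
      | cons s w => simp [verts]
    | succ i =>
      simp only [verts, List.getElem_cons_succ]
      exact ih (t * g) i (by simpa using h)

end GrayAux

/-- For every even `n ≥ 2` there exists a balanced cyclic Gray code for `S_n`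
under all transpositions from the identity word `12⋯n` to the word `n23⋯(n−1)1`
(the swap of the values `1` and `n`), whose closing transposition is `(1, n)`. -/
theorem balanced_gray_code_even (n : ℕ) (hn : 2 ≤ n) (he : Even n) :
    ∃ (N : ℕ) (π : Fin (N + 1) → Equiv.Perm (Fin n)),
      IsBalancedCyclicGrayCode n N π ∧
      π 0 = 1 ∧
      π (Fin.last N) = Equiv.swap ⟨0, by omega⟩ ⟨n - 1, by omega⟩ ∧
      π 0 = Equiv.swap ⟨0, by omega⟩ ⟨n - 1, by omega⟩ * π (Fin.last N) := by
  obtain ⟨m, rfl⟩ : ∃ m, n = m + 2 := ⟨n - 2, by omega⟩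
  obtain ⟨a, ha⟩ : ∃ a : Fin (m + 2), a = ⟨0, by omega⟩ := ⟨_, rfl⟩
  obtain ⟨b, hb⟩ : ∃ b : Fin (m + 2), b = ⟨m + 2 - 1, by omega⟩ := ⟨_, rfl⟩
  have hab : a ≠ b := by
    rw [ha, hb]; simp [Fin.ext_iff]
  rw [← ha, ← hb]
  obtain ⟨g0, w, h⟩ := GrayAux.main m (Fin (m + 2)) (Fintype.card_fin _)
  obtain ⟨g, w0, h1, h2, h3, h4, h5⟩ := h.rotate hab (by positivity)
  beta_reduce at h3 h5
  have e1 : (1 : Equiv.Perm (Fin (m + 2))) = g * g⁻¹ := by group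
  have k1 : GrayAux.fin 1 (w0 ++ [Equiv.swap a b]) = 1 := by
    rw [e1, GrayAux.fin_mul, h1]
  have k0 : GrayAux.fin 1 w0 = Equiv.swap a b := by
    rw [GrayAux.closing k1, mul_one]
  have k2 : (GrayAux.verts 1 (w0 ++ [Equiv.swap a b])).Nodup := by
    rw [e1, GrayAux.verts_mul]
    exact h2.map (mul_left_injective _)
  have k3 : ∀ σ, σ ∈ GrayAux.verts 1 (w0 ++ [Equiv.swap a b]) := by
    intro σ
    rw [e1, GrayAux.verts_mul, List.mem_map]
    exact ⟨σ * g, (h3 _).2 trivial, by group⟩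
  have hlen : (w0 ++ [Equiv.swap a b]).length = w0.length + 1 := by simp
  have hL : (GrayAux.verts 1 (w0 ++ [Equiv.swap a b])).length = w0.length + 1 := by
    rw [GrayAux.verts_length, hlen]
  have hzero : ∀ h, (GrayAux.verts 1 (w0 ++ [Equiv.swap a b]))[0]'h = 1 := by
    intro h
    cases w0 <;> simp [GrayAux.verts]
  have hlast : ∀ h, (GrayAux.verts 1 (w0 ++ [Equiv.swap a b]))[w0.length]'h = Equiv.swap a b := by
    intro h
    have e : GrayAux.verts 1 (w0 ++ [Equiv.swap a b]) =
        GrayAux.verts 1 w0 ++ [Equiv.swap a b] := by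
      rw [GrayAux.verts_append, k0]; rfl
    simp only [e]
    rw [List.getElem_append_right (by rw [GrayAux.verts_length])]
    simp
  have hstep : ∀ s : Fin (w0.length + 1),
      (GrayAux.verts 1 (w0 ++ [Equiv.swap a b]))[(s + 1 : Fin (w0.length + 1)).val]'(by
        rw [hL]; exact (s + 1).isLt) = (w0 ++ [Equiv.swap a b])[s.val]'(by
        rw [hlen]; exact s.isLt) * (GrayAux.verts 1 (w0 ++ [Equiv.swap a b]))[s.val]'(by
        rw [hL]; exact s.isLt) := by
    intro s
    by_cases hs : s = Fin.last _
    · subst hs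
      simp only [Fin.last_add_one, Fin.val_zero, Fin.val_last]
      rw [hzero, hlast]
      simp
    · have hv : (s + 1 : Fin (w0.length + 1)).val = s.val + 1 :=
        Fin.val_add_one_of_lt (Fin.lt_last_iff_ne_last.2 hs)
      simp only [hv]
      have := (s + 1 : Fin (w0.length + 1)).isLt
      exact GrayAux.getElem_step _ _ _ (by rw [hlen]; omega)
  have hiff : ∀ (s : Fin (w0.length + 1)) (t : Equiv.Perm (Fin (m + 2))),
      (GrayAux.verts 1 (w0 ++ [Equiv.swap a b]))[(s + 1 : Fin (w0.length + 1)).val]'(by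
        rw [hL]; exact (s + 1).isLt) = t * (GrayAux.verts 1 (w0 ++ [Equiv.swap a b]))[s.val]'(by
        rw [hL]; exact s.isLt) ↔ t = (w0 ++ [Equiv.swap a b])[s.val]'(by
        rw [hlen]; exact s.isLt) := by
    intro s t
    rw [hstep s, mul_left_inj, eq_comm]
  refine ⟨w0.length, fun s => (GrayAux.verts 1 (w0 ++ [Equiv.swap a b]))[s.val]'(by
    rw [hL]; exact s.isLt), ⟨?_, ⟨?_, ?_⟩, ?_, ?_⟩, ?_, ?_, ?_⟩
  · rw [← hL, ← List.toFinset_card_of_nodup k2]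
    have : (GrayAux.verts 1 (w0 ++ [Equiv.swap a b])).toFinset = Finset.univ := by
      ext σ; simp [k3 σ]
    rw [this, Finset.card_univ, Fintype.card_perm, Fintype.card_fin]
  · intro s s' hs
    exact Fin.ext ((k2.getElem_inj_iff).1 hs)
  · intro σ
    obtain ⟨i, hi, he⟩ := List.getElem_of_mem (k3 σ)
    exact ⟨⟨i, by rw [← hL]; exact hi⟩, he⟩
  · intro s
    obtain ⟨i, j, hij, ht⟩ := h4 _ (List.getElem_mem (l := w0 ++ [Equiv.swap a b]) (n := s.val)
      (by rw [hlen]; exact s.isLt))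
    exact ⟨i, j, hij, (hiff s _).2 ht.symm⟩
  · intro i j hij
    have h6 := h5 i j hij
    have h7 := Fin.card_filter_univ_eq_vector_get_eq_count (Equiv.swap i j)
      (⟨w0 ++ [Equiv.swap a b], hlen⟩ : List.Vector _ (w0.length + 1))
    simp only [hiff]
    rw [Nat.add_sub_cancel, ← mul_one (2 * m.factorial), ← h6]
    refine Eq.trans ?_ h7
    congr 1
    ext s
    simp only [Finset.mem_filter, Finset.mem_univ, true_and]
    exact eq_comm
  · exact hzero _
  · exact hlast _
  · beta_reduce
    simp only [Fin.val_zero, Fin.val_last]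
    rw [hzero, hlast]
    simp
end

section
/- Let k ≥ 2 and let M ≥ 2 be an even integer. If there exists an M-rainbow cycle for S_k under all transpositions, then there exists an M-rainbow cycle for S_{k+1} under all transpositions, i.e., a cyclically ordered list of pairwise distinct permutations of [k+1] in which any two cyclically consecutive permutations differ by applying a transposition and each of the (k+1)k/2 transpositions on [k+1] is applied exactly M times around the cycle. -/
open Finset Equiv

theorem rc_transfer {X : Type} [Fintype X] (m M : ℕ) (f : X → X) (x0 : X)
    (hreach : ∀ x, ∃ n, f^[n] x0 = x) (p : X → Perm (Fin m)) (hback : ∃ y, f y = x0)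
    (hinj : Function.Injective p)
    (hstep : ∀ x, ∃ i j, i ≠ j ∧ p (f x) = swap i j * p x)
    (hcount : ∀ i j, i ≠ j → (univ.filter fun x => p (f x) = swap i j * p x).card = M) :
    ∃ (N : ℕ) (π : Fin (N + 1) → Perm (Fin m)),
      Function.Injective π ∧
      (∀ s : Fin (N + 1), ∃ i j : Fin m, i ≠ j ∧ π (s + 1) = swap i j * π s) ∧
      (∀ i j : Fin m, i ≠ j →
        (univ.filter (fun s : Fin (N + 1) => π (s + 1) = swap i j * π s)).card = M) := by
  classical
  have hper : x0 ∈ Function.periodicPts f := by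
    obtain ⟨y, hy⟩ := hback
    obtain ⟨n, hn⟩ := hreach y
    refine ⟨n + 1, Nat.succ_pos _, ?_⟩
    show f^[n+1] x0 = x0
    rw [Function.iterate_succ_apply', hn, hy]
  have hpos := Function.minimalPeriod_pos_of_mem_periodicPts hper
  obtain ⟨N, hN⟩ : ∃ N, Function.minimalPeriod f x0 = N + 1 := ⟨_, (Nat.succ_pred_eq_of_pos hpos).symm⟩
  let g : Fin (N+1) → X := fun s => f^[s.val] x0
  have hg1 : ∀ s, g (s + 1) = f (g s) := by
    intro s
    show f^[(s+1).val] x0 = f (f^[s.val] x0)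
    rw [← Function.iterate_succ_apply' f]
    by_cases h : s = Fin.last N
    · subst h
      rw [Fin.last_add_one]
      have := Function.iterate_minimalPeriod (f := f) (x := x0)
      rw [hN] at this
      simpa using this.symm
    · rw [Fin.val_add_one_of_lt (Fin.lt_last_iff_ne_last.2 h)]
  have hgi : Function.Injective g := by
    intro s t hst
    have := Function.iterate_injOn_Iio_minimalPeriod (f := f) (x := x0)
    rw [hN] at this
    exact Fin.ext (this s.2 t.2 hst)
  have hgs : Function.Surjective g := by
    intro x
    obtain ⟨n, rfl⟩ := hreach x
    refine ⟨⟨n % (N+1), Nat.mod_lt _ (Nat.succ_pos _)⟩, ?_⟩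
    show f^[n % (N+1)] x0 = _
    rw [← hN, Function.iterate_mod_minimalPeriod_eq]
  refine ⟨N, fun s => p (g s), hinj.comp hgi, ?_, ?_⟩
  · intro s
    simp only [hg1]; exact hstep _
  · intro i j hij
    rw [← hcount i j hij]
    refine Finset.card_bij (fun s _ => g s) ?_ ?_ ?_
    · intro s hs
      simpa [hg1] using hs
    · intro s _ t _ h; exact hgi h
    · intro x hx
      obtain ⟨s, rfl⟩ := hgs x
      exact ⟨s, by simpa [hg1] using hx, rfl⟩

theorem rc_transfer' {X α : Type} [Fintype X] [Fintype α] [DecidableEq α] (m M : ℕ) (e : α ≃ Fin m)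
    (f : X → X) (x0 : X)
    (hreach : ∀ x, ∃ n, f^[n] x0 = x) (p : X → Perm α) (hback : ∃ y, f y = x0)
    (hinj : Function.Injective p)
    (hstep : ∀ x, ∃ i j, i ≠ j ∧ p (f x) = swap i j * p x)
    (hcount : ∀ i j, i ≠ j → (univ.filter fun x => p (f x) = swap i j * p x).card = M) :
    ∃ (N : ℕ) (π : Fin (N + 1) → Perm (Fin m)),
      Function.Injective π ∧
      (∀ s : Fin (N + 1), ∃ i j : Fin m, i ≠ j ∧ π (s + 1) = swap i j * π s) ∧
      (∀ i j : Fin m, i ≠ j →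
        (univ.filter (fun s : Fin (N + 1) => π (s + 1) = swap i j * π s)).card = M) := by
  have key : ∀ (i j : α) (σ τ : Perm α),
      e.permCongr σ = swap (e i) (e j) * e.permCongr τ ↔ σ = swap i j * τ := by
    intro i j σ τ
    have : swap (e i) (e j) = e.permCongr (swap i j) := by
      ext x; simp [Equiv.permCongr_apply, Equiv.swap_apply_def]
      split_ifs <;> simp_all [Equiv.symm_apply_eq]
    have h2 : e.permCongr (swap i j) * e.permCongr τ = e.permCongr (swap i j * τ) := by
      ext x; simp [Equiv.permCongr_apply]
    rw [this, h2, e.permCongr.injective.eq_iff]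
  refine rc_transfer m M f x0 hreach (fun x => e.permCongr (p x)) hback
    (e.permCongr.injective.comp hinj) ?_ ?_
  · intro x
    obtain ⟨i, j, hij, h⟩ := hstep x
    exact ⟨e i, e j, e.injective.ne hij, (key _ _ _ _).2 h⟩
  · intro i j hij
    obtain ⟨i, rfl⟩ := e.surjective i
    obtain ⟨j, rfl⟩ := e.surjective j
    rw [← hcount i j (by rintro rfl; exact hij rfl)]
    simp only [key]

theorem rc_swap_inj {α : Type} [DecidableEq α] {a b c d : α} (hab : a ≠ b)
    (h : swap a b = swap c d) : (a = c ∧ b = d) ∨ (a = d ∧ b = c) := by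
  have h1 : b = swap c d a := by rw [← h, swap_apply_left]
  have h3 : a = c ∨ a = d := by
    by_contra hh
    push Not at hh
    rw [swap_apply_of_ne_of_ne hh.1 hh.2] at h1
    exact hab h1.symm
  rcases h3 with rfl | rfl
  · left; exact ⟨rfl, by simpa using h1⟩
  · right; exact ⟨rfl, by simpa using h1⟩

theorem rc_core (k N M : ℕ) (π : Fin (N + 1) → Perm (Fin k)) (hinj : Function.Injective π)
    (d a : Fin (N + 1) → Fin k) (hda : ∀ s, d s ≠ a s)
    (hstep : ∀ s, π (s + 1) = swap (d s) (a s) * π s)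
    (hcount : ∀ i j : Fin k, i ≠ j →
        (univ.filter (fun s : Fin (N + 1) => swap (d s) (a s) = swap i j)).card = M)
    (S : Finset (Fin (N + 1)))
    (hS : ∀ i, (S.filter fun s => d s = i).card + (S.filter fun s => a s = i).card = M)
    (hne : ∀ s ∈ S, s + 1 ∈ S → d (s + 1) ≠ a s) :
    ∃ (N : ℕ) (π : Fin (N + 1) → Perm (Fin (k+1))),
      Function.Injective π ∧
      (∀ s : Fin (N + 1), ∃ i j : Fin (k+1), i ≠ j ∧ π (s + 1) = swap i j * π s) ∧
      (∀ i j : Fin (k+1), i ≠ j →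
        (univ.filter (fun s : Fin (N + 1) => π (s + 1) = swap i j * π s)).card = M) := by
  classical
  let X := Fin (N+1) ⊕ (S ⊕ S)
  let f : X → X := Sum.elim
    (fun s => if h : s ∈ S then Sum.inr (Sum.inl ⟨s, h⟩) else Sum.inl (s + 1))
    (Sum.elim (fun s => Sum.inr (Sum.inr s)) (fun s => Sum.inl (s.1 + 1)))
  let o : Perm (Fin k) → Perm (Option (Fin k)) := fun σ => optionCongr σ
  have oinj : ∀ σ τ, o σ = o τ → σ = τ := fun σ τ h => optionCongr_injective h
  have omul : ∀ σ τ, o (σ * τ) = o σ * o τ := by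
    intro σ τ; ext x : 1; cases x <;> rfl
  have oswap : ∀ i j, o (swap i j) = swap (some i) (some j) := fun i j => optionCongr_swap i j
  let p : X → Perm (Option (Fin k)) := Sum.elim
    (fun s => o (π s))
    (Sum.elim (fun s => swap (some (d s)) none * o (π s))
      (fun s => swap (some (a s)) none * o (π (s.1 + 1))))
  let t : X → Option (Fin k) × Option (Fin k) := Sum.elim
    (fun s => if s ∈ S then (some (d s), none) else (some (d s), some (a s)))
    (Sum.elim (fun s => (some (d s), some (a s)))
      (fun s => (some (a s), none)))
  have ht : ∀ x, (t x).1 ≠ (t x).2 := by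
    rintro (s | s | s)
    · by_cases h : s ∈ S <;> simp [t, h, hda]
    · simp [t, hda]
    · simp [t]
  have hpt : ∀ x, p (f x) = swap (t x).1 (t x).2 * p x := by
    rintro (s | s | s)
    · by_cases h : s ∈ S
      · simp [p, f, t, h]
      · simp [p, f, t, h, hstep, omul, oswap]
    · simp only [p, f, t, Sum.elim_inr, Sum.elim_inl, hstep, omul, oswap, ← mul_assoc]
      congr 1
      symm
      rw [mul_swap_eq_swap_mul, swap_apply_left, swap_apply_of_ne_of_ne (by simp) (by simp)]
    · simp [p, f, t]
  refine rc_transfer' (k+1) M (finSuccEquivLast (n := k)).symm f (Sum.inl 0) ?_ p ?_ ?_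
    (fun x => ⟨_, _, ht x, hpt x⟩) ?_
  · have hs : ∀ x, (∃ n, f^[n] (Sum.inl 0) = x) → (∃ n, f^[n] (Sum.inl 0) = f x) := by
      rintro x ⟨n, rfl⟩
      exact ⟨n+1, Function.iterate_succ_apply' _ _ _⟩
    have h1 : ∀ s (h : s ∈ S), (∃ n, f^[n] (Sum.inl 0) = (Sum.inl s : X)) →
        (∃ n, f^[n] (Sum.inl 0) = (Sum.inr (Sum.inl ⟨s, h⟩) : X)) := by
      intro s h hh
      have := hs _ hh
      simpa [f, h] using this
    have h0 : ∀ s, (∃ n, f^[n] (Sum.inl 0) = (Sum.inl s : X)) := by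
      intro s
      induction s using Fin.induction with
      | zero => exact ⟨0, rfl⟩
      | succ s ih =>
        rw [← Fin.coeSucc_eq_succ]
        by_cases h : s.castSucc ∈ S
        · exact hs _ (hs _ (h1 _ h ih))
        · have := hs _ ih
          simpa [f, h] using this
    rintro (s | s | s)
    · exact h0 s
    · exact h1 s s.2 (h0 s)
    · exact hs _ (h1 s s.2 (h0 s))
  · by_cases h : Fin.last N ∈ S
    · exact ⟨Sum.inr (Sum.inr ⟨_, h⟩), by simp [f]⟩
    · exact ⟨Sum.inl (Fin.last N), by simp [f, h]⟩
  · have on : ∀ σ, o σ none = none := fun σ => rfl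
    have p0 : ∀ x, p x none = Sum.elim (fun _ : Fin (N+1) => none)
        (Sum.elim (fun s : S => some (d s)) (fun s : S => some (a s))) x := by
      rintro (s | s | s) <;> simp [p, on]
    intro x y hxy
    have hn := congrArg (fun σ : Perm _ => σ none) hxy
    simp only [p0] at hn
    rcases x with s | s | s <;> rcases y with s' | s' | s' <;>
      simp only [Sum.elim_inl, Sum.elim_inr, reduceCtorEq, Option.some.injEq] at hn <;>
      simp only [p, Sum.elim_inl, Sum.elim_inr] at hxy
    · rw [hinj (oinj _ _ hxy)]
    · rw [hn] at hxy
      rw [Subtype.ext (hinj (oinj _ _ (mul_left_cancel hxy)))]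
    · rw [hn] at hxy
      have := hinj (oinj _ _ (mul_left_cancel hxy))
      exact absurd (this ▸ hn) (hne s' s'.2 (this ▸ s.2))
    · rw [← hn] at hxy
      have := hinj (oinj _ _ (mul_left_cancel hxy))
      exact absurd (this ▸ hn.symm) (hne s s.2 (this ▸ s'.2))
    · rw [hn] at hxy
      have := hinj (oinj _ _ (mul_left_cancel hxy))
      rw [Subtype.ext (add_right_cancel this)]
  · intro i j hij
    have h1 : (univ.filter fun x => p (f x) = swap i j * p x)
        = univ.filter fun x => swap (t x).1 (t x).2 = swap i j := by
      ext x; simp [hpt]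
    rw [h1, Finset.card_filter, Fintype.sum_sum_type, Fintype.sum_sum_type]
    change (∑ s : Fin (N+1), if swap (if s ∈ S then (some (d s), none) else (some (d s), some (a s))).1
        (if s ∈ S then (some (d s), none) else (some (d s), some (a s))).2 = swap i j then 1 else 0) +
      ((∑ s : S, if swap (some (d s)) (some (a s)) = swap i j then 1 else 0) +
        (∑ s : S, if swap (some (a s)) none = swap i j then 1 else 0)) = M
    rw [Finset.sum_coe_sort S (fun s => if swap (some (d s)) (some (a s)) = swap i j then 1 else 0),
      Finset.sum_coe_sort S (fun s => if swap (some (a s)) none = swap i j then 1 else 0),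
      ← Finset.sum_add_sum_compl S]
    have e1 : ∀ F : Fin (N+1) → Option (Fin k) × Option (Fin k),
        ∀ G : Fin (N+1) → Option (Fin k) × Option (Fin k),
        (∑ s ∈ S, if swap (if s ∈ S then F s else G s).1 (if s ∈ S then F s else G s).2 = swap i j then 1 else 0)
        = ∑ s ∈ S, if swap (F s).1 (F s).2 = swap i j then 1 else 0 := by
      intro F G
      exact Finset.sum_congr rfl (fun s hs => by simp [hs])
    have e2 : ∀ F : Fin (N+1) → Option (Fin k) × Option (Fin k),
        ∀ G : Fin (N+1) → Option (Fin k) × Option (Fin k),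
        (∑ s ∈ Sᶜ, if swap (if s ∈ S then F s else G s).1 (if s ∈ S then F s else G s).2 = swap i j then 1 else 0)
        = ∑ s ∈ Sᶜ, if swap (G s).1 (G s).2 = swap i j then 1 else 0 := by
      intro F G
      refine Finset.sum_congr rfl (fun s hs => ?_)
      rw [Finset.mem_compl] at hs
      simp [hs]
    rw [e1, e2]
    have z1 : ∀ c i : Fin k, swap (some c) none = swap (some i) none ↔ c = i := by
      intro c i
      refine ⟨fun h => ?_, fun h => by rw [h]⟩
      rcases rc_swap_inj (by simp) h with h | h <;> simpa using h
    have z2 : ∀ c i j : Fin k, swap (some c) none ≠ swap (some i) (some j) := by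
      intro c i j h
      rcases rc_swap_inj (by simp) h with h | h <;> simp at h
    have z3 : ∀ s, ∀ i : Fin k, swap (some (d s)) (some (a s)) ≠ swap (some i) none := by
      intro s i h
      exact z2 _ _ _ h.symm
    have z4 : ∀ s i j, swap (some (d s)) (some (a s)) = swap (some i) (some j) ↔
        swap (d s) (a s) = swap i j := by
      intro s i j
      rw [← oswap, ← oswap]
      exact ⟨oinj _ _, fun h => by rw [h]⟩
    have hn : ∀ i : Fin k, (∑ s ∈ S, if swap (some (d s)) none = swap (some i) none then 1 else 0) +
        (∑ s ∈ Sᶜ, if swap (some (d s)) (some (a s)) = swap (some i) none then 1 else 0) +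
        ((∑ s ∈ S, if swap (some (d s)) (some (a s)) = swap (some i) none then 1 else 0) +
         (∑ s ∈ S, if swap (some (a s)) none = swap (some i) none then 1 else 0)) = M := by
      intro i
      simp only [z1, z3, if_false, Finset.sum_const_zero]
      rw [← hS i, Finset.card_filter, Finset.card_filter]; omega
    rcases i with _ | i
    · rcases j with _ | j
      · exact absurd rfl hij
      · simp only [swap_comm none (some j)]
        exact hn j
    · rcases j with _ | j
      · exact hn i
      · simp only [z2, z4, if_false, Finset.sum_const_zero]
        rw [← hcount i j (by rintro rfl; exact hij rfl), Finset.card_filter,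
          ← Finset.sum_add_sum_compl S]
        omega

theorem rc_orient (k N : ℕ) (u v : Fin (N+1) → Fin k) (s0 : Fin (N+1)) :
    ∃ d a : Fin (N+1) → Fin k,
      (∀ s, (d s = u s ∧ a s = v s) ∨ (d s = v s ∧ a s = u s)) ∧
      ((∀ s, u s ≠ v s) → ∀ s, s ≠ s0 → d (s + 1) ≠ a s) := by
  let g : ℕ → Fin k × Fin k := fun n => Nat.rec (u (s0 + 1), v (s0 + 1))
    (fun n q => if u (s0 + 1 + Fin.ofNat (N+1) (n+1)) ≠ q.2
      then (u (s0 + 1 + Fin.ofNat (N+1) (n+1)), v (s0 + 1 + Fin.ofNat (N+1) (n+1)))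
      else (v (s0 + 1 + Fin.ofNat (N+1) (n+1)), u (s0 + 1 + Fin.ofNat (N+1) (n+1)))) n
  have gs : ∀ n, g (n+1) = if u (s0 + 1 + Fin.ofNat (N+1) (n+1)) ≠ (g n).2
      then (u (s0 + 1 + Fin.ofNat (N+1) (n+1)), v (s0 + 1 + Fin.ofNat (N+1) (n+1)))
      else (v (s0 + 1 + Fin.ofNat (N+1) (n+1)), u (s0 + 1 + Fin.ofNat (N+1) (n+1))) :=
    fun n => rfl
  have g1 : ∀ n : ℕ, let s := s0 + 1 + Fin.ofNat (N+1) n;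
      ((g n).1 = u s ∧ (g n).2 = v s) ∨ ((g n).1 = v s ∧ (g n).2 = u s) := by
    intro n
    cases n with
    | zero => left; simp [g]
    | succ n =>
      intro s
      rw [gs]
      split_ifs
      · left; exact ⟨rfl, rfl⟩
      · right; exact ⟨rfl, rfl⟩
  have g2 : (∀ s, u s ≠ v s) → ∀ n, (g (n+1)).1 ≠ (g n).2 := by
    intro huv n
    rw [gs]
    split_ifs with h
    · exact h
    · push Not at h
      rw [← h]; exact (huv _).symm
  refine ⟨fun s => (g (s - (s0 + 1)).val).1, fun s => (g (s - (s0 + 1)).val).2, ?_, ?_⟩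
  · intro s
    have := g1 (s - (s0 + 1)).val
    simpa using this
  · intro huv s hs
    have hr : s - (s0 + 1) ≠ Fin.last N := by
      intro h
      apply hs
      have h2 : s - (s0 + 1) + 1 = 0 := by rw [h]; simp
      have h3 : s - s0 = 0 := by rw [← h2]; abel
      exact sub_eq_zero.1 h3
    have : s + 1 - (s0 + 1) = s - (s0 + 1) + 1 := by abel
    simp only [this]
    rw [Fin.val_add_one_of_lt (Fin.lt_last_iff_ne_last.2 hr)]
    exact g2 huv _

theorem rainbow_cycle_lift (k M : ℕ) (hk : 2 ≤ k) (hM : 2 ≤ M) (hMe : Even M)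
    (h : ∃ (N : ℕ) (π : Fin (N + 1) → Equiv.Perm (Fin k)),
      Function.Injective π ∧
      (∀ s : Fin (N + 1), ∃ i j : Fin k, i ≠ j ∧ π (s + 1) = Equiv.swap i j * π s) ∧
      (∀ i j : Fin k, i ≠ j →
        (Finset.univ.filter (fun s : Fin (N + 1) =>
          π (s + 1) = Equiv.swap i j * π s)).card = M)) :
    ∃ (N : ℕ) (π : Fin (N + 1) → Equiv.Perm (Fin (k + 1))),
      Function.Injective π ∧
      (∀ s : Fin (N + 1), ∃ i j : Fin (k + 1), i ≠ j ∧ π (s + 1) = Equiv.swap i j * π s) ∧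
      (∀ i j : Fin (k + 1), i ≠ j →
        (Finset.univ.filter (fun s : Fin (N + 1) =>
          π (s + 1) = Equiv.swap i j * π s)).card = M) := by
  obtain ⟨N, π, hinj, hstep, hcount⟩ := h
  choose u v huv hstep using hstep
  have hcount' : ∀ i j : Fin k, i ≠ j →
      (univ.filter (fun s : Fin (N + 1) => swap (u s) (v s) = swap i j)).card = M := by
    intro i j hij
    rw [← hcount i j hij]
    congr 1
    ext s
    simp [hstep]
  rcases hk.eq_or_lt with rfl | hk3
  · have hsw : ∀ s, swap (u s) (v s) = swap (0 : Fin 2) 1 := by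
      intro s
      have := huv s
      revert this
      generalize u s = x; generalize v s = y
      revert x y; decide
    have hc := hcount' 0 1 (by decide)
    simp only [hsw, Finset.filter_true, Finset.card_univ] at hc
    refine rc_core 2 N M π hinj (fun _ => 0) (fun _ => 1) (by simp)
      (fun s => by rw [hstep, hsw]) (fun i j hij => by rw [← hcount' i j hij]; simp only [hsw])
      univ ?_ (by simp)
    intro i
    fin_cases i <;> simpa using hc
  · obtain ⟨m, rfl⟩ : ∃ m, k = m + 3 := ⟨k - 3, by omega⟩
    have hi1 : ∀ i : Fin (m+3), i ≠ i + 1 := by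
      intro i h
      simp at h
    have hi2 : ∀ i : Fin (m+3), i ≠ i + 1 + 1 := by
      intro i h
      rw [add_assoc] at h
      have h2 : (1 + 1 : Fin (m+3)) = 0 := by simpa using h.symm
      have := congrArg Fin.val h2
      simp [Fin.val_add, Nat.mod_eq_of_lt] at this
    let T : Fin (m+3) → Finset (Fin (N+1)) := fun i =>
      univ.filter (fun s => swap (u s) (v s) = swap i (i+1))
    obtain ⟨c, hc⟩ := hMe
    have hsub : ∀ i, ∃ R ⊆ T i, R.card = c := by
      intro i
      apply Finset.exists_subset_card_eq
      rw [hcount' _ _ (hi1 i)]; omega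
    choose R hRT hRc using hsub
    have hTR : ∀ i j s, s ∈ T i → s ∈ R j → i = j := by
      intro i j s hi hj
      have hj := hRT j hj
      simp only [T, mem_filter, mem_univ, true_and] at hi hj
      rcases rc_swap_inj (hi1 i) (hi.symm.trans hj) with h | h
      · exact h.1
      · exact absurd (h.1.trans (congrArg (· + 1) h.2.symm)) (hi2 i)
    let S := univ.biUnion R
    obtain ⟨s0, hs0T, hs0R⟩ : ∃ s ∈ T 0, s ∉ R 0 := by
      apply Finset.exists_mem_notMem_of_card_lt_card
      rw [hRc, hcount' _ _ (hi1 0)]; omega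
    have hs0 : s0 ∉ S := by
      intro h
      simp only [S, mem_biUnion, mem_univ, true_and] at h
      obtain ⟨j, hj⟩ := h
      have := hTR 0 j s0 hs0T hj
      subst this
      exact hs0R hj
    obtain ⟨d, a, hor, hne⟩ := rc_orient (m+3) N u v s0
    have hsw : ∀ s, swap (d s) (a s) = swap (u s) (v s) := by
      intro s
      rcases hor s with ⟨h1, h2⟩ | ⟨h1, h2⟩ <;> rw [h1, h2]
      exact swap_comm _ _
    have hda : ∀ s, d s ≠ a s := by
      intro s
      rcases hor s with ⟨h1, h2⟩ | ⟨h1, h2⟩ <;> rw [h1, h2]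
      · exact huv s
      · exact (huv s).symm
    refine rc_core (m+3) N M π hinj d a hda (fun s => by rw [hsw, hstep])
      (fun i j hij => by simp only [hsw]; exact hcount' i j hij) S ?_
      (fun s hs _ => hne huv s (by rintro rfl; exact hs0 hs))
    intro i
    rw [← Finset.card_union_of_disjoint]
    · have hdisj : Disjoint (R i) (R (i - 1)) := by
        rw [Finset.disjoint_left]
        intro s h1 h2
        have := hTR _ _ s (hRT _ h1) h2
        apply hi1 (i - 1)
        rw [sub_add_cancel]; exact this.symm
      rw [hc, ← hRc i, ← congrArg₂ (· + ·) rfl ((hRc (i-1)).trans (hRc i).symm),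
        ← Finset.card_union_of_disjoint hdisj]
      congr 1
      ext s
      simp only [mem_union, mem_filter, S, mem_biUnion, mem_univ, true_and]
      have hR : ∀ j, s ∈ R j → (d s = j ∧ a s = j + 1) ∨ (d s = j + 1 ∧ a s = j) := by
        intro j hj
        have := hRT j hj
        simp only [T, mem_filter, mem_univ, true_and, ← hsw] at this
        exact rc_swap_inj (hda s) this
      constructor
      · intro h
        obtain ⟨⟨j, hj⟩, h'⟩ : (∃ j, s ∈ R j) ∧ (d s = i ∨ a s = i) := by tauto
        have : j = i ∨ j + 1 = i := by
          rcases hR j hj with ⟨h1, h2⟩ | ⟨h1, h2⟩ <;> rw [h1, h2] at h' <;> tauto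
        rcases this with rfl | rfl
        · exact Or.inl hj
        · right; simpa using hj
      · rintro (h | h)
        · rcases hR _ h with h1 | h1
          · exact Or.inl ⟨⟨i, h⟩, h1.1⟩
          · exact Or.inr ⟨⟨i, h⟩, h1.2⟩
        · rcases hR _ h with h1 | h1 <;> rw [sub_add_cancel] at h1
          · exact Or.inr ⟨⟨_, h⟩, h1.2⟩
          · exact Or.inl ⟨⟨_, h⟩, h1.1⟩
    · rw [Finset.disjoint_left]
      intro s h1 h2
      simp only [mem_filter] at h1 h2
      exact hda s (h1.2.trans h2.2.symm)
end

section
/- Let n ≥ 2 be even. Then there exists a Gray code for S_{n+1} under adjacent position-swaps from the word 123⋯(n+1) to the word 213⋯(n+1): a list of all (n+1)! permutations of [n+1], each appearing exactly once, in which any two consecutive permutations differ by an adjacent position-swap. -/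
/-- Insert the largest letter at position `p` into the word `σ`. -/
def insLast {m : ℕ} (p : Fin (m + 1)) (σ : Equiv.Perm (Fin m)) : Equiv.Perm (Fin (m + 1)) :=
  ((finSuccEquiv' p).trans (Equiv.optionCongr σ)).trans (finSuccEquiv' (Fin.last m)).symm

theorem insLast_self {m : ℕ} (p : Fin (m + 1)) (σ : Equiv.Perm (Fin m)) :
    insLast p σ p = Fin.last m := by
  simp [insLast]

theorem insLast_succAbove {m : ℕ} (p : Fin (m + 1)) (σ : Equiv.Perm (Fin m)) (j : Fin m) :
    insLast p σ (p.succAbove j) = (σ j).castSucc := by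
  simp [insLast]

theorem perm_ext_at {m : ℕ} (p : Fin (m + 1)) {f g : Equiv.Perm (Fin (m + 1))}
    (h0 : f p = g p) (h1 : ∀ j, f (p.succAbove j) = g (p.succAbove j)) : f = g := by
  ext1 x
  rcases Fin.eq_self_or_eq_succAbove p x with rfl | ⟨j, rfl⟩
  · exact h0
  · exact h1 j

theorem insLast_inj {m : ℕ} {p q : Fin (m + 1)} {σ τ : Equiv.Perm (Fin m)}
    (h : insLast p σ = insLast q τ) : p = q ∧ σ = τ := by
  have hp : p = q := by
    apply (insLast q τ).injective
    rw [insLast_self, ← h, insLast_self]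
  subst hp
  refine ⟨rfl, ?_⟩
  ext1 j
  have := congrArg (fun f => f (p.succAbove j)) h
  simp only [insLast_succAbove] at this
  exact Fin.castSucc_injective _ this

theorem insLast_mul_swap {m : ℕ} (p : Fin (m + 1)) (σ : Equiv.Perm (Fin m)) (i j : Fin m) :
    insLast p (σ * Equiv.swap i j)
      = insLast p σ * Equiv.swap (p.succAbove i) (p.succAbove j) := by
  apply perm_ext_at p
  · rw [insLast_self, Equiv.Perm.mul_apply, Equiv.swap_apply_of_ne_of_ne, insLast_self]
    · exact (Fin.succAbove_ne p i).symm
    · exact (Fin.succAbove_ne p j).symm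
  · intro k
    rw [insLast_succAbove, Equiv.Perm.mul_apply, Equiv.Perm.mul_apply,
      (Fin.succAbove_right_injective (p := p)).swap_apply, insLast_succAbove]

theorem insLast_last_one {m : ℕ} : insLast (Fin.last m) 1 = 1 := by
  apply perm_ext_at (Fin.last m)
  · simp [insLast_self]
  · intro j
    rw [insLast_succAbove]
    simp

theorem insLast_succ {m : ℕ} (p : Fin m) (σ : Equiv.Perm (Fin m)) :
    insLast p.succ σ = insLast p.castSucc σ * Equiv.swap p.castSucc p.succ := by
  apply perm_ext_at p.succ
  · simp [insLast_self]
  · intro j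
    rw [insLast_succAbove, Equiv.Perm.mul_apply]
    have : Equiv.swap p.castSucc p.succ (p.succ.succAbove j) = p.castSucc.succAbove j := by
      rcases lt_trichotomy j p with h | h | h
      · have h' : (j : ℕ) < p := h
        rw [Fin.succAbove_of_castSucc_lt _ _ (show (j : ℕ) < p + 1 by omega),
          Fin.succAbove_of_castSucc_lt _ _ (show (j : ℕ) < p by omega),
          Equiv.swap_apply_of_ne_of_ne]
        · exact fun hc => absurd (Fin.castSucc_injective _ hc) (ne_of_lt h)
        · exact fun hc => absurd (show (j : ℕ) = p + 1 from congrArg Fin.val hc) (by omega)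
      · subst h
        simp
      · have h' : (p : ℕ) < j := h
        rw [Fin.succAbove_of_le_castSucc _ _ (show (p : ℕ) + 1 ≤ j by omega),
          Fin.succAbove_of_le_castSucc _ _ (show (p : ℕ) ≤ j by omega),
          Equiv.swap_apply_of_ne_of_ne]
        · exact fun hc => absurd (show (j : ℕ) + 1 = p from congrArg Fin.val hc) (by omega)
        · exact fun hc => absurd (show (j : ℕ) + 1 = p + 1 from congrArg Fin.val hc) (by omega)
    rw [this, insLast_succAbove]

/-- `τ` arises from `σ` by an adjacent position-swap. -/
def AdjSwap {n : ℕ} (σ τ : Equiv.Perm (Fin n)) : Prop :=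
  ∃ i : ℕ, ∃ h : i + 1 < n, τ = σ * Equiv.swap ⟨i, by omega⟩ ⟨i + 1, h⟩

theorem AdjSwap.symm {n : ℕ} {σ τ : Equiv.Perm (Fin n)} (h : AdjSwap σ τ) : AdjSwap τ σ := by
  obtain ⟨i, hi, rfl⟩ := h
  exact ⟨i, hi, by simp [mul_assoc]⟩

theorem adj_step {m : ℕ} (σ : Equiv.Perm (Fin m)) (p q : Fin (m + 1))
    (h : (q : ℕ) = p + 1) : AdjSwap (insLast p σ) (insLast q σ) := by
  have hp : (p : ℕ) < m := by omega
  refine ⟨p, by omega, ?_⟩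
  have h1 : q = (⟨p, hp⟩ : Fin m).succ := by ext; simpa using h
  have h2 : p = (⟨p, hp⟩ : Fin m).castSucc := by ext; simp
  have := insLast_succ ⟨p, hp⟩ σ
  rw [← h1, ← h2] at this
  rw [this]
  congr 2

theorem adj_last {m : ℕ} {σ τ : Equiv.Perm (Fin m)} (h : AdjSwap σ τ) :
    AdjSwap (insLast (Fin.last m) σ) (insLast (Fin.last m) τ) := by
  obtain ⟨i, hi, rfl⟩ := h
  refine ⟨i, by omega, ?_⟩
  rw [insLast_mul_swap, Fin.succAbove_last_apply, Fin.succAbove_last_apply]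
  rfl

theorem adj_zero {m : ℕ} {σ τ : Equiv.Perm (Fin m)} (h : AdjSwap σ τ) :
    AdjSwap (insLast 0 σ) (insLast 0 τ) := by
  obtain ⟨i, hi, rfl⟩ := h
  refine ⟨i + 1, by omega, ?_⟩
  rw [insLast_mul_swap, Fin.succAbove_zero_apply, Fin.succAbove_zero_apply]
  rfl

/-- Position of the largest letter at step `r` of block `q`. -/
def sweepPos (m q r : ℕ) (hr : r < m + 1) : Fin (m + 1) :=
  if Even q then ⟨m - r, by omega⟩ else ⟨r, hr⟩

theorem sweepPos_inj {m q r s : ℕ} {hr : r < m + 1} {hs : s < m + 1}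
    (h : sweepPos m q r hr = sweepPos m q s hs) : r = s := by
  unfold sweepPos at h
  split_ifs at h <;> simp [Fin.ext_iff] at h <;> omega

/-- The Steinhaus-Johnson-Trotter step. -/
def sjt {m : ℕ} (π : ℕ → Equiv.Perm (Fin m)) (k : ℕ) : Equiv.Perm (Fin (m + 1)) :=
  insLast (sweepPos m (k / (m + 1)) (k % (m + 1)) (Nat.mod_lt _ (Nat.succ_pos m)))
    (π (k / (m + 1)))

theorem sjt_eq {m : ℕ} (π : ℕ → Equiv.Perm (Fin m)) (q r : ℕ) (hr : r < m + 1) :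
    sjt π (q * (m + 1) + r) = insLast (sweepPos m q r hr) (π q) := by
  have h1 : (q * (m + 1) + r) / (m + 1) = q := by
    rw [mul_comm, Nat.mul_add_div (Nat.succ_pos m), Nat.div_eq_of_lt hr, add_zero]
  have h2 : (q * (m + 1) + r) % (m + 1) = r := by
    rw [mul_comm, Nat.mul_add_mod, Nat.mod_eq_of_lt hr]
  unfold sjt
  simp only [h1, h2]

theorem sjt_exists (m : ℕ) : ∃ π : ℕ → Equiv.Perm (Fin (m + 2)),
    (∀ k l, k < (m + 2).factorial → l < (m + 2).factorial → π k = π l → k = l) ∧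
    π 0 = 1 ∧ π ((m + 2).factorial - 1) = Equiv.swap 0 1 ∧
    ∀ k, k + 1 < (m + 2).factorial → AdjSwap (π k) (π (k + 1)) := by
  induction m with
  | zero =>
    refine ⟨fun k => if k = 0 then 1 else Equiv.swap 0 1, ?_, by simp, by simp, ?_⟩
    · have hne : (1 : Equiv.Perm (Fin 2)) ≠ Equiv.swap 0 1 := by decide
      intro k l hk hl h
      simp only [zero_add, Nat.factorial_two] at hk hl
      have := hne.symm
      interval_cases k <;> interval_cases l <;> simp_all
    · intro k hk
      simp only [zero_add, Nat.factorial_two] at hk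
      have : k = 0 := by omega
      subst this
      exact ⟨0, by omega, by simp⟩
  | succ m ih =>
    obtain ⟨π, hinj, h0, hlast, hadj⟩ := ih
    have hF : (m + 1 + 2).factorial = (m + 2).factorial * (m + 3) := by
      rw [mul_comm]; exact Nat.factorial_succ (m + 2)
    have hpos : 0 < (m + 2).factorial := Nat.factorial_pos _
    have hev : Even (m + 2).factorial :=
      even_iff_two_dvd.2 (Nat.dvd_factorial (by norm_num) (by omega))
    rw [hF]
    refine ⟨sjt π, ?_, ?_, ?_, ?_⟩
    · intro k l hk hl h
      have hk' : k / (m + 2 + 1) < (m + 2).factorial :=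
        (Nat.div_lt_iff_lt_mul (Nat.succ_pos _)).2 hk
      have hl' : l / (m + 2 + 1) < (m + 2).factorial :=
        (Nat.div_lt_iff_lt_mul (Nat.succ_pos _)).2 hl
      obtain ⟨h1, h2⟩ := insLast_inj h
      have h3 := hinj _ _ hk' hl' h2
      simp only [h3] at h1
      have h4 := sweepPos_inj h1
      rw [← Nat.div_add_mod k (m + 2 + 1), ← Nat.div_add_mod l (m + 2 + 1), h3, h4]
    · have := sjt_eq π 0 0 (Nat.succ_pos _)
      simp only [zero_mul, zero_add] at this
      have hp : sweepPos (m + 2) 0 0 (Nat.succ_pos _) = Fin.last (m + 2) := by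
        simp [sweepPos, Fin.last]
      rw [this, h0, hp]
      exact insLast_last_one
    · have e : (m + 2).factorial * (m + 3) - 1
          = ((m + 2).factorial - 1) * (m + 2 + 1) + (m + 2) := by
        obtain ⟨F, hFF⟩ : ∃ F, (m + 2).factorial = F + 1 := ⟨_, (Nat.succ_pred hpos.ne').symm⟩
        rw [hFF, Nat.add_mul]
        simp only [Nat.add_sub_cancel]
        have : F * (m + 3) = F * (m + 2 + 1) := rfl
        omega
      rw [e, sjt_eq π _ _ (by omega), hlast]
      have hodd : ¬ Even ((m + 2).factorial - 1) := by
        rw [Nat.even_iff] at hev ⊢; omega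
      have hp : sweepPos (m + 2) ((m + 2).factorial - 1) (m + 2) (by omega)
          = Fin.last (m + 2) := by
        simp [sweepPos, hodd, Fin.last]
      rw [hp]
      have := insLast_mul_swap (Fin.last (m + 2)) 1 0 1
      rw [one_mul, insLast_last_one, one_mul] at this
      rw [this, Fin.succAbove_last_apply, Fin.succAbove_last_apply]
      rfl
    · intro k hk
      obtain ⟨q, r, hr, rfl⟩ : ∃ q r, r < m + 2 + 1 ∧ k = q * (m + 2 + 1) + r :=
        ⟨k / (m + 2 + 1), k % (m + 2 + 1), Nat.mod_lt _ (Nat.succ_pos _),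
          by rw [mul_comm, Nat.div_add_mod]⟩
      rw [sjt_eq π q r hr]
      by_cases hr' : r + 1 < m + 2 + 1
      · rw [add_assoc (q * (m + 2 + 1)) r 1, sjt_eq π q (r + 1) hr']
        by_cases hq : Even q
        · apply AdjSwap.symm
          apply adj_step
          simp only [sweepPos, hq, if_true]
          omega
        · apply adj_step
          simp only [sweepPos, hq, if_false]
      · have hrr : r = m + 2 := by omega
        subst hrr
        have e : q * (m + 2 + 1) + (m + 2) + 1 = (q + 1) * (m + 2 + 1) + 0 := by ring
        rw [e] at hk ⊢
        rw [sjt_eq π (q + 1) 0 (by omega)]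
        have hq1 : q + 1 < (m + 2).factorial :=
          lt_of_mul_lt_mul_right (a := m + 3) hk (Nat.zero_le _)
        have := hadj q hq1
        by_cases hq : Even q
        · have e1 : sweepPos (m + 2) q (m + 2) hr = 0 := by simp [sweepPos, hq]
          have e2 : sweepPos (m + 2) (q + 1) 0 (by omega) = 0 := by
            simp [sweepPos, Nat.even_add_one, hq]
          rw [e1, e2]
          exact adj_zero this
        · have e1 : sweepPos (m + 2) q (m + 2) hr = Fin.last _ := by simp [sweepPos, hq, Fin.last]
          have e2 : sweepPos (m + 2) (q + 1) 0 (by omega) = Fin.last _ := by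
            simp [sweepPos, Nat.even_add_one, hq, Fin.last]
          rw [e1, e2]
          exact adj_last this

/-- Let `n ≥ 2` be even. Then there is a Gray code for `S_{n+1}` under
adjacent position-swaps from the identity word `123⋯(n+1)` to the word `213⋯(n+1)`:
a listing `π : Fin (N+1) → Perm (Fin (n+1))` of all `(n+1)!` permutations, each exactly
once, in which any two consecutive permutations differ by an adjacent position-swap
(`π (s+1) = π s * swap i (i+1)`). -/
theorem gray_code_adjacent_succ (n : ℕ) (hn : 2 ≤ n) (he : Even n) :
    ∃ (N : ℕ) (π : Fin (N + 1) → Equiv.Perm (Fin (n + 1))),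
      N + 1 = Nat.factorial (n + 1) ∧
      Function.Bijective π ∧
      π 0 = 1 ∧
      π (Fin.last N) = Equiv.swap 0 1 ∧
      (∀ s : Fin (N + 1), (s : ℕ) < N →
        ∃ i : ℕ, ∃ h : i + 1 < n + 1,
          π (s + 1) = π s * Equiv.swap ⟨i, by omega⟩ ⟨i + 1, h⟩) := by
  obtain ⟨m, rfl⟩ : ∃ m, n = m + 1 := ⟨n - 1, by omega⟩
  obtain ⟨π, hinj, h0, hlast, hadj⟩ := sjt_exists m
  have hpos : 0 < (m + 2).factorial := Nat.factorial_pos _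
  have hN : (m + 2).factorial - 1 + 1 = (m + 2).factorial := Nat.succ_pred hpos.ne'
  refine ⟨(m + 2).factorial - 1, fun s => π s, hN, ?_, ?_, ?_, ?_⟩
  · rw [Fintype.bijective_iff_injective_and_card]
    constructor
    · intro a b hab
      exact Fin.ext (hinj _ _ (by omega) (by omega) hab)
    · rw [Fintype.card_perm, Fintype.card_fin, Fintype.card_fin]
      exact hN
  · simpa using h0
  · simpa using hlast
  · intro s hs
    have hv : ((s + 1 : Fin ((m + 2).factorial - 1 + 1)) : ℕ) = s + 1 :=
      Fin.val_add_one_of_lt (Fin.lt_def.2 (by simpa using hs))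
    simp only [hv]
    exact hadj s (by omega)
end
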